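/- arXiv:1711.02170 — 3 statements merged into one kernel-verified Lean document; each statement's English description precedes it below -/
import Mathlib

section
/- Let K = ℚ₂(√−1), the extension of ℚ₂ generated by a square root of −1, with valuation ring O_K, and let α ∈ O_K be a unit. Then the extension K(⁴√α)/K, obtained by adjoining a root of X⁴ − α, is unramified if and only if α ≡ 1 (mod 8) or α ≡ 1 + 4√−1 (mod 8). -/
/-!
Let `𝔪 = (1 + i)` be the maximal ideal of `O`, and `S` the integral closure of `O` in `L`. As `S`
is a Dedekind domain, `L/K` is unramified if and only if the ideal `𝔪S` is radical.

If `α ≡ 1` or `1 + 4i (mod 8)`, then `α = 1 + 4x` with `x ≡ 0` or `i (mod 2)`, and `L` is reached by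
adjoining two square roots, each of a unit that is a square modulo `4`. If `γ ^ 2` is a unit and
`γ ^ 2 ≡ s ^ 2 (mod 4)`, then `(γ - s) / 2` generates an unramified algebra. A finite unramified
algebra containing `β` is all of `S`.

Conversely, suppose that `𝔪S` is radical. Since `β ^ 4 = α ≡ 1` modulo `𝔪`, it follows that
`β ≡ 1` modulo `𝔪S`, and then `α = 1 - 4c` with `c ≡ q ^ 2 - (1 + i)q (mod 2)` for some `q ∈ S`.
The residue field of `K` has two elements, so `c ≡ q ^ 2` is congruent to `0` or `1` modulo `𝔪S`,
and by radicality so is `q`. Hence `c ≡ 0` or `-i (mod 2)`.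
-/

open Polynomial hiding map_dvd

theorem four_ne_zero_of_two_ne_zero {R : Type*} [Semiring R] [NoZeroDivisors R]
    (h2 : (2 : R) ≠ 0) : (4 : R) ≠ 0 := by
  simpa only [show (4 : R) = 2 * 2 by norm_num] using mul_ne_zero h2 h2

section Ramification

variable {R S : Type*} [CommRing R] [CommRing S] [IsDedekindDomain S] [Algebra R S]

theorem ideal_isRadical_iff_squarefree {I : Ideal S} (hI : I ≠ ⊥) :
    I.IsRadical ↔ Squarefree I := by
  rw [← isRadical_iff_squarefree_of_ne_zero hI]
  constructor
  · intro h n J hJ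
    rw [Ideal.dvd_iff_le] at hJ ⊢
    exact fun x hx ↦ h ⟨n, hJ (Ideal.pow_mem_pow hx n)⟩
  · rintro h x ⟨n, hx⟩
    rw [← Ideal.span_singleton_le_iff_mem, ← Ideal.dvd_iff_le] at hx ⊢
    exact h n _ (by rwa [Ideal.span_singleton_pow])

theorem forall_ramificationIdx'_eq_one_iff_isRadical_map {p : Ideal R} [p.IsMaximal]
    (hp : p.map (algebraMap R S) ≠ ⊥) :
    (∀ Q : Ideal S, Q.IsMaximal → Q.comap (algebraMap R S) = p →
      Ideal.ramificationIdx' p Q = 1) ↔ (p.map (algebraMap R S)).IsRadical := by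
  rw [ideal_isRadical_iff_squarefree hp, squarefree_iff_irreducible_sq_not_dvd_of_ne_zero hp]
  constructor
  · intro h Q hQ hdvd
    have hle : p.map (algebraMap R S) ≤ Q := (Ideal.dvd_iff_le.mp hdvd).trans Ideal.mul_le_left
    have hQmax : Q.IsMaximal := (Ideal.isPrime_of_prime hQ.prime).isMaximal hQ.ne_zero
    have hcomap : Q.comap (algebraMap R S) = p :=
      (Ideal.IsMaximal.eq_of_le ‹_› (Ideal.comap_ne_top _ hQmax.ne_top)
        (Ideal.map_le_iff_le_comap.mp hle)).symm
    refine (Ideal.ramificationIdx'_ne_one_iff hle).mpr ?_ (h Q hQmax hcomap)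
    rw [pow_two]
    exact Ideal.dvd_iff_le.mp hdvd
  · intro h Q hQ hcomap
    have hle : p.map (algebraMap R S) ≤ Q := Ideal.map_le_iff_le_comap.mpr hcomap.ge
    have hQbot : Q ≠ ⊥ := fun hbot ↦ hp (le_bot_iff.mp (hbot ▸ hle))
    by_contra hne
    refine h Q (Ideal.prime_of_isPrime hQbot hQ.isPrime).irreducible ?_
    rw [Ideal.dvd_iff_le, ← pow_two]
    exact (Ideal.ramificationIdx'_ne_one_iff hle).mp hne

end Ramification

section Unramified

theorem formallyUnramified_of_adjoin_eq_top {R S : Type*} [CommRing R] [CommRing S] [Algebra R S]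
    {w : S} (hw : Algebra.adjoin R {w} = ⊤) {f : R[X]} (hf : aeval w f = 0)
    (hf' : IsUnit (aeval w (derivative f))) : Algebra.FormallyUnramified R S := by
  have hDw : KaehlerDifferential.D R S w = 0 := by
    rw [← hf'.smul_eq_zero, ← Derivation.map_aeval, hf, map_zero]
  have hD : KaehlerDifferential.D R S = 0 :=
    Derivation.ext_of_adjoin_eq_top {w} hw (by simpa [Set.eqOn_singleton] using hDw)
  refine ⟨subsingleton_of_forall_eq 0 fun x ↦ ?_⟩
  have hx : x ∈ Submodule.span S (Set.range (KaehlerDifferential.D R S)) := by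
    rw [KaehlerDifferential.span_range_derivation]; trivial
  simpa [hD] using hx

theorem exists_unramified_subalgebra_of_sq {R L : Type*} [CommRing R] [Field L] [Algebra R L]
    (h2 : (2 : L) ≠ 0) {a s : R} (ha : IsUnit a) (hs : 4 ∣ a - s ^ 2) {β : L}
    (hβ : β ^ 2 = algebraMap R L a) :
    ∃ (A : Subalgebra R L) (w : A), β = 2 * w + algebraMap R L s ∧
      Module.Finite R A ∧ Algebra.FormallyUnramified R A := by
  -- `w = (β - s) / 2` is a root of `f = X ^ 2 + s X - k`, and `f'(w) = β` is a unit.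
  obtain ⟨k, hk⟩ := hs
  obtain ⟨w, hw⟩ : ∃ w : L, β = 2 * w + algebraMap R L s :=
    ⟨(β - algebraMap R L s) / 2, by field_simp; ring⟩
  let f : R[X] := X ^ 2 + C s * X - C k
  have hmonic : f.Monic := by simp only [f]; monicity!
  have hf : aeval w f = 0 := by
    have hk' := congrArg (algebraMap R L) hk
    simp only [map_sub, map_pow, map_mul, map_ofNat, ← hβ, hw] at hk'
    simp only [f, map_sub, map_add, map_mul, map_pow, aeval_X, aeval_C]
    apply mul_left_cancel₀ (four_ne_zero_of_two_ne_zero h2)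
    linear_combination hk'
  have hf' : aeval w (derivative f) = β := by
    simp only [f, hw, derivative_X_sq, derivative_C_mul, derivative_X, derivative_C, map_add,
      map_mul, map_sub, aeval_C, aeval_X, map_ofNat, mul_one, sub_zero]
  let w' : Algebra.adjoin R {w} := ⟨w, Algebra.self_mem_adjoin_singleton R w⟩
  have haeval (p : R[X]) : (aeval w' p : L) = aeval w p :=
    (aeval_algHom_apply (Subalgebra.val _) w' p).symm
  have hw' : Algebra.adjoin R {w'} = ⊤ := by
    convert! Algebra.adjoin_adjoin_coe_preimage (R := R) (s := {w})
    ext x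
    exact Subtype.ext_iff
  have hsq : (aeval w' (derivative f)) ^ 2 = algebraMap R _ a :=
    Subtype.ext (by rw [Subalgebra.coe_pow, haeval, hf', hβ]; rfl)
  refine ⟨Algebra.adjoin R {w}, w', hw,
    Algebra.finite_adjoin_simple_of_isIntegral ⟨f, hmonic, hf⟩, ?_⟩
  refine formallyUnramified_of_adjoin_eq_top hw' (Subtype.ext ((haeval f).trans hf)) ?_
  exact (isUnit_pow_iff two_ne_zero).mp (hsq ▸ ha.map _)

theorem isFractionRing_of_mem_of_adjoin_eq_top {R K L : Type*} [CommRing R] [IsDomain R] [Field K]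
    [Field L] [Algebra R K] [IsFractionRing R K] [Algebra K L] [Algebra R L] [IsScalarTower R K L]
    {β : L} (hgen : Algebra.adjoin K {β} = ⊤) {A : Subalgebra R L} (hβ : β ∈ A) :
    IsFractionRing A L := by
  refine IsFractionRing.of_field A L fun z ↦ ?_
  obtain ⟨p, rfl⟩ : ∃ p : K[X], aeval β p = z := by
    rw [← AlgHom.mem_range, ← Algebra.adjoin_singleton_eq_range_aeval, hgen]; trivial
  obtain ⟨b, hb, hp⟩ :=
    IsLocalization.integerNormalization_spec (nonZeroDivisors R) p
  set q := IsLocalization.integerNormalization (nonZeroDivisors R) p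
  have hb0 : algebraMap R L b ≠ 0 := by
    rw [IsScalarTower.algebraMap_apply R K L]
    simpa using nonZeroDivisors.ne_zero hb
  have hq : aeval β q = algebraMap R L b * aeval β p := by
    rw [← aeval_map_algebraMap K, hp, ← algebraMap_smul K b p, map_smul, Algebra.smul_def,
      ← IsScalarTower.algebraMap_apply]
  refine ⟨⟨aeval β q, ?_⟩, algebraMap R A b, ?_⟩
  · exact Algebra.adjoin_le (by simpa using hβ) (aeval_mem_adjoin_singleton R β)
  · exact eq_div_of_mul_eq hb0 (by rw [mul_comm]; exact hq.symm)

theorem eq_integralClosure_of_formallyUnramified {R K L : Type*} [CommRing R] [IsDedekindDomain R]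
    [Field K] [Field L] [Algebra R K] [IsFractionRing R K] [Algebra K L] [Algebra R L]
    [IsScalarTower R K L] {β : L} (hgen : Algebra.adjoin K {β} = ⊤) {A : Subalgebra R L}
    (hβ : β ∈ A) [Module.Finite R A] [Algebra.FormallyUnramified R A] :
    A = integralClosure R L := by
  have : IsFractionRing A L := isFractionRing_of_mem_of_adjoin_eq_top hgen hβ
  have : IsDedekindDomain A := isDedekindDomain.of_formallyUnramified R A
  refine le_antisymm (fun x hx ↦ ?_) fun x hx ↦ ?_
  · exact (Algebra.IsIntegral.isIntegral (R := R) (⟨x, hx⟩ : A)).map A.val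
  · obtain ⟨y, rfl⟩ := IsIntegrallyClosed.isIntegral_iff.mp (hx.tower_top (A := A))
    exact y.2

theorem exists_four_dvd_one_add_two_mul_sub_sq {R : Type*} [CommRing R] {J y : R} (hJ : J ^ 2 = -1)
    (h : 2 ∣ y ^ 2 + y ∨ 2 ∣ y ^ 2 + y - J) : ∃ s, 4 ∣ 1 + 2 * y - s ^ 2 := by
  -- If `s = 1 + (1 + J) t`, then `s ^ 2 = 1 + 2 t + 2 J (t ^ 2 + t)`.
  rcases h with ⟨d, hd⟩ | ⟨d, hd⟩
  · exact ⟨1 + (1 + J) * y, -J * d, by linear_combination -2 * J * hd - y ^ 2 * hJ⟩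
  · exact ⟨1 + (1 + J) * (y + 1), -J * (d + 1 + y),
      by linear_combination -2 * J * hd - (y ^ 2 + 2 * y + 3) * hJ⟩

theorem finite_and_formallyUnramified_restrictScalars {R L : Type*} [CommRing R] [CommRing L]
    [Algebra R L] (A : Subalgebra R L) [Module.Finite R A] [Algebra.FormallyUnramified R A]
    (B : Subalgebra A L) [Module.Finite A B] [Algebra.FormallyUnramified A B] :
    Module.Finite R (B.restrictScalars R) ∧ Algebra.FormallyUnramified R (B.restrictScalars R) := by
  let : Algebra A (B.restrictScalars R) := inferInstanceAs (Algebra A B)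
  have : IsScalarTower R A (B.restrictScalars R) := .of_algebraMap_eq fun _ ↦ rfl
  have : Module.Finite A (B.restrictScalars R) := inferInstanceAs (Module.Finite A B)
  have : Algebra.FormallyUnramified A (B.restrictScalars R) :=
    inferInstanceAs (Algebra.FormallyUnramified A B)
  exact ⟨Module.Finite.trans A _, Algebra.FormallyUnramified.comp R A _⟩

theorem exists_unramified_subalgebra_of_pow_four {R L : Type*} [CommRing R] [Field L] [Algebra R L]
    (h2 : (2 : L) ≠ 0) {J α : R} (hJ : J ^ 2 = -1) (hα : IsUnit α)
    (h : 8 ∣ α - 1 ∨ 8 ∣ α - (1 + 4 * J)) {β : L} (hβ : β ^ 4 = algebraMap R L α) :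
    ∃ A : Subalgebra R L, β ∈ A ∧ Module.Finite R A ∧ Algebra.FormallyUnramified R A := by
  obtain ⟨x, hx, hxJ⟩ : ∃ x, α - 1 ^ 2 = 4 * x ∧ (2 ∣ x ∨ 2 ∣ x - J) := by
    rcases h with ⟨d, hd⟩ | ⟨d, hd⟩
    · exact ⟨2 * d, by linear_combination hd, .inl ⟨d, rfl⟩⟩
    · exact ⟨2 * d + J, by linear_combination hd, .inr ⟨d, by ring⟩⟩
  obtain ⟨A, y, hy, _, _⟩ := exists_unramified_subalgebra_of_sq h2 hα ⟨x, hx⟩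
    (β := β ^ 2) (by rw [← hβ]; ring)
  have hyx : y ^ 2 + y = algebraMap R A x := by
    have hxL := congrArg (algebraMap R L) hx
    simp only [map_sub, map_pow, map_mul, map_ofNat, map_one] at hxL hy
    refine Subtype.ext (mul_left_cancel₀ (four_ne_zero_of_two_ne_zero h2) ?_)
    change 4 * ((y : L) ^ 2 + y) = 4 * algebraMap R L x
    rw [← hxL, ← hβ, show β ^ 4 = (β ^ 2) ^ 2 by ring, hy]
    ring
  obtain ⟨s, hs⟩ := exists_four_dvd_one_add_two_mul_sub_sq (J := algebraMap R A J) (y := y)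
    (by rw [← map_pow, hJ, map_neg, map_one]) (by
      rw [hyx, ← map_sub, ← map_ofNat (algebraMap R A)]
      exact hxJ.imp (map_dvd _) (map_dvd _))
  have hγ : algebraMap A L (1 + 2 * y) = β ^ 2 := by
    rw [hy, map_one, add_comm, map_add, map_mul, map_ofNat, map_one]; rfl
  have hγunit : IsUnit (1 + 2 * y) := by
    have hsq : (1 + 2 * y) ^ 2 = algebraMap R A α :=
      Subtype.ext <| (congrArg (· ^ 2) hγ).trans <| by rw [← pow_mul, hβ]; rfl
    exact (isUnit_pow_iff two_ne_zero).mp (hsq ▸ hα.map _)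
  obtain ⟨B, w, hw, _, _⟩ := exists_unramified_subalgebra_of_sq h2 hγunit hs hγ.symm
  refine ⟨B.restrictScalars R, ?_, finite_and_formallyUnramified_restrictScalars A B⟩
  rw [hw, ← map_ofNat (algebraMap A L)]
  exact add_mem (mul_mem (B.algebraMap_mem _) w.2) (B.algebraMap_mem s)

end Unramified

section Congruences

variable {S : Type*} [CommRing S] {J : S}

theorem one_add_sq_eq_two_mul (hJ : J ^ 2 = -1) : (1 + J) ^ 2 = 2 * J := by
  linear_combination hJ

theorem one_add_dvd_two (hJ : J ^ 2 = -1) : 1 + J ∣ 2 :=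
  ⟨1 - J, by linear_combination hJ⟩

theorem one_add_dvd_sub_one_of_pow_four (hJ : J ^ 2 = -1) (hrad : (Ideal.span {1 + J}).IsRadical)
    {b : S} (hb : 1 + J ∣ b ^ 4 - 1) : 1 + J ∣ b - 1 := by
  obtain ⟨d, hd⟩ := hb
  obtain ⟨e, he⟩ := one_add_dvd_two hJ
  refine Ideal.mem_span_singleton.mp (hrad ⟨4, Ideal.mem_span_singleton.mpr
    ⟨d - e * (2 * b ^ 3 - 3 * b ^ 2 + 2 * b - 1), ?_⟩⟩)
  linear_combination hd - (2 * b ^ 3 - 3 * b ^ 2 + 2 * b - 1) * he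

theorem exists_pow_four_eq_one_sub_four_mul (hJ : J ^ 2 = -1) {b : S} (hb : 1 + J ∣ b - 1) :
    ∃ q c, b ^ 4 = 1 - 4 * c ∧ 2 ∣ c - q * (q - (1 + J)) := by
  obtain ⟨t, ht⟩ := hb
  obtain rfl : b = 1 + (1 + J) * t := by linear_combination ht
  set q := t ^ 2 + t
  refine ⟨q, q * (q - (1 + J) * ((1 + J) * t + 1)), ?_, -J * t * q, ?_⟩
  · linear_combination (2 * t ^ 2 + (8 + 4 * J) * t ^ 3 + (J ^ 2 + 4 * J + 5) * t ^ 4) * hJ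
  · linear_combination -t * q * hJ

theorem two_dvd_or_two_dvd_add (hJ : J ^ 2 = -1) (hrad : (Ideal.span {1 + J}).IsRadical) {c q : S}
    (hcq : 2 ∣ c - q * (q - (1 + J))) (hc : 1 + J ∣ c ∨ 1 + J ∣ c - 1) : 2 ∣ c ∨ 2 ∣ c + J := by
  have hroot {u : S} {n : ℕ} (hu : 1 + J ∣ u ^ n) : 1 + J ∣ u :=
    Ideal.mem_span_singleton.mp (hrad ⟨n, Ideal.mem_span_singleton.mpr hu⟩)
  obtain ⟨d, hd⟩ := hcq
  obtain ⟨e, he⟩ := one_add_dvd_two hJ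
  rcases hc with ⟨c', hc'⟩ | ⟨c', hc'⟩
  · obtain ⟨r, rfl⟩ : 1 + J ∣ q :=
      hroot (n := 2) ⟨c' - e * d + q, by linear_combination hc' - hd - d * he⟩
    exact .inl ⟨d + J * r * (r - 1), by linear_combination hd + r * (r - 1) * hJ⟩
  · obtain ⟨r, hr⟩ : 1 + J ∣ q - 1 :=
      hroot (n := 2) ⟨c' - e * d + e - e * q + q, by
        linear_combination hc' - hd - d * he + (1 - q) * he⟩
    obtain rfl : q = 1 + (1 + J) * r := by linear_combination hr
    exact .inr ⟨d + J * r * (r - 1) + (1 + J) * r, by linear_combination hd + r * (r - 1) * hJ⟩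

theorem eight_dvd_of_isRadical_span_one_add {R S : Type*} [CommRing R] [CommRing S] [IsDomain S]
    (h2 : (2 : S) ≠ 0) (f : R →+* S) (hf : ∀ x y, f x ∣ f y → x ∣ y) {J α : R} (hJ : J ^ 2 = -1)
    (hrad : (Ideal.span {f (1 + J)}).IsRadical) (hres : ∀ x, 1 + J ∣ x ∨ 1 + J ∣ x - 1)
    (hα : 1 + J ∣ α - 1) {b : S} (hb : b ^ 4 = f α) : 8 ∣ α - 1 ∨ 8 ∣ α - (1 + 4 * J) := by
  have hfJ : f J ^ 2 = -1 := by rw [← map_pow, hJ, map_neg, map_one]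
  have hfπ : f (1 + J) = 1 + f J := by rw [map_add, map_one]
  rw [hfπ] at hrad
  have hb1 : 1 + f J ∣ b - 1 := by
    refine one_add_dvd_sub_one_of_pow_four hfJ hrad ?_
    simpa only [hb, hfπ, map_sub, map_one] using map_dvd f hα
  obtain ⟨q, c', hbc, hcq⟩ := exists_pow_four_eq_one_sub_four_mul hfJ hb1
  obtain ⟨c, hc⟩ : 4 ∣ 1 - α := hf _ _
    ⟨c', by rw [map_sub, map_one, map_ofNat, ← hb, hbc, sub_sub_cancel]⟩
  obtain rfl : f c = c' := by
    have hfc := congrArg f hc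
    rw [map_sub, map_mul, map_one, map_ofNat, ← hb] at hfc
    exact mul_left_cancel₀ (four_ne_zero_of_two_ne_zero h2) (by linear_combination -hfc - hbc)
  have hfres : 1 + f J ∣ f c ∨ 1 + f J ∣ f c - 1 := by
    simpa only [hfπ, map_sub, map_one] using (hres c).imp (map_dvd f) (map_dvd f)
  have hc2 : 2 ∣ c ∨ 2 ∣ c + J := by
    refine (two_dvd_or_two_dvd_add hfJ hrad hcq hfres).imp (fun h ↦ hf _ _ ?_) fun h ↦ hf _ _ ?_
    · rwa [map_ofNat]
    · rwa [map_ofNat, map_add]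
  rcases hc2 with ⟨d, hd⟩ | ⟨d, hd⟩
  · exact .inl ⟨-d, by linear_combination -hc - 4 * hd⟩
  · exact .inr ⟨-d, by linear_combination -hc - 4 * hd⟩

end Congruences

section IntegralClosure

theorem dvd_of_algebraMap_dvd_integralClosure {R : Type*} (K : Type*) {L : Type*} [CommRing R]
    [IsIntegrallyClosed R] [Field K] [Field L] [Algebra R K] [IsFractionRing R K]
    [Algebra K L] [Algebra R L] [IsScalarTower R K L] {a b : R}
    (h : algebraMap R (integralClosure R L) a ∣ algebraMap R (integralClosure R L) b) : a ∣ b := by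
  obtain ⟨s, hs⟩ := h
  have hs' : algebraMap K L (algebraMap R K b) = algebraMap K L (algebraMap R K a) * s := by
    simp only [← IsScalarTower.algebraMap_apply]
    exact congrArg Subtype.val hs
  rcases eq_or_ne a 0 with rfl | ha
  · rw [map_zero, map_zero, zero_mul, map_eq_zero, FaithfulSMul.algebraMap_eq_zero_iff] at hs'
    rw [hs']
  have ha' : algebraMap R K a ≠ 0 := by simpa using ha
  have hint : IsIntegral R (algebraMap R K b / algebraMap R K a) := by
    rw [← isIntegral_algebraMap_iff (algebraMap K L).injective, map_div₀, hs',
      mul_div_cancel_left₀ _ (by simpa using ha')]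
    exact s.2
  obtain ⟨c, hc⟩ := IsIntegrallyClosed.isIntegral_iff.mp hint
  refine ⟨c, IsFractionRing.injective R K ?_⟩
  rw [map_mul, hc, mul_div_cancel₀ _ ha']

theorem finite_and_isSeparable_of_pow_eq {K L : Type*} [Field K] [Field L] [Algebra K L] {n : ℕ}
    (hn : (n : K) ≠ 0) {a : K} (ha : a ≠ 0) {β : L} (hβ : β ^ n = algebraMap K L a)
    (hgen : Algebra.adjoin K {β} = ⊤) : FiniteDimensional K L ∧ Algebra.IsSeparable K L := by
  have hroot : aeval β (X ^ n - C a) = 0 := by simp [hβ]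
  have hsep : IsSeparable K β := (separable_X_pow_sub_C a hn ha).of_dvd (minpoly.dvd K β hroot)
  have hfin : Module.Finite K (Algebra.adjoin K {β}) :=
    Algebra.finite_adjoin_simple_of_isIntegral hsep.isIntegral
  rw [hgen] at hfin
  refine ⟨.equiv Subalgebra.topEquiv.toLinearEquiv, (separableClosure.eq_top_iff K L).mp <|
    top_le_iff.mp ?_⟩
  have hle : Algebra.adjoin K {β} ≤ (separableClosure K L).toSubalgebra :=
    Algebra.adjoin_le <| Set.singleton_subset_iff.mpr <| mem_separableClosure_iff.mpr hsep
  exact fun x _ ↦ hle (hgen ▸ Algebra.mem_top)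

theorem isDedekindDomain_integralClosure_of_pow_four_eq {R K L : Type*} [CommRing R]
    [IsDedekindDomain R] [Field K] [Field L] [Algebra R K] [IsFractionRing R K] [Algebra K L]
    [Algebra R L] [IsScalarTower R K L] (h2 : (2 : R) ≠ 0) {α : R} (hα : IsUnit α) {β : L}
    (hβ : β ^ 4 = algebraMap R L α) (hgen : Algebra.adjoin K {β} = ⊤) :
    IsDedekindDomain (integralClosure R L) := by
  have h4K : ((4 : ℕ) : K) ≠ 0 := by
    simpa only [map_ofNat, Nat.cast_ofNat] using
      (map_ne_zero_iff _ (IsFractionRing.injective R K)).mpr (four_ne_zero_of_two_ne_zero h2)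
  obtain ⟨_, _⟩ := finite_and_isSeparable_of_pow_eq h4K (hα.map (algebraMap R K)).ne_zero
    (hβ.trans (IsScalarTower.algebraMap_apply R K L α)) hgen
  exact integralClosure.isDedekindDomain R K L

end IntegralClosure

section LocalRing

variable {R : Type*} [CommRing R] [IsLocalRing R] {p : R}

theorem card_residueField_eq_two_iff (hp : IsLocalRing.maximalIdeal R = Ideal.span {p}) :
    Nat.card (IsLocalRing.ResidueField R) = 2 ↔ ∀ x, p ∣ x ∨ p ∣ x - 1 := by
  have hres (x : R) : p ∣ x ↔ IsLocalRing.residue R x = 0 := by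
    rw [IsLocalRing.residue_eq_zero_iff, hp, Ideal.mem_span_singleton]
  simp only [hres, map_sub, map_one, sub_eq_zero, or_iff_not_imp_left]
  rw [Nat.card_eq_two_iff' 0]
  refine .trans ?_ (IsLocalRing.residue_surjective.forall (p := fun y ↦ y ≠ 0 → y = 1))
  exact ⟨fun h x hx ↦ h.unique hx one_ne_zero, fun h ↦ ⟨1, one_ne_zero, h⟩⟩

theorem maximalIdeal_eq_span_singleton (hp : ¬IsUnit p) (hres : ∀ x, p ∣ x ∨ p ∣ x - 1) :
    IsLocalRing.maximalIdeal R = Ideal.span {p} := by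
  refine le_antisymm (fun x hx ↦ ?_) ?_
  · refine Ideal.mem_span_singleton.mpr ((hres x).resolve_right fun hx1 ↦ ?_)
    have h1 : x - 1 ∈ IsLocalRing.maximalIdeal R :=
      Ideal.mem_of_dvd _ hx1 ((IsLocalRing.mem_maximalIdeal p).mpr hp)
    exact IsLocalRing.maximalIdeal.isMaximal R |>.ne_top <| (Ideal.eq_top_iff_one _).mpr <| by
      simpa only [sub_sub_cancel] using sub_mem hx h1
  · rwa [Ideal.span_singleton_le_iff_mem]

end LocalRing

section GaussianPadicIntegers

theorem two_dvd_or_two_dvd_sub_one (a : ℤ_[2]) : 2 ∣ a ∨ 2 ∣ a - 1 := by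
  obtain ⟨n, hn, hmem⟩ := PadicInt.exists_mem_range a
  rw [PadicInt.maximalIdeal_eq_span_p, Ideal.mem_span_singleton, Nat.cast_ofNat] at hmem
  interval_cases n
  · exact .inl (by simpa using hmem)
  · exact .inr (by simpa using hmem)

variable {R : Type*} [CommRing R] (φ : ℤ_[2] →+* R) {J : R}

theorem one_add_dvd_or_one_add_dvd_sub_one (hJ : J ^ 2 = -1)
    (hspan : ∀ x, ∃ a b, x = φ a + φ b * J) (x : R) : 1 + J ∣ x ∨ 1 + J ∣ x - 1 := by
  obtain ⟨a, b, rfl⟩ := hspan x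
  refine (two_dvd_or_two_dvd_sub_one (a - b)).imp (fun h ↦ ?_) fun h ↦ ?_
  all_goals
    obtain ⟨d, hd⟩ := (map_ofNat φ 2 ▸ one_add_dvd_two hJ).trans (map_dvd φ h)
    simp only [map_sub, map_one] at hd
    exact ⟨d + φ b, by linear_combination hd⟩

theorem isNoetherianRing_of_forall_exists_eq_add_mul
    (hspan : ∀ x, ∃ a b, x = φ a + φ b * J) : IsNoetherianRing R := by
  refine isNoetherianRing_of_surjective ℤ_[2][X] R (eval₂RingHom φ J) fun x ↦ ?_
  obtain ⟨a, b, rfl⟩ := hspan x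
  exact ⟨C a + C b * X, by simp⟩

variable [IsDomain R]

theorem not_two_dvd_one_add_mul (h2 : (2 : R) ≠ 0) (h2' : ¬IsUnit (2 : R)) (hJ : J ^ 2 = -1)
    (u : ℤ_[2]) : ¬2 ∣ 1 + φ u * J := by
  rintro ⟨d, hd⟩
  refine h2' (isUnit_of_dvd_one ?_)
  rcases two_dvd_or_two_dvd_sub_one u with ⟨v, hv⟩ | ⟨v, hv⟩
  · obtain rfl : u = 2 * v := hv
    rw [map_mul, map_ofNat] at hd
    exact ⟨d - φ v * J, by linear_combination hd⟩
  · obtain rfl : u = 1 + 2 * v := by linear_combination hv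
    rw [map_add, map_mul, map_one, map_ofNat] at hd
    set e := d - φ v * J
    have he : 1 + J = 2 * e := by linear_combination hd
    have hJe : J = 2 * e ^ 2 := mul_left_cancel₀ h2 <| by
      linear_combination (1 + J + 2 * e) * he - hJ
    exact ⟨-2 * e ^ 4, by linear_combination hJ - (J + 2 * e ^ 2) * hJe⟩

end GaussianPadicIntegers

theorem exists_eq_algebraMap_add_mul {F A : Type*} [CommRing F] [CommRing A] [Algebra F A] {i : A}
    (hi : i ^ 2 = -1) (hgen : Algebra.adjoin F {i} = ⊤) (x : A) :
    ∃ a b, x = algebraMap F A a + algebraMap F A b * i := by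
  have hx : x ∈ Algebra.adjoin F {i} := hgen ▸ Algebra.mem_top
  induction hx using Algebra.adjoin_induction with
  | mem y hy => exact ⟨0, 1, by simpa using hy⟩
  | algebraMap r => exact ⟨r, 0, by simp⟩
  | add y z _ _ hy hz =>
    obtain ⟨a, b, rfl⟩ := hy
    obtain ⟨c, d, rfl⟩ := hz
    exact ⟨a + c, b + d, by simp only [map_add]; ring⟩
  | mul y z _ _ hy hz =>
    obtain ⟨a, b, rfl⟩ := hy
    obtain ⟨c, d, rfl⟩ := hz
    refine ⟨a * c - b * d, a * d + b * c, ?_⟩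
    simp only [map_add, map_sub, map_mul]
    linear_combination algebraMap F A b * algebraMap F A d * hi

section ValuationSubring

variable {K : Type*} [Field K] [Algebra ℚ_[2] K] {O : ValuationSubring K}

variable (O) in
theorem valuationSubring_two_ne_zero : (2 : O) ≠ 0 := by
  have : CharZero K := charZero_of_injective_algebraMap (algebraMap ℚ_[2] K).injective
  exact fun h ↦ two_ne_zero (congrArg (Subtype.val : O → K) h)

theorem not_isUnit_two (hO : ∀ x : ℚ_[2], algebraMap ℚ_[2] K x ∈ O ↔ ‖x‖ ≤ 1) :
    ¬IsUnit (2 : O) := by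
  intro hu
  obtain ⟨v, hv⟩ := hu.exists_right_inv
  have hvK : (v : K) = algebraMap ℚ_[2] K 2⁻¹ := by
    rw [map_inv₀, map_ofNat]
    exact eq_inv_of_mul_eq_one_right (congrArg Subtype.val hv)
  have hnorm : ‖(2 : ℚ_[2])‖ < 1 := by simpa using Padic.norm_p_lt_one (p := 2)
  have hinv := (hO 2⁻¹).mp (hvK ▸ v.2)
  rw [norm_inv] at hinv
  exact hinv.not_gt (one_lt_inv_iff₀.mpr ⟨norm_pos_iff.mpr two_ne_zero, hnorm⟩)

/-- The inclusion of `ℤ₂` into a valuation ring of a field over `ℚ₂` that meets `ℚ₂` in `ℤ₂`. -/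
noncomputable def padicIntHom
    (hO : ∀ x : ℚ_[2], algebraMap ℚ_[2] K x ∈ O ↔ ‖x‖ ≤ 1) : ℤ_[2] →+* O :=
  ((algebraMap ℚ_[2] K).comp PadicInt.Coe.ringHom).codRestrict O fun x ↦ (hO x).mpr x.norm_le_one

theorem norm_le_one_of_add_mul_mem
    (hO : ∀ x : ℚ_[2], algebraMap ℚ_[2] K x ∈ O ↔ ‖x‖ ≤ 1) {j : O} (hj : j ^ 2 = -1) {a b : ℚ_[2]}
    (hba : ‖b‖ ≤ ‖a‖) (h : algebraMap ℚ_[2] K a + algebraMap ℚ_[2] K b * j ∈ O) : ‖a‖ ≤ 1 := by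
  -- If `‖a‖ > 1`, dividing by `a` shows that `2` divides `1 + (b / a) j`.
  by_contra! ha
  have ha0 : a ≠ 0 := norm_pos_iff.mp (one_pos.trans ha)
  have hinv : ‖a⁻¹‖ < 1 := by rw [norm_inv]; exact inv_lt_one_of_one_lt₀ ha
  have hdiv : ‖b / a‖ ≤ 1 := by rw [norm_div]; exact div_le_one_of_le₀ hba (norm_nonneg a)
  obtain ⟨d, hd⟩ : (2 : ℤ_[2]) ∣ ⟨a⁻¹, hinv.le⟩ := by
    simpa using (PadicInt.norm_lt_one_iff_dvd ⟨a⁻¹, hinv.le⟩).mp hinv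
  refine not_two_dvd_one_add_mul (padicIntHom hO) (valuationSubring_two_ne_zero O)
    (not_isUnit_two hO) hj ⟨b / a, hdiv⟩ ⟨padicIntHom hO d * ⟨_, h⟩, Subtype.ext ?_⟩
  have hdK : (algebraMap ℚ_[2] K a)⁻¹ = 2 * algebraMap ℚ_[2] K d := by
    rw [← map_inv₀, ← map_ofNat (algebraMap ℚ_[2] K), ← map_mul]
    exact congrArg (algebraMap ℚ_[2] K ∘ Subtype.val) hd
  change 1 + algebraMap ℚ_[2] K (b / a) * j = 2 * (algebraMap ℚ_[2] K d *
    (algebraMap ℚ_[2] K a + algebraMap ℚ_[2] K b * j))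
  rw [← mul_assoc, ← hdK, map_div₀]
  have := (map_ne_zero (algebraMap ℚ_[2] K)).mpr ha0
  field_simp

theorem exists_eq_padicIntHom_add_mul
    (hO : ∀ x : ℚ_[2], algebraMap ℚ_[2] K x ∈ O ↔ ‖x‖ ≤ 1) {j : O} (hj : j ^ 2 = -1)
    (hgen : Algebra.adjoin ℚ_[2] {(j : K)} = ⊤) (x : O) :
    ∃ a b, x = padicIntHom hO a + padicIntHom hO b * j := by
  have hi : (j : K) ^ 2 = -1 := congrArg Subtype.val hj
  obtain ⟨a, b, hx⟩ := exists_eq_algebraMap_add_mul hi hgen (x : K)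
  have hab : ‖a‖ ≤ 1 ∧ ‖b‖ ≤ 1 := by
    rcases le_total ‖b‖ ‖a‖ with hba | hab
    · have ha := norm_le_one_of_add_mul_mem hO hj hba (hx ▸ x.2)
      exact ⟨ha, hba.trans ha⟩
    · have hjx : algebraMap ℚ_[2] K b + algebraMap ℚ_[2] K (-a) * j = (-j * x : O) := by
        change _ = -(j : K) * x
        rw [hx, map_neg]
        linear_combination algebraMap ℚ_[2] K b * hi
      have hb := norm_le_one_of_add_mul_mem hO hj (by rwa [norm_neg]) (hjx ▸ (-j * x).2)
      exact ⟨hab.trans hb, hb⟩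
  exact ⟨⟨a, hab.1⟩, ⟨b, hab.2⟩, Subtype.ext hx⟩

theorem isDiscreteValuationRing_of_adjoin_eq_top
    (hO : ∀ x : ℚ_[2], algebraMap ℚ_[2] K x ∈ O ↔ ‖x‖ ≤ 1) {j : O} (hj : j ^ 2 = -1)
    (hgen : Algebra.adjoin ℚ_[2] {(j : K)} = ⊤) : IsDiscreteValuationRing O := by
  have : IsNoetherianRing O := isNoetherianRing_of_forall_exists_eq_add_mul (padicIntHom hO)
    (exists_eq_padicIntHom_add_mul hO hj hgen)
  have hfield : ¬IsField O := fun h ↦ by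
    obtain ⟨v, hv⟩ := h.mul_inv_cancel (valuationSubring_two_ne_zero O)
    exact not_isUnit_two hO (.of_mul_eq_one v hv)
  exact ((IsDiscreteValuationRing.TFAE O hfield).out 0 1).mpr (inferInstance : ValuationRing O)

theorem maximalIdeal_eq_span_one_add
    (hO : ∀ x : ℚ_[2], algebraMap ℚ_[2] K x ∈ O ↔ ‖x‖ ≤ 1) {j : O} (hj : j ^ 2 = -1)
    (hgen : Algebra.adjoin ℚ_[2] {(j : K)} = ⊤) :
    IsLocalRing.maximalIdeal O = Ideal.span {1 + j} := by
  refine maximalIdeal_eq_span_singleton (fun h ↦ not_isUnit_two hO ?_)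
    (one_add_dvd_or_one_add_dvd_sub_one (padicIntHom hO) hj
      (exists_eq_padicIntHom_add_mul hO hj hgen))
  exact isUnit_of_mul_isUnit_left (one_add_sq_eq_two_mul hj ▸ h.pow 2)

theorem card_residueField_eq_two
    (hO : ∀ x : ℚ_[2], algebraMap ℚ_[2] K x ∈ O ↔ ‖x‖ ≤ 1) {j : O} (hj : j ^ 2 = -1)
    (hgen : Algebra.adjoin ℚ_[2] {(j : K)} = ⊤) :
    Nat.card (IsLocalRing.ResidueField O) = 2 :=
  (card_residueField_eq_two_iff (maximalIdeal_eq_span_one_add hO hj hgen)).mpr <|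
    one_add_dvd_or_one_add_dvd_sub_one (padicIntHom hO) hj
      (exists_eq_padicIntHom_add_mul hO hj hgen)

end ValuationSubring

theorem unramified_quartic_ext_over_Q2i_iff_general {O K L : Type*} [CommRing O] [IsDomain O]
    [IsDiscreteValuationRing O] [Field K] [Algebra O K] [IsFractionRing O K]
    (hcard : Nat.card (IsLocalRing.ResidueField O) = 2) {j : O} (hj : j ^ 2 = -1)
    (hmax : IsLocalRing.maximalIdeal O = Ideal.span {1 + j}) {α : O} (hα : IsUnit α)
    [Field L] [Algebra K L] [Algebra O L] [IsScalarTower O K L] {β : L}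
    (hβ : β ^ 4 = algebraMap O L α) (hgen : Algebra.adjoin K {β} = ⊤) :
    (∀ Q : Ideal (integralClosure O L), Q.IsMaximal →
        Q.comap (algebraMap O (integralClosure O L)) = IsLocalRing.maximalIdeal O →
        Ideal.ramificationIdx' (IsLocalRing.maximalIdeal O) Q = 1) ↔
      ((8 : O) ∣ α - 1 ∨ (8 : O) ∣ α - (1 + 4 * j)) := by
  have hirr := (IsDiscreteValuationRing.irreducible_iff_uniformizer (1 + j)).mpr hmax
  have hres := (card_residueField_eq_two_iff hmax).mp hcard
  have h2 : (2 : O) ≠ 0 := fun h ↦ hirr.ne_zero <| by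
    simpa [h] using one_add_sq_eq_two_mul hj
  have : FaithfulSMul O L := .trans O K L
  have hinj : Function.Injective (algebraMap O (integralClosure O L)) :=
    fun _ _ h ↦ FaithfulSMul.algebraMap_injective O L (congrArg Subtype.val h)
  have := isDedekindDomain_integralClosure_of_pow_four_eq h2 hα hβ hgen
  have hmap : (IsLocalRing.maximalIdeal O).map (algebraMap O (integralClosure O L)) ≠ ⊥ := by
    rw [ne_eq, Ideal.map_eq_bot_iff_of_injective hinj]
    exact IsDiscreteValuationRing.not_a_field O
  rw [forall_ramificationIdx'_eq_one_iff_isRadical_map hmap]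
  constructor
  · rw [hmax, Ideal.map_span, Set.image_singleton]
    intro hrad
    have hα1 : 1 + j ∣ α - 1 :=
      (hres α).resolve_left fun h ↦ hirr.not_isUnit (isUnit_of_dvd_unit h hα)
    have hβint : IsIntegral O β := .of_pow four_pos (hβ ▸ isIntegral_algebraMap)
    have h2S : (2 : integralClosure O L) ≠ 0 := by
      simpa only [map_ofNat] using (map_ne_zero_iff _ hinj).mpr h2
    exact eight_dvd_of_isRadical_span_one_add h2S _
      (fun _ _ ↦ dvd_of_algebraMap_dvd_integralClosure K) hj hrad hres hα1
      (b := ⟨β, hβint⟩) (Subtype.ext hβ)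
  · intro h
    have h2L : (2 : L) ≠ 0 := by
      simpa only [map_ofNat] using
        (map_ne_zero_iff _ (FaithfulSMul.algebraMap_injective O L)).mpr h2
    obtain ⟨A, hβA, _, _⟩ := exists_unramified_subalgebra_of_pow_four h2L hj hα h hβ
    obtain rfl := eq_integralClosure_of_formallyUnramified hgen hβA
    exact Algebra.FormallyUnramified.isRadical_map_isMaximal _ _ _

/-- Let `K = ℚ₂(√-1)` with valuation ring `O`, and let `α ∈ O` be a unit.  Then the extension
`L = K(⁴√α)`, obtained by adjoining a root `β` of `X ^ 4 - α`, is unramified over `K`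
(every maximal ideal of the integral closure of `O` in `L` lying over the maximal ideal of `O`
has ramification index `1`) if and only if `α ≡ 1 (mod 8)` or `α ≡ 1 + 4√-1 (mod 8)`. -/
theorem unramified_quartic_ext_over_Q2i_iff
    (K : Type*) [Field K] [Algebra ℚ_[2] K] [FiniteDimensional ℚ_[2] K]
    (i : K) (hi : i ^ 2 = -1) (hKgen : Algebra.adjoin ℚ_[2] {i} = ⊤)
    (O : ValuationSubring K)
    (hO : ∀ x : ℚ_[2], algebraMap ℚ_[2] K x ∈ O ↔ ‖x‖ ≤ 1)
    (j : O) (hj : (j : K) = i)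
    (α : O) (hαunit : IsUnit α)
    (L : Type*) [Field L] [Algebra K L] [Algebra O L] [IsScalarTower O K L]
    (β : L) (hβ : β ^ 4 = algebraMap K L (α : K))
    (hgen : Algebra.adjoin K {β} = ⊤) :
    (∀ Q : Ideal (integralClosure O L), Q.IsMaximal →
        Q.comap (algebraMap O (integralClosure O L)) = IsLocalRing.maximalIdeal O →
        Ideal.ramificationIdx'
          (IsLocalRing.maximalIdeal O) Q = 1) ↔
      ((8 : O) ∣ α - 1 ∨ (8 : O) ∣ α - (1 + 4 * j)) := by
  subst hj
  have hj2 : j ^ 2 = -1 := Subtype.ext hi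
  have := isDiscreteValuationRing_of_adjoin_eq_top hO hj2 hKgen
  exact unramified_quartic_ext_over_Q2i_iff_general (card_residueField_eq_two hO hj2 hKgen) hj2
    (maximalIdeal_eq_span_one_add hO hj2 hKgen) hαunit
    (hβ.trans (IsScalarTower.algebraMap_apply O K L α).symm) hgen
end

section
/- Let d ∈ {1, 2, 3, 7, 11, 19, 43, 67, 163}, let K = ℚ(√−d) with ring of integers O_K, and let PGL₂(O_K) denote the quotient of the group GL₂(O_K) of invertible 2×2 matrices over O_K by its center. Then for every prime number ℓ ≥ 5, every group homomorphism from PGL₂(O_K) to the additive group ℤ/ℓℤ is trivial (equivalently, the group cohomology H¹(PGL₂(O_K), F_ℓ) with trivial coefficients vanishes). -/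
open NumberField Matrix

/-!
A homomorphism from `GL₂(R)` to an abelian group without `6`-torsion kills every unipotent matrix,
because conjugation by `diag(1, -1)` inverts it, and every matrix whose order divides a power of
`6`. On `SL₂(R)` it therefore depends only on the first column `(a, c)`, that is, on the cusp
`a / c`. If every `x / y` is close to a cusp `p / k` on which it vanishes, in the sense that
`p * y - k * x` has smaller norm than `y`, then Euclid's algorithm applied to the first column shows
that it vanishes on all of `GL₂(R)`.

For an imaginary quadratic order of discriminant `D`, Dirichlet approximation shows that the cusps
`p / n` with natural denominators `n ≤ q` suffice as soon as `|D| < 3 * (q + 1) ^ 2`; for the nine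
fields of class number one `q = 7` is enough. Up to translation only finitely many cusps
remain, and they are handled by matrices of finite order and by relations `A * X = P` in `SL₂(R)`.
-/

namespace Bianchi

section CommutatorIsolator

variable {G H A : Type*} [Group G] [Group H] [CommGroup A] {m : ℕ} {g : G}

/-- The `m`-isolator of the commutator subgroup: the elements `g` of `G` for which some `g ^ m ^ k`
is a product of commutators. It is contained in the kernel of every homomorphism to an
abelian group without `m`-torsion. -/
def commutatorIsolator (m : ℕ) (G : Type*) [Group G] : Subgroup G where
  carrier := {g | ∃ k, Abelianization.of g ^ m ^ k = 1}
  one_mem' := ⟨0, by simp⟩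
  mul_mem' := by
    rintro g h ⟨k, hk⟩ ⟨l, hl⟩
    refine ⟨k + l, ?_⟩
    rw [map_mul, mul_pow, pow_add, pow_mul, hk, one_pow, one_mul, mul_comm, pow_mul, hl, one_pow]
  inv_mem' := by
    rintro g ⟨k, hk⟩
    exact ⟨k, by rw [map_inv, inv_pow, hk, inv_one]⟩

lemma mem_commutatorIsolator_congr {g h : G} (hgh : Abelianization.of g = Abelianization.of h) :
    g ∈ commutatorIsolator m G ↔ h ∈ commutatorIsolator m G :=
  exists_congr fun k ↦ by rw [hgh]

lemma mem_commutatorIsolator_of_pow_mem {n j : ℕ} (hn : n ∣ m ^ j)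
    (hg : g ^ n ∈ commutatorIsolator m G) : g ∈ commutatorIsolator m G := by
  obtain ⟨k, hk⟩ := hg
  obtain ⟨r, hr⟩ := hn
  exact ⟨j + k, by rw [pow_add, hr, mul_right_comm, pow_mul, pow_mul, ← map_pow, hk, one_pow]⟩

lemma map_mem_commutatorIsolator (f : G →* H) (hg : g ∈ commutatorIsolator m G) :
    f g ∈ commutatorIsolator m H := by
  obtain ⟨k, hk⟩ := hg
  exact ⟨k, by rw [← Abelianization.map_of f, ← map_pow, hk, map_one]⟩

lemma commutatorIsolator_le_ker (hA : ∀ x : A, x ^ m = 1 → x = 1) (f : G →* A) :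
    commutatorIsolator m G ≤ f.ker := by
  rintro g ⟨k, hk⟩
  have hfg : f g ^ m ^ k = 1 := by
    rw [← Abelianization.lift_apply_of f g, ← map_pow, hk, map_one]
  clear hk
  induction k with
  | zero => simpa using hfg
  | succ k ih => exact ih (hA _ (by rwa [← pow_mul, ← pow_succ]))

end CommutatorIsolator

section NullCusp

open scoped MatrixGroups

variable {R S : Type*} [CommRing R] [CommRing S]

/-- The elements of `SL₂(R)` that die in every quotient of `GL₂(R)` which is abelian without
`6`-torsion. -/
def nullSubgroup (R : Type*) [CommRing R] : Subgroup SL(2, R) :=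
  (commutatorIsolator 6 (GL (Fin 2) R)).comap SpecialLinearGroup.toGL

/-- The matrix `!![a, b; c, e]` as an element of `SL₂(R)`. -/
def mkSL2 (a b c e : R) (h : a * e - b * c = 1) : SL(2, R) :=
  ⟨!![a, b; c, e], by rw [det_fin_two_of, h]⟩

/-- Conjugation of `SL₂(R)` by `diag(1, -1)`. -/
def signConj (g : SL(2, R)) : SL(2, R) :=
  mkSL2 (g 0 0) (-g 0 1) (-g 1 0) (g 1 1) (by
    linear_combination (det_fin_two g.1).symm.trans g.2)

@[simp] lemma coe_mkSL2 (a b c e : R) (h : a * e - b * c = 1) :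
    (mkSL2 a b c e h : Matrix (Fin 2) (Fin 2) R) = !![a, b; c, e] := rfl

lemma abelianization_of_toGL_signConj (g : SL(2, R)) :
    Abelianization.of (SpecialLinearGroup.toGL (signConj g)) =
      Abelianization.of (SpecialLinearGroup.toGL g) := by
  let D : GL (Fin 2) R :=
    ⟨!![1, 0; 0, -1], !![1, 0; 0, -1], by simp [one_fin_two], by simp [one_fin_two]⟩
  have hD : SpecialLinearGroup.toGL (signConj g) * D = D * SpecialLinearGroup.toGL g := by
    refine Units.ext ?_
    simp only [Units.val_mul, SpecialLinearGroup.coe_GL_coe_matrix, D]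
    rw [eta_fin_two (g : Matrix (Fin 2) (Fin 2) R)]
    simp [signConj, mkSL2]
  have hof := congrArg Abelianization.of hD
  rwa [map_mul, map_mul, mul_comm, mul_right_inj] at hof

lemma signConj_mem_nullSubgroup {g : SL(2, R)} (hg : g ∈ nullSubgroup R) :
    signConj g ∈ nullSubgroup R :=
  (mem_commutatorIsolator_congr (abelianization_of_toGL_signConj g)).2 hg

lemma map_mem_nullSubgroup (f : R →+* S) {g : SL(2, R)} (hg : g ∈ nullSubgroup R) :
    SpecialLinearGroup.map f g ∈ nullSubgroup S := by
  have hmap : SpecialLinearGroup.toGL (SpecialLinearGroup.map f g) =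
    GeneralLinearGroup.map f (SpecialLinearGroup.toGL g) := Units.ext rfl
  rw [nullSubgroup, Subgroup.mem_comap, hmap]
  exact map_mem_commutatorIsolator _ hg

lemma mem_nullSubgroup_of_pow_mem {g : SL(2, R)} {n : ℕ} (j : ℕ) (hn : n ∣ 6 ^ j)
    (hg : g ^ n ∈ nullSubgroup R) : g ∈ nullSubgroup R :=
  mem_commutatorIsolator_of_pow_mem hn (by rwa [← map_pow])

lemma mem_nullSubgroup_of_mul_signConj_mem {g : SL(2, R)} (hg : g * signConj g ∈ nullSubgroup R) :
    g ∈ nullSubgroup R := by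
  refine mem_nullSubgroup_of_pow_mem (n := 2) 1 (by norm_num) ?_
  refine (mem_commutatorIsolator_congr ?_).2 hg
  rw [map_mul, map_mul, abelianization_of_toGL_signConj, sq, map_mul, map_mul]

lemma mem_nullSubgroup_of_unipotent {g : SL(2, R)} (h₀₀ : g 0 0 = 1) (h₁₀ : g 1 0 = 0) :
    g ∈ nullSubgroup R := by
  have h₁₁ : g 1 1 = 1 := by simpa [h₀₀, h₁₀] using (det_fin_two g.1).symm.trans g.2
  have hg : g * signConj g = 1 := by
    ext i j
    fin_cases i <;> fin_cases j <;>
      simp [signConj, mul_apply, Fin.sum_univ_two, h₀₀, h₁₀, h₁₁]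
  exact mem_nullSubgroup_of_mul_signConj_mem (hg ▸ one_mem _)

lemma inv_mul_apply_zero_zero (g h : SL(2, R)) :
    (g⁻¹ * h) 0 0 = g 1 1 * h 0 0 - g 0 1 * h 1 0 := by
  simp [adjugate_fin_two, mul_apply, Fin.sum_univ_two, sub_eq_add_neg]

lemma inv_mul_apply_one_zero (g h : SL(2, R)) :
    (g⁻¹ * h) 1 0 = g 0 0 * h 1 0 - g 1 0 * h 0 0 := by
  simp [adjugate_fin_two, mul_apply, Fin.sum_univ_two, neg_add_eq_sub]

lemma mem_nullSubgroup_of_col_eq {g h : SL(2, R)} (hg : g ∈ nullSubgroup R)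
    (h₀₀ : h 0 0 = g 0 0) (h₁₀ : h 1 0 = g 1 0) : h ∈ nullSubgroup R := by
  have hdet := (det_fin_two g.1).symm.trans g.2
  suffices g⁻¹ * h ∈ nullSubgroup R from (Subgroup.mul_mem_cancel_left _ (inv_mem hg)).1 this
  apply mem_nullSubgroup_of_unipotent
  · rw [inv_mul_apply_zero_zero, h₀₀, h₁₀]
    linear_combination hdet
  · rw [inv_mul_apply_one_zero, h₀₀, h₁₀]
    ring

lemma neg_one_mem_nullSubgroup : (-1 : SL(2, R)) ∈ nullSubgroup R :=
  mem_nullSubgroup_of_pow_mem (n := 2) 1 (by norm_num) (by simp)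

lemma sq_eq_trace_smul_sub_one (g : SL(2, R)) :
    (g : Matrix (Fin 2) (Fin 2) R) ^ 2 = trace (g : Matrix (Fin 2) (Fin 2) R) • g.1 - 1 := by
  nontriviality R
  have hcharpoly := aeval_self_charpoly g.1
  simp only [charpoly_fin_two, g.2, map_add, map_sub, map_mul, map_pow, Polynomial.aeval_X,
    Polynomial.aeval_C, map_one, ← Algebra.smul_def] at hcharpoly
  rw [eq_sub_iff_add_eq, ← sub_eq_zero, ← hcharpoly]
  abel

lemma mem_nullSubgroup_of_trace_eq_zero {g : SL(2, R)}
    (hg : trace (g : Matrix (Fin 2) (Fin 2) R) = 0) : g ∈ nullSubgroup R := by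
  have hsq : g ^ 2 = -1 := by
    apply Subtype.ext
    simp [sq_eq_trace_smul_sub_one, hg]
  exact mem_nullSubgroup_of_pow_mem 1 (by norm_num) (hsq ▸ neg_one_mem_nullSubgroup)

lemma mem_nullSubgroup_of_trace_eq_one {g : SL(2, R)}
    (hg : trace (g : Matrix (Fin 2) (Fin 2) R) = 1) : g ∈ nullSubgroup R := by
  have hcube : g ^ 3 = -1 := by
    apply Subtype.ext
    simp [pow_succ _ 2, sq_eq_trace_smul_sub_one, hg, sub_mul, ← sq]
  exact mem_nullSubgroup_of_pow_mem 1 (by norm_num) (hcube ▸ neg_one_mem_nullSubgroup)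

/-- The cusp `a / c` of `SL₂(R)` is null if the matrices with first column `(a, c)`, which differ
by unipotent factors only, lie in `nullSubgroup R`. -/
def NullCusp (a c : R) : Prop := ∃ g ∈ nullSubgroup R, g 0 0 = a ∧ g 1 0 = c

namespace NullCusp

variable {a b c e : R}

lemma mkSL2_mem (hac : NullCusp a c) (h : a * e - b * c = 1) :
    mkSL2 a b c e h ∈ nullSubgroup R := by
  obtain ⟨g, hg, rfl, rfl⟩ := hac
  exact mem_nullSubgroup_of_col_eq hg rfl rfl

lemma map (f : R →+* S) (hac : NullCusp a c) : NullCusp (f a) (f c) := by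
  obtain ⟨g, hg, rfl, rfl⟩ := hac
  exact ⟨_, map_mem_nullSubgroup f hg, by simp, by simp⟩

lemma add_mul_right (hac : NullCusp a c) (r : R) : NullCusp (a + r * c) c := by
  obtain ⟨g, hg, rfl, rfl⟩ := hac
  have hT : mkSL2 1 r 0 1 (by ring) ∈ nullSubgroup R :=
    mem_nullSubgroup_of_unipotent (by simp) (by simp)
  exact ⟨_, mul_mem hT hg, by simp [mul_apply, Fin.sum_univ_two],
    by simp [mul_apply, Fin.sum_univ_two]⟩

lemma neg_neg (hac : NullCusp a c) : NullCusp (-a) (-c) := by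
  obtain ⟨g, hg, rfl, rfl⟩ := hac
  exact ⟨_, mul_mem neg_one_mem_nullSubgroup hg, by simp, by simp⟩

lemma neg_right (hac : NullCusp a c) : NullCusp a (-c) := by
  obtain ⟨g, hg, rfl, rfl⟩ := hac
  exact ⟨_, signConj_mem_nullSubgroup hg, rfl, rfl⟩

lemma neg_left (hac : NullCusp a c) : NullCusp (-a) c := by
  simpa using hac.neg_neg.neg_right

lemma of_dvd_mul_sub_one (hac : NullCusp a c) (h : c ∣ a * e - 1) : NullCusp e c := by
  obtain ⟨b, hb⟩ := h
  have hM := inv_mem (hac.mkSL2_mem (b := b) (e := e) (by linear_combination hb))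
  have hec : NullCusp e (-c) :=
    ⟨_, hM, by simp [adjugate_fin_two], by simp [adjugate_fin_two]⟩
  simpa using hec.neg_right

lemma of_dvd_sub (hac : NullCusp a c) (h : c ∣ e - a) : NullCusp e c := by
  obtain ⟨b, hb⟩ := h
  simpa [← hb, mul_comm] using hac.add_mul_right b

lemma symm (hac : NullCusp a c) : NullCusp c a := by
  obtain ⟨g, hg, rfl, rfl⟩ := hac
  have hw : mkSL2 0 (-1) 1 0 (by ring) ∈ nullSubgroup R :=
    mem_nullSubgroup_of_trace_eq_zero (by simp [trace_fin_two])
  have hca : NullCusp (-g 1 0) (g 0 0) :=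
    ⟨_, mul_mem hw hg, by simp [mul_apply, Fin.sum_univ_two],
      by simp [mul_apply, Fin.sum_univ_two]⟩
  simpa using hca.neg_left

lemma of_mul_signConj (h : a * e - b * c = 1) (hp : NullCusp (a * a - b * c) (c * (a - e))) :
    NullCusp a c := by
  refine ⟨mkSL2 a b c e h, mem_nullSubgroup_of_mul_signConj_mem ?_, rfl, rfl⟩
  obtain ⟨g, hg, h₀₀, h₁₀⟩ := hp
  refine mem_nullSubgroup_of_col_eq hg ?_ ?_
  · simp [h₀₀, signConj, mul_apply, Fin.sum_univ_two, sub_eq_add_neg]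
  · simpa [h₁₀, signConj, mul_apply, Fin.sum_univ_two] using
      (by ring : c * a + -(e * c) = c * (a - e))

lemma one_zero : NullCusp (1 : R) 0 := ⟨1, one_mem _, by simp, by simp⟩

lemma denom_one (a : R) : NullCusp a 1 := by
  simpa using one_zero.symm.add_mul_right a

lemma of_dvd_sq_sub_one (h : c ∣ a ^ 2 - 1) : NullCusp a c := by
  obtain ⟨b, hb⟩ := h
  refine of_mul_signConj (b := b) (e := a) (by linear_combination hb) ?_
  convert one_zero using 1
  · linear_combination hb
  · ring

lemma of_dvd_mul_pred_sub_one (h : c ∣ a * (a - 1) - 1) (hac : NullCusp (a + 1) c) :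
    NullCusp a c := by
  obtain ⟨b, hb⟩ := h
  refine of_mul_signConj (b := b) (e := a - 1) (by linear_combination hb) ?_
  convert hac using 1
  · linear_combination hb
  · ring

lemma of_dvd_sq_add_one (h : c ∣ a ^ 2 + 1) : NullCusp a c := by
  obtain ⟨b, hb⟩ := h
  exact ⟨mkSL2 a (-b) c (-a) (by linear_combination -hb),
    mem_nullSubgroup_of_trace_eq_zero (by simp [trace_fin_two]), rfl, rfl⟩

lemma of_dvd_sq_sub_self_add_one (h : c ∣ a ^ 2 - a + 1) : NullCusp a c := by
  obtain ⟨b, hb⟩ := h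
  exact ⟨mkSL2 a (-b) c (1 - a) (by linear_combination -hb),
    mem_nullSubgroup_of_trace_eq_one (by simp [trace_fin_two]), rfl, rfl⟩

end NullCusp

lemma mem_commutatorIsolator_of_lower_left_eq_zero (hu : ∀ u : Rˣ, u ^ 12 = 1)
    {M : GL (Fin 2) R} (hM : M 1 0 = 0) : M ∈ commutatorIsolator 6 (GL (Fin 2) R) := by
  have hdet : M 0 0 * M 1 1 = M.det := by
    simpa [hM] using (det_fin_two M.1).symm
  obtain ⟨u, hu₀⟩ : IsUnit (M 0 0) := isUnit_of_mul_isUnit_left (hdet ▸ M.det.isUnit)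
  obtain ⟨v, hv₁⟩ : IsUnit (M 1 1) := isUnit_of_mul_isUnit_right (hdet ▸ M.det.isUnit)
  let D : GL (Fin 2) R :=
    Units.map (diagonalRingHom (Fin 2) R).toMonoidHom (MulEquiv.piUnits.symm ![u, v])
  have hD : D ^ 12 = 1 := by
    have huv : ![u, v] ^ 12 = 1 := by
      ext i
      fin_cases i <;> simp [hu]
    rw [← map_pow, ← map_pow, huv, map_one, map_one]
  let U : SL(2, R) := mkSL2 1 (u⁻¹ * M 0 1) 0 1 (by ring)
  have hU : U ∈ nullSubgroup R := mem_nullSubgroup_of_unipotent (by simp [U]) (by simp [U])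
  have hM : M = D * SpecialLinearGroup.toGL U := by
    ext i j
    fin_cases i <;> fin_cases j <;>
      simp [D, U, mul_apply, Fin.sum_univ_two, ← hu₀, ← hv₁, hM]
  rw [hM]
  exact mul_mem (mem_commutatorIsolator_of_pow_mem (n := 12) (j := 2) (by norm_num)
    (hD ▸ one_mem _)) hU

/-- Euclid's algorithm with null cusps in place of quotients. -/
theorem commutatorIsolator_GL_eq_top (hu : ∀ u : Rˣ, u ^ 12 = 1) (φ : R → ℕ)
    (hφ : ∀ a c : R, c ≠ 0 → ∃ p k, NullCusp p k ∧ φ (p * c - k * a) < φ c) :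
    commutatorIsolator 6 (GL (Fin 2) R) = ⊤ := by
  refine (Subgroup.eq_top_iff' _).2 fun M ↦ ?_
  induction hn : φ (M 1 0) using Nat.strong_induction_on generalizing M with
  | _ n ih =>
    by_cases hc : M 1 0 = 0
    · exact mem_commutatorIsolator_of_lower_left_eq_zero hu hc
    obtain ⟨_, _, ⟨g, hg, rfl, rfl⟩, hlt⟩ := hφ (M 0 0) (M 1 0) hc
    have hentry : (SpecialLinearGroup.toGL g⁻¹ * M) 1 0 = g 0 0 * M 1 0 - g 1 0 * M 0 0 := by
      simp only [Units.val_mul, SpecialLinearGroup.coe_GL_coe_matrix, mul_apply, Fin.sum_univ_two]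
      simp [adjugate_fin_two, neg_add_eq_sub]
    have hgM := ih _ (by rwa [← hn, hentry]) (SpecialLinearGroup.toGL g⁻¹ * M) rfl
    have hg' : SpecialLinearGroup.toGL g ∈ commutatorIsolator 6 (GL (Fin 2) R) := hg
    simpa using mul_mem hg' hgM

end NullCusp

section ImaginaryQuadratic

open QuadraticAlgebra

variable {a b : ℤ}

lemma four_mul_norm (z : QuadraticAlgebra ℤ a b) :
    4 * z.norm = trace z ^ 2 - (b ^ 2 + 4 * a) * z.im ^ 2 := by
  rw [QuadraticAlgebra.norm_def, trace_def]
  ring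

lemma norm_pos_of_disc_neg (h : b ^ 2 + 4 * a < 0) {z : QuadraticAlgebra ℤ a b} (hz : z ≠ 0) :
    0 < z.norm := by
  have hnorm := four_mul_norm z
  rcases eq_or_ne z.im 0 with him | him
  · have hre : z.re ≠ 0 := fun hre ↦ hz (QuadraticAlgebra.ext hre him)
    rw [trace_def, him] at hnorm
    have := sq_pos_of_ne_zero hre
    linarith
  · have := mul_pos (neg_pos.2 h) (sq_pos_of_ne_zero him)
    nlinarith [sq_nonneg (trace z)]

lemma norm_eq_one_of_isUnit (h : b ^ 2 + 4 * a < 0) {u : QuadraticAlgebra ℤ a b} (hu : IsUnit u) :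
    u.norm = 1 := by
  have hpos := norm_pos_of_disc_neg h hu.ne_zero
  rcases Int.isUnit_iff.1 (hu.map QuadraticAlgebra.norm) with hnorm | hnorm <;> lia

lemma pow_twelve_eq_one_of_isUnit (h : b ^ 2 + 4 * a < 0) {u : QuadraticAlgebra ℤ a b}
    (hu : IsUnit u) : u ^ 12 = 1 := by
  have hnorm := four_mul_norm u
  have hsq := sq_eq_trace_smul_sub_norm (z := u)
  rw [norm_eq_one_of_isUnit h hu] at hnorm hsq
  rw [map_one] at hsq
  have him : 0 ≤ -(b ^ 2 + 4 * a) * u.im ^ 2 := mul_nonneg (by lia) (sq_nonneg _)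
  obtain ⟨hl, hr⟩ : -2 ≤ trace u ∧ trace u ≤ 2 := abs_le.1 (abs_le_of_sq_le_sq (by lia) (by lia))
  have him_zero (htr : trace u ^ 2 = 4) : u.im = 0 := by
    have : (b ^ 2 + 4 * a) * u.im ^ 2 = 0 := by linarith
    simpa [h.ne] using this
  interval_cases htr : trace u
  · have hu' : u = -1 := by
      rw [trace_def, him_zero rfl] at htr
      ext
      · rw [re_neg, re_one]
        lia
      · simp [him_zero]
    rw [hu', Even.neg_one_pow (by decide)]
  · have : u ^ 3 = 1 := by linear_combination (u - 1) * hsq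
    linear_combination (u ^ 9 + u ^ 6 + u ^ 3 + 1) * this
  · linear_combination (u ^ 10 - u ^ 8 + u ^ 6 - u ^ 4 + u ^ 2 - 1) * hsq
  · have : u ^ 3 = -1 := by linear_combination (u + 1) * hsq
    linear_combination (u ^ 9 - u ^ 6 + u ^ 3 - 1) * this
  · have hu' : u = 1 := by
      rw [trace_def, him_zero rfl] at htr
      ext
      · rw [re_one]
        lia
      · simp [him_zero]
    rw [hu', one_pow]

lemma exists_coprime_abs_mul_sub_mul_le (y : ℤ) {N : ℤ} (hN : 0 < N) {q : ℕ} (hq : 0 < q) :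
    ∃ (n : ℕ) (m : ℤ), 0 < n ∧ n ≤ q ∧ m.gcd n = 1 ∧ |n * y - m * N| * (q + 1) ≤ N := by
  obtain ⟨r, hr, hrq⟩ := Real.exists_rat_abs_sub_le_and_den_le ((y : ℝ) / N) hq
  refine ⟨r.den, r.num, r.den_pos, hrq, r.reduced, ?_⟩
  have hNR : (0 : ℝ) < N := by exact_mod_cast hN
  have hden : (0 : ℝ) < r.den := by exact_mod_cast r.den_pos
  have hdiff : (y : ℝ) / N - r = ((r.den * y - r.num * N : ℤ) : ℝ) / (N * r.den) := by
    rw [Rat.cast_def]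
    push_cast
    field_simp
  rw [hdiff, abs_div, abs_of_pos (mul_pos hNR hden), div_le_div_iff₀ (by positivity)
    (by positivity), one_mul, ← mul_assoc] at hr
  have hle : |((r.den * y - r.num * N : ℤ) : ℝ)| * (q + 1) ≤ N :=
    le_of_mul_le_mul_right hr hden
  exact_mod_cast hle

lemma exists_abs_sub_mul_two_mul_le (x : ℤ) {N : ℤ} (hN : 0 < N) :
    ∃ k : ℤ, |x - k * (2 * N)| ≤ N := by
  refine ⟨(x + N) / (2 * N), abs_le.2 ?_⟩
  have hmod := Int.emod_add_mul_ediv (x + N) (2 * N)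
  have hnonneg := Int.emod_nonneg (x + N) (by lia : 2 * N ≠ 0)
  have hlt := Int.emod_lt_of_pos (x + N) (by lia : 0 < 2 * N)
  constructor <;> linarith

/-- The discs around the fractions with natural denominator at most `q` cover the plane: Dirichlet
approximation makes the imaginary part of `n * (x / y)` small, rounding the real part does the
rest. -/
lemma exists_norm_mul_sub_mul_lt (h : b ^ 2 + 4 * a < 0) {q : ℕ} (hq : 0 < q)
    (hdisc : -(b ^ 2 + 4 * a) < 3 * (q + 1) ^ 2) (x : QuadraticAlgebra ℤ a b)
    {y : QuadraticAlgebra ℤ a b} (hy : y ≠ 0) :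
    ∃ (n : ℕ) (k m : ℤ), 0 < n ∧ n ≤ q ∧ m.gcd n = 1 ∧ (⟨k, m⟩ * y - n * x).norm < y.norm := by
  have hN := norm_pos_of_disc_neg h hy
  set N := y.norm with hNy
  set z := x * star y with hz
  obtain ⟨n, m, hn, hnq, hmn, him⟩ := exists_coprime_abs_mul_sub_mul_le z.im hN hq
  obtain ⟨k, hre⟩ := exists_abs_sub_mul_two_mul_le
    (2 * (n * z.re) + b * (n * z.im - m * N)) hN
  refine ⟨n, k, m, hn, hnq, hmn, ?_⟩
  set δ := n * z.im - m * N with hδ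
  have hmul : (⟨k, m⟩ * y - n * x) * star y = ⟨k * N - n * z.re, -δ⟩ := by
    have hyy : y * star y = algebraMap ℤ _ N := (algebraMap_norm_eq_mul_star y).symm
    rw [sub_mul, mul_assoc, mul_assoc, hyy, ← hz]
    ext <;> simp [hδ]
  have hfour : 4 * ((⟨k, m⟩ * y - n * x).norm * N) =
      (2 * (n * z.re) + b * δ - k * (2 * N)) ^ 2 - (b ^ 2 + 4 * a) * δ ^ 2 := by
    rw [hNy, ← QuadraticAlgebra.norm_star y, ← map_mul, hmul, QuadraticAlgebra.norm_star,
      four_mul_norm, trace_def]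
    ring
  have hre_sq : (2 * (n * z.re) + b * δ - k * (2 * N)) ^ 2 ≤ N ^ 2 :=
    sq_le_sq.2 (by rwa [abs_of_pos hN])
  have him_sq : δ ^ 2 * (q + 1) ^ 2 ≤ N ^ 2 := by
    rw [← sq_abs δ, ← mul_pow]
    exact pow_le_pow_left₀ (by positivity) him 2
  have hdisc_im : -(b ^ 2 + 4 * a) * δ ^ 2 < 3 * N ^ 2 := by
    rcases eq_or_ne δ 0 with hδ0 | hδ0
    · rw [hδ0]
      nlinarith
    · nlinarith [sq_pos_of_ne_zero hδ0]
  nlinarith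

end ImaginaryQuadratic

section FiniteCheck

variable {R : Type*} [CommRing R] {a c p k x y : R}

/-- Matrices with first column `(a, c)` and a suitable second column have finite order modulo
scalars, or become so after multiplication by `diag(1, -1)`. -/
def TorsionCusp (a c : R) : Prop :=
  c ∣ a ^ 2 - 1 ∨ c ∣ a ^ 2 + 1 ∨ c ∣ a ^ 2 - a + 1 ∨ c ∣ a ^ 2 + a + 1

/-- The cusps `a / c` and `p / k` are related by signs, translations and inversion modulo the
denominator, which is only changed by a sign. -/
def CuspRel (a c p k : R) : Prop :=
  (k = c ∨ k = -c) ∧ (c ∣ p - a ∨ c ∣ p + a ∨ c ∣ a * p - 1 ∨ c ∣ a * p + 1)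

/-- There are matrices `A`, `X`, `P` of determinant `1` with `A * X = P` and first columns `(a, c)`,
`(x, y)` and `(p, k)`. -/
def ThreeTermRel (a c p k x y : R) : Prop :=
  a * k - c * p = y ∧ y ∣ a * x - p ∧ y ∣ c * x - k

instance [DecidableRel (α := R) (· ∣ ·)] : Decidable (TorsionCusp a c) := by
  unfold TorsionCusp
  infer_instance

instance [DecidableEq R] [DecidableRel (α := R) (· ∣ ·)] : Decidable (CuspRel a c p k) := by
  unfold CuspRel
  infer_instance

instance [DecidableEq R] [DecidableRel (α := R) (· ∣ ·)] :
    Decidable (ThreeTermRel a c p k x y) := by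
  unfold ThreeTermRel
  infer_instance

lemma TorsionCusp.nullCusp (h : TorsionCusp a c) : NullCusp a c := by
  rcases h with h | h | h | h
  · exact .of_dvd_sq_sub_one h
  · exact .of_dvd_sq_add_one h
  · exact .of_dvd_sq_sub_self_add_one h
  · simpa using (NullCusp.of_dvd_sq_sub_self_add_one (a := -a) (by simpa using h)).neg_left

lemma NullCusp.of_cuspRel (hac : NullCusp a c) (h : CuspRel a c p k) : NullCusp p k := by
  have hpc : NullCusp p c := by
    rcases h.2 with h | h | h | h
    · exact hac.of_dvd_sub h
    · exact hac.neg_left.of_dvd_sub (by simpa using h)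
    · exact hac.of_dvd_mul_sub_one h
    · refine hac.neg_left.of_dvd_mul_sub_one ?_
      rwa [neg_mul, ← neg_add', dvd_neg]
  rcases h.1 with rfl | rfl
  · exact hpc
  · exact hpc.neg_right

lemma NullCusp.of_threeTermRel {a₀ c₀ p₀ k₀ : R} (a c p k : R) (hac : NullCusp a₀ c₀)
    (hpk : NullCusp p₀ k₀)
    (h : CuspRel a₀ c₀ a c ∧ CuspRel p₀ k₀ p k ∧ ThreeTermRel a c p k x y) : NullCusp x y := by
  obtain ⟨hac', hpk', hy, hx, hk⟩ := h
  obtain ⟨g, hg, rfl, rfl⟩ := hac.of_cuspRel hac'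
  obtain ⟨h, hh, rfl, rfl⟩ := hpk.of_cuspRel hpk'
  have hdet : g 0 0 * g 1 1 - g 0 1 * g 1 0 = 1 := (det_fin_two g.1).symm.trans g.2
  refine NullCusp.of_dvd_sub (a := (g⁻¹ * h) 0 0) ⟨_, mul_mem (inv_mem hg) hh, rfl, ?_⟩ ?_
  · rw [inv_mul_apply_one_zero, hy]
  · convert dvd_sub (hx.mul_left (g 1 1)) (hk.mul_left (g 0 1)) using 1
    rw [inv_mul_apply_zero_zero]
    linear_combination -x * hdet

end FiniteCheck

section QuadraticOrder

open QuadraticAlgebra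

variable {a b : ℤ} {C n : ℕ}

lemma NullCusp.star {x y : QuadraticAlgebra ℤ a b} (h : NullCusp x y) :
    NullCusp (star x) (star y) :=
  h.map (starRingEnd _)

/-- Every cusp `(k + m * ω) / n` with `m` prime to `n` is null. -/
def NullDenominator (a b : ℤ) (n : ℕ) : Prop :=
  ∀ k m : ℤ, m.gcd n = 1 → NullCusp (⟨k, m⟩ : QuadraticAlgebra ℤ a b) n

lemma nullDenominator_one : NullDenominator a b 1 := fun k m _ ↦ by
  simpa using NullCusp.denom_one (⟨k, m⟩ : QuadraticAlgebra ℤ a b)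

theorem commutatorIsolator_GL_quadraticAlgebra_eq_top (h : b ^ 2 + 4 * a < 0) {q : ℕ}
    (hq : 0 < q) (hdisc : -(b ^ 2 + 4 * a) < 3 * (q + 1) ^ 2)
    (hnull : ∀ n, 0 < n → n ≤ q → NullDenominator a b n) :
    commutatorIsolator 6 (GL (Fin 2) (QuadraticAlgebra ℤ a b)) = ⊤ := by
  refine commutatorIsolator_GL_eq_top
    (fun u ↦ Units.ext (pow_twelve_eq_one_of_isUnit h u.isUnit)) (fun z ↦ z.norm.natAbs) ?_
  intro x y hy
  obtain ⟨n, k, m, hn, hnq, hmn, hlt⟩ := exists_norm_mul_sub_mul_lt h hq hdisc x hy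
  refine ⟨_, _, hnull n hn hnq k m hmn, Int.natAbs_lt_natAbs_of_nonneg_of_lt ?_ hlt⟩
  rcases eq_or_ne (⟨k, m⟩ * y - n * x) 0 with h₀ | h₀
  · simp [h₀]
  · exact (norm_pos_of_disc_neg h h₀).le

/-- The order `ℤ[ω]` of discriminant `1 - 4 * C`, where `ω ^ 2 = ω - C`. -/
abbrev QuadraticOrder (C : ℕ) : Type := QuadraticAlgebra ℤ (-C) 1

lemma dvd_iff_norm_dvd_mul_star {y : QuadraticAlgebra ℤ a b} (hy : y.norm ≠ 0)
    (x : QuadraticAlgebra ℤ a b) :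
    y ∣ x ↔ y.norm ∣ (x * star y).re ∧ y.norm ∣ (x * star y).im := by
  have hreg : star y ∈ nonZeroDivisors (QuadraticAlgebra ℤ a b) :=
    star_mem_nonZeroDivisors (norm_mem_nonZeroDivisors_iff.1 (mem_nonZeroDivisors_of_ne_zero hy))
  rw [← algebraMap_dvd_iff, algebraMap_norm_eq_mul_star]
  refine ⟨fun h ↦ mul_dvd_mul_right h _, fun ⟨r, hr⟩ ↦ ⟨r, ?_⟩⟩
  rw [mul_right_comm] at hr
  exact (mul_cancel_right_mem_nonZeroDivisors hreg).1 hr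

lemma QuadraticOrder.norm_ne_zero [NeZero C] {z : QuadraticOrder C} (hz : z ≠ 0) :
    z.norm ≠ 0 := by
  have := NeZero.pos C
  exact (norm_pos_of_disc_neg (by lia) hz).ne'

instance [NeZero C] : DecidableRel (α := QuadraticOrder C) (· ∣ ·) := fun y x ↦
  if hy : y = 0 then decidable_of_iff (x = 0) (by simp [hy])
  else decidable_of_iff _ (dvd_iff_norm_dvd_mul_star (QuadraticOrder.norm_ne_zero hy) x).symm

/-- The cusp `z / n` is a torsion cusp, or it is related to `s / n` or its complex conjugate for
some `s` in the list `S`. -/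
def CoveredCusp (S : List (QuadraticOrder C)) (z n : QuadraticOrder C) : Prop :=
  TorsionCusp z n ∨ ∃ s ∈ S, CuspRel s n z n ∨ CuspRel (star s) n z n

instance [NeZero C] (S : List (QuadraticOrder C)) (z n : QuadraticOrder C) :
    Decidable (CoveredCusp S z n) := by
  unfold CoveredCusp
  infer_instance

lemma CoveredCusp.nullCusp {S : List (QuadraticOrder C)} {z : QuadraticOrder C}
    (h : CoveredCusp S z n) (hS : ∀ s ∈ S, NullCusp s n) : NullCusp z n := by
  rcases h with htors | ⟨s, hs, hrel | hrel⟩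
  · exact htors.nullCusp
  · exact (hS s hs).of_cuspRel hrel
  · exact NullCusp.of_cuspRel (by simpa using (hS s hs).star) hrel

lemma nullDenominator_of_forall_lt [NeZero n] (S : List (QuadraticOrder C))
    (hS : ∀ s ∈ S, NullCusp s n)
    (h : ∀ k < n, ∀ m < n, Nat.gcd m n = 1 → CoveredCusp S ⟨k, m⟩ n) :
    NullDenominator (-C) 1 n := by
  have exists_emod (j : ℤ) : ∃ i < n, (i : ℤ) = j % n := by
    have hn : 0 < (n : ℤ) := by exact_mod_cast NeZero.pos n
    have := Int.emod_lt_of_pos j hn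
    have := Int.emod_nonneg j hn.ne'
    exact ⟨(j % n).toNat, by lia, by lia⟩
  intro k m hmn
  obtain ⟨k', hk', hk⟩ := exists_emod k
  obtain ⟨m', hm', hm⟩ := exists_emod m
  have hgcd : Nat.gcd m' n = 1 := by
    rw [← Int.gcd_natCast_natCast, hm, Int.gcd_emod, hmn]
  have hnull := (h k' hk' m' hm' hgcd).nullCusp hS
  refine hnull.of_dvd_sub ⟨⟨k / n, m / n⟩, ?_⟩
  ext
  · simp [hk, Int.emod_def]
  · simp [hm, Int.emod_def]

end QuadraticOrder

section Discriminants

open QuadraticAlgebra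

variable {C : ℕ}

lemma omega_sq_eq_omega_sub : (ω : QuadraticOrder C) ^ 2 = ω - (C : QuadraticOrder C) := by
  rw [sq, omega_mul_omega_eq_mk]
  ext <;> simp

lemma nullCusp_one_add_omega_div_three (hC : 3 ∣ C + 1) :
    NullCusp (1 + ω : QuadraticOrder C) 3 := by
  obtain ⟨r, hr⟩ := hC
  have hr' : (C : QuadraticOrder C) + 1 = 3 * r := by exact_mod_cast congrArg Nat.cast hr
  refine .of_dvd_sq_add_one ⟨1 - (r : QuadraticOrder C) + ω, ?_⟩
  linear_combination (omega_sq_eq_omega_sub (C := C)) - hr'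

lemma nullCusp_omega_div_three (hC : 3 ∣ C + 1) : NullCusp (ω : QuadraticOrder C) 3 := by
  have hnull := nullCusp_one_add_omega_div_three hC
  obtain ⟨r, hr⟩ := hC
  have hr' : (C : QuadraticOrder C) + 1 = 3 * r := by exact_mod_cast congrArg Nat.cast hr
  refine .of_dvd_mul_pred_sub_one ⟨-(r : QuadraticOrder C), ?_⟩ (by rwa [add_comm])
  linear_combination (omega_sq_eq_omega_sub (C := C)) - hr'

lemma nullCusp_one_add_omega_div_four (hC : 4 ∣ C + 3) :
    NullCusp (1 + ω : QuadraticOrder C) 4 := by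
  obtain ⟨r, hr⟩ := hC
  have hr' : (C : QuadraticOrder C) + 3 = 4 * r := by exact_mod_cast congrArg Nat.cast hr
  have homega : NullCusp (ω : QuadraticOrder C) 4 := by
    refine .of_dvd_sq_sub_self_add_one ⟨1 - (r : QuadraticOrder C), ?_⟩
    linear_combination (omega_sq_eq_omega_sub (C := C)) - hr'
  have hneg : NullCusp (-1 - ω : QuadraticOrder C) 4 := by
    refine .of_dvd_mul_pred_sub_one ⟨ω + 1 - (r : QuadraticOrder C), ?_⟩ ?_
    · linear_combination (omega_sq_eq_omega_sub (C := C)) - hr'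
    · convert homega.neg_left using 1
      ring
  convert hneg.neg_left using 1
  ring

-- The witnesses of the relations for discriminant `-163` come from a computer search; the chain
-- detours through cusps whose denominators are not natural numbers.
lemma nullCusp_omega_div_two : NullCusp (ω : QuadraticOrder 41) 2 :=
  TorsionCusp.nullCusp (by decide)

lemma nullCusp_omega_div_four : NullCusp (ω : QuadraticOrder 41) 4 :=
  TorsionCusp.nullCusp (by decide)

lemma nullCusp_omega_div_five : NullCusp (ω : QuadraticOrder 41) 5 :=
  TorsionCusp.nullCusp (by decide)

lemma nullCusp_one_add_omega_div_six : NullCusp (1 + ω : QuadraticOrder 41) 6 :=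
  .of_threeTermRel (1 - ω) (-5) (-6 - ω) (-5 + ω)
    nullCusp_omega_div_five (TorsionCusp.nullCusp (a := 11) (c := 5 - ω) (by decide)) (by decide)

lemma nullCusp_two_add_omega_div_six : NullCusp (2 + ω : QuadraticOrder 41) 6 := by
  have h : NullCusp (4 + ω : QuadraticOrder 41) 6 :=
    nullCusp_one_add_omega_div_six.star.of_cuspRel (by decide)
  refine NullCusp.of_cuspRel (a := 3 + ω) (c := 6) (.of_dvd_mul_pred_sub_one (by decide) ?_)
    (by decide)
  exact h.of_cuspRel (by decide)

lemma nullCusp_omega_div_six : NullCusp (ω : QuadraticOrder 41) 6 :=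
  .of_dvd_mul_pred_sub_one (by decide) (nullCusp_one_add_omega_div_six.of_cuspRel (by decide))

lemma nullCusp_omega_div_seven : NullCusp (ω : QuadraticOrder 41) 7 :=
  (nullCusp_omega_div_six.symm.of_cuspRel (p := 7) (k := ω) (by decide)).symm

lemma nullCusp_one_add_omega_div_seven : NullCusp (1 + ω : QuadraticOrder 41) 7 :=
  .of_threeTermRel (-7) (1 - ω) (-7) (-ω)
    nullCusp_omega_div_seven.symm.star nullCusp_omega_div_seven.symm (by decide)

lemma nullCusp_sixteen_div_four_add_omega : NullCusp (16 : QuadraticOrder 41) (4 + ω) :=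
  .of_threeTermRel ω (-4) (1 + ω) (-3)
    nullCusp_omega_div_four (nullCusp_one_add_omega_div_three (by decide)) (by decide)

lemma nullCusp_seventeen_div_five_sub_omega : NullCusp (17 : QuadraticOrder 41) (5 - ω) :=
  NullCusp.of_cuspRel (a := 18) (c := 5 - ω) (.of_dvd_mul_pred_sub_one (by decide)
    (nullCusp_sixteen_div_four_add_omega.star.of_cuspRel (by decide))) (by decide)

lemma nullCusp_one_add_two_omega_div_seven : NullCusp (1 + 2 * ω : QuadraticOrder 41) 7 :=
  .of_threeTermRel (-12 - ω) (5 - ω) ω (-4)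
    nullCusp_seventeen_div_five_sub_omega nullCusp_omega_div_four (by decide)

lemma nullCusp_ten_div_two_add_omega : NullCusp (10 : QuadraticOrder 41) (2 + ω) :=
  .of_threeTermRel (-1 - ω) (-4) (12 + ω) (5 - ω)
    (nullCusp_one_add_omega_div_four (by decide)) nullCusp_seventeen_div_five_sub_omega (by decide)

lemma nullCusp_one_add_three_omega_div_five : NullCusp (1 + 3 * ω : QuadraticOrder 41) 5 :=
  .of_threeTermRel (-3 + ω) 3 14 (-2 - ω)
    (nullCusp_omega_div_three (by decide)) nullCusp_ten_div_two_add_omega (by decide)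

lemma nullCusp_nine_div_two_add_omega : NullCusp (9 : QuadraticOrder 41) (2 + ω) :=
  .of_threeTermRel (-1 + 2 * ω) 5 (-ω) (-2)
    nullCusp_one_add_three_omega_div_five nullCusp_omega_div_two (by decide)

lemma nullCusp_one_add_four_omega_div_seven : NullCusp (1 + 4 * ω : QuadraticOrder 41) 7 :=
  .of_threeTermRel (-9) (-3 + ω) (-2 - ω) (-6)
    nullCusp_nine_div_two_add_omega.star nullCusp_two_add_omega_div_six (by decide)

lemma nullCusp_thirteen_div_omega : NullCusp (13 : QuadraticOrder 41) ω :=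
  .of_threeTermRel (7 + ω) (-3 + ω) 9 (2 + ω)
    nullCusp_ten_div_two_add_omega.star nullCusp_nine_div_two_add_omega (by decide)

lemma nullCusp_eleven_div_omega : NullCusp (11 : QuadraticOrder 41) ω :=
  .of_threeTermRel (15 - ω) (4 + ω) (1 - ω) 3
    nullCusp_sixteen_div_four_add_omega (nullCusp_omega_div_three (by decide)) (by decide)

lemma nullCusp_thirtyone_div_two_sub_two_omega : NullCusp (31 : QuadraticOrder 41) (2 - 2 * ω) :=
  .of_threeTermRel 11 (-1 + ω) 13 (-1 + ω)
    nullCusp_eleven_div_omega.star nullCusp_thirteen_div_omega.star (by decide)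

lemma nullCusp_sixteen_div_omega : NullCusp (16 : QuadraticOrder 41) ω :=
  .of_mul_signConj (b := 7 - 7 * ω) (e := 18) (by decide)
    (nullCusp_thirtyone_div_two_sub_two_omega.star.of_cuspRel (by decide))

lemma nullCusp_one_add_omega_div_five : NullCusp (1 + ω : QuadraticOrder 41) 5 :=
  .of_threeTermRel (-18 - ω) (3 - ω) 18 (-1 + ω)
    nullCusp_nine_div_two_add_omega.star nullCusp_sixteen_div_omega.star (by decide)

lemma nullCusp_two_omega_div_seven : NullCusp (2 * ω : QuadraticOrder 41) 7 :=
  .of_threeTermRel (-1 + ω) (-3) 16 ω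
    (nullCusp_omega_div_three (by decide)) nullCusp_sixteen_div_omega (by decide)

lemma nullCusp_one_add_three_omega_div_seven : NullCusp (1 + 3 * ω : QuadraticOrder 41) 7 :=
  .of_threeTermRel (-2 + 2 * ω) 7 (-3 + 2 * ω) 7
    nullCusp_two_omega_div_seven.star nullCusp_one_add_two_omega_div_seven (by decide)

lemma nullCusp_one_add_five_omega_div_seven : NullCusp (1 + 5 * ω : QuadraticOrder 41) 7 :=
  .of_threeTermRel (-3 * ω) 7 (-1 + 3 * ω) (-7)
    nullCusp_two_omega_div_seven.star nullCusp_one_add_four_omega_div_seven (by decide)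

lemma nullCusp_two_omega_div_five : NullCusp (2 * ω : QuadraticOrder 41) 5 :=
  .of_threeTermRel 11 (-1 + ω) (2 * ω) (-7)
    nullCusp_eleven_div_omega.star nullCusp_two_omega_div_seven (by decide)

lemma commutatorIsolator_GL_quadraticAlgebra_eq_top_of_lt {a b : ℤ} (h : b ^ 2 + 4 * a < 0)
    (hdisc : -12 < b ^ 2 + 4 * a) :
    commutatorIsolator 6 (GL (Fin 2) (QuadraticAlgebra ℤ a b)) = ⊤ := by
  refine commutatorIsolator_GL_quadraticAlgebra_eq_top h one_pos (by push_cast; linarith)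
    fun n hn hnq ↦ ?_
  obtain rfl : n = 1 := by lia
  exact nullDenominator_one

lemma commutatorIsolator_GL_quadraticOrder_five :
    commutatorIsolator 6 (GL (Fin 2) (QuadraticOrder 5)) = ⊤ := by
  refine commutatorIsolator_GL_quadraticAlgebra_eq_top (q := 2) (by norm_num) (by norm_num)
    (by norm_num) fun n hn hnq ↦ ?_
  interval_cases n
  · exact nullDenominator_one
  · exact nullDenominator_of_forall_lt (C := 5) [] (by simp) (by decide)

lemma commutatorIsolator_GL_quadraticOrder_eleven :
    commutatorIsolator 6 (GL (Fin 2) (QuadraticOrder 11)) = ⊤ := by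
  refine commutatorIsolator_GL_quadraticAlgebra_eq_top (q := 3) (by norm_num) (by norm_num)
    (by norm_num) fun n hn hnq ↦ ?_
  interval_cases n
  · exact nullDenominator_one
  · exact nullDenominator_of_forall_lt (C := 11) [] (by simp) (by decide)
  · exact nullDenominator_of_forall_lt (C := 11) [ω]
      (by simpa using nullCusp_omega_div_three (by decide)) (by decide +kernel)

lemma commutatorIsolator_GL_quadraticOrder_seventeen :
    commutatorIsolator 6 (GL (Fin 2) (QuadraticOrder 17)) = ⊤ := by
  refine commutatorIsolator_GL_quadraticAlgebra_eq_top (q := 4) (by norm_num) (by norm_num)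
    (by norm_num) fun n hn hnq ↦ ?_
  interval_cases n
  · exact nullDenominator_one
  · exact nullDenominator_of_forall_lt (C := 17) [] (by simp) (by decide)
  · exact nullDenominator_of_forall_lt (C := 17) [ω]
      (by simpa using nullCusp_omega_div_three (by decide)) (by decide +kernel)
  · exact nullDenominator_of_forall_lt (C := 17) [1 + ω]
      (by simpa using nullCusp_one_add_omega_div_four (by decide)) (by decide +kernel)

lemma commutatorIsolator_GL_quadraticOrder_fortyone :
    commutatorIsolator 6 (GL (Fin 2) (QuadraticOrder 41)) = ⊤ := by
  refine commutatorIsolator_GL_quadraticAlgebra_eq_top (q := 7) (by norm_num) (by norm_num)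
    (by norm_num) fun n hn hnq ↦ ?_
  interval_cases n
  · exact nullDenominator_one
  · exact nullDenominator_of_forall_lt (C := 41) [] (by simp) (by decide)
  · exact nullDenominator_of_forall_lt (C := 41) [ω]
      (by simpa using nullCusp_omega_div_three (by decide)) (by decide +kernel)
  · exact nullDenominator_of_forall_lt (C := 41) [1 + ω]
      (by simpa using nullCusp_one_add_omega_div_four (by decide)) (by decide +kernel)
  · exact nullDenominator_of_forall_lt (C := 41) [1 + ω, 2 * ω, 1 + 3 * ω]
      (by simpa using ⟨nullCusp_one_add_omega_div_five, nullCusp_two_omega_div_five,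
        nullCusp_one_add_three_omega_div_five⟩) (by decide +kernel)
  · exact nullDenominator_of_forall_lt (C := 41) [ω, 1 + ω, 2 + ω]
      (by simpa using ⟨nullCusp_omega_div_six, nullCusp_one_add_omega_div_six,
        nullCusp_two_add_omega_div_six⟩) (by decide +kernel)
  · exact nullDenominator_of_forall_lt (C := 41)
      [ω, 1 + ω, 2 * ω, 1 + 2 * ω, 1 + 3 * ω, 1 + 4 * ω, 1 + 5 * ω]
      (by simpa using ⟨nullCusp_omega_div_seven, nullCusp_one_add_omega_div_seven,
        nullCusp_two_omega_div_seven, nullCusp_one_add_two_omega_div_seven,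
        nullCusp_one_add_three_omega_div_seven, nullCusp_one_add_four_omega_div_seven,
        nullCusp_one_add_five_omega_div_seven⟩) (by decide +kernel)

theorem commutatorIsolator_GL_quadraticOrder_eq_top
    (hC : C ∈ ({1, 2, 3, 5, 11, 17, 41} : Finset ℕ)) :
    commutatorIsolator 6 (GL (Fin 2) (QuadraticOrder C)) = ⊤ := by
  simp only [Finset.mem_insert, Finset.mem_singleton] at hC
  rcases hC with rfl | rfl | rfl | rfl | rfl | rfl | rfl
  · exact commutatorIsolator_GL_quadraticAlgebra_eq_top_of_lt (by norm_num) (by norm_num)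
  · exact commutatorIsolator_GL_quadraticAlgebra_eq_top_of_lt (by norm_num) (by norm_num)
  · exact commutatorIsolator_GL_quadraticAlgebra_eq_top_of_lt (by norm_num) (by norm_num)
  · exact commutatorIsolator_GL_quadraticOrder_five
  · exact commutatorIsolator_GL_quadraticOrder_eleven
  · exact commutatorIsolator_GL_quadraticOrder_seventeen
  · exact commutatorIsolator_GL_quadraticOrder_fortyone

end Discriminants

section RingOfIntegers

open QuadraticAlgebra

variable {a b : ℤ} {K : Type*} [Field K]

lemma lift_injective_of_disc_neg {S : Type*} [CommRing S] [CharZero S] (h : b ^ 2 + 4 * a < 0)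
    (w : {w : S // w * w = a • 1 + b • w}) : Function.Injective (QuadraticAlgebra.lift w) := by
  rw [injective_iff_map_eq_zero]
  intro z hz
  by_contra hne
  have hnorm : ((z.norm : ℤ) : S) = 0 := by
    rw [← eq_intCast (algebraMap ℤ S), ← AlgHom.commutes (QuadraticAlgebra.lift w),
      algebraMap_norm_eq_mul_star, map_mul, hz, zero_mul]
  exact (norm_pos_of_disc_neg h hne).ne' (by exact_mod_cast hnorm)

lemma exists_algEquiv_of_disc_neg [CharZero K] (h : b ^ 2 + 4 * a < 0)
    (hK : Module.finrank ℚ K = 2) {w : K} (hw : w * w = a + b * w) :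
    ∃ e : QuadraticAlgebra ℚ (a : ℚ) (b : ℚ) ≃ₐ[ℚ] K, ∀ z, e z = z.re + z.im * w := by
  let φ : QuadraticAlgebra ℚ (a : ℚ) (b : ℚ) →ₐ[ℚ] K :=
    QuadraticAlgebra.lift ⟨w, by simp [hw, Algebra.smul_def]⟩
  have hφ (z) : φ z = z.re + z.im * w := by simp [φ, Algebra.smul_def]
  have : Fact (∀ r : ℚ, r ^ 2 ≠ a + b * r) := ⟨fun r hr ↦ by
    have h' : (b ^ 2 + 4 * a : ℚ) < 0 := by exact_mod_cast h
    nlinarith [sq_nonneg (2 * r - b)]⟩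
  have hinj : Function.Injective φ := φ.toRingHom.injective
  have hfin : Module.finrank ℚ (QuadraticAlgebra ℚ (a : ℚ) (b : ℚ)) = Module.finrank ℚ K := by
    rw [hK, QuadraticAlgebra.finrank_eq_two]
  have : Module.Finite ℚ K := Module.finite_of_finrank_eq_succ hK
  have hsurj : Function.Surjective φ :=
    (LinearMap.injective_iff_surjective_of_finrank_eq_finrank (f := φ.toLinearMap) hfin).1 hinj
  exact ⟨AlgEquiv.ofBijective φ ⟨hinj, hsurj⟩, hφ⟩

lemma nonempty_ringEquiv_ringOfIntegers [CharZero K] (h : b ^ 2 + 4 * a < 0)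
    (hK : Module.finrank ℚ K = 2) {w : K} (hw : w * w = a + b * w)
    (hint : ∀ z : QuadraticAlgebra ℚ (a : ℚ) (b : ℚ), IsIntegral ℤ z → ∃ x y : ℤ, z = ⟨x, y⟩) :
    Nonempty (QuadraticAlgebra ℤ a b ≃+* 𝓞 K) := by
  obtain ⟨e, he⟩ := exists_algEquiv_of_disc_neg h hK hw
  have hwint : IsIntegral ℤ w := by
    let ψ : QuadraticAlgebra ℤ a b →ₐ[ℤ] K := QuadraticAlgebra.lift ⟨w, by simpa using hw⟩
    simpa [ψ] using (Algebra.IsIntegral.isIntegral (R := ℤ) (ω : QuadraticAlgebra ℤ a b)).map ψ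
  obtain ⟨w, rfl⟩ : ∃ w' : 𝓞 K, (w' : K) = w := ⟨⟨w, hwint⟩, rfl⟩
  have hw' : w * w = a • 1 + b • w := RingOfIntegers.ext (by simpa using hw)
  refine ⟨RingEquiv.ofBijective (QuadraticAlgebra.lift ⟨w, hw'⟩)
    ⟨lift_injective_of_disc_neg h _, fun z ↦ ?_⟩⟩
  obtain ⟨x, y, hxy⟩ := hint (e.symm z) (z.isIntegral_coe.map (e.symm.toAlgHom.restrictScalars ℤ))
  refine ⟨⟨x, y⟩, RingOfIntegers.ext ?_⟩
  rw [← e.apply_symm_apply z, hxy, he]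
  simp

lemma isIntegral_rat_iff {x : ℚ} : IsIntegral ℤ x ↔ ∃ n : ℤ, x = n := by
  simp [IsIntegrallyClosed.isIntegral_iff, eq_comm]

lemma exists_int_trace_norm_of_isIntegral {a b : ℚ} {z : QuadraticAlgebra ℚ a b}
    (hz : IsIntegral ℤ z) : ∃ t n : ℤ, trace z = t ∧ z.norm = n := by
  have hstar : IsIntegral ℤ (star z) := map_isIntegral_int (starRingEnd _) hz
  have hinj := QuadraticAlgebra.algebraMap_injective (R := ℚ) (a := a) (b := b)
  obtain ⟨t, ht⟩ := isIntegral_rat_iff.1 ((isIntegral_algebraMap_iff hinj).1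
    (by rw [algebraMap_trace_eq_add_star]; exact hz.add hstar : IsIntegral ℤ (algebraMap ℚ _ _)))
  obtain ⟨n, hn⟩ := isIntegral_rat_iff.1 ((isIntegral_algebraMap_iff hinj).1
    (by rw [algebraMap_norm_eq_mul_star]; exact hz.mul hstar : IsIntegral ℤ (algebraMap ℚ _ _)))
  exact ⟨t, n, ht, hn⟩

lemma exists_int_of_squarefree_mul_sq {D M : ℤ} (hD : Squarefree D) {x : ℚ}
    (h : D * x ^ 2 = M) : ∃ t : ℤ, x = t := by
  have hDx : IsIntegral ℤ (D * x) := by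
    refine .of_pow two_pos (isIntegral_rat_iff.2 ⟨D * M, ?_⟩)
    push_cast
    rw [← h]
    ring
  obtain ⟨t, ht⟩ := isIntegral_rat_iff.1 hDx
  have hsq : t ^ 2 = D * M := by
    have : (t : ℚ) ^ 2 = D * M := by rw [← ht, ← h]; ring
    exact_mod_cast this
  obtain ⟨r, rfl⟩ := (hD.dvd_pow_iff_dvd two_ne_zero).1 ⟨M, hsq⟩
  refine ⟨r, mul_left_cancel₀ (Int.cast_ne_zero.2 hD.ne_zero : (D : ℚ) ≠ 0) ?_⟩
  exact_mod_cast ht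

lemma exists_int_coords_of_squarefree_disc (hD : Squarefree (b ^ 2 + 4 * a))
    {z : QuadraticAlgebra ℚ (a : ℚ) (b : ℚ)} (hz : IsIntegral ℤ z) : ∃ x y : ℤ, z = ⟨x, y⟩ := by
  obtain ⟨t, n, ht, hn⟩ := exists_int_trace_norm_of_isIntegral hz
  rw [trace_def] at ht
  rw [QuadraticAlgebra.norm_def] at hn
  obtain ⟨y, hy⟩ := exists_int_of_squarefree_mul_sq hD (x := z.im) (M := t ^ 2 - 4 * n) (by
    push_cast
    rw [← ht, ← hn]
    ring)
  have hty : t ^ 2 - (b ^ 2 + 4 * a) * y ^ 2 = 4 * n := by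
    have : (t : ℚ) ^ 2 - (b ^ 2 + 4 * a) * y ^ 2 = 4 * n := by
      rw [← ht, ← hn, hy]
      ring
    exact_mod_cast this
  have hdvd : (2 : ℤ) ∣ t - b * y :=
    Int.prime_two.dvd_of_dvd_pow (n := 2)
      ⟨2 * n + 2 * a * y ^ 2 + b ^ 2 * y ^ 2 - t * b * y, by linear_combination hty⟩
  obtain ⟨x, hx⟩ := hdvd
  have hxQ : (t : ℚ) - b * y = 2 * x := by exact_mod_cast hx
  exact ⟨x, y, QuadraticAlgebra.ext (by dsimp only; rw [hy] at ht; linarith) hy⟩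

lemma exists_int_coords_of_squarefree (ha : Squarefree a) (ha4 : a % 4 ≠ 1)
    {z : QuadraticAlgebra ℚ (a : ℚ) ((0 : ℤ) : ℚ)} (hz : IsIntegral ℤ z) :
    ∃ x y : ℤ, z = ⟨x, y⟩ := by
  obtain ⟨t, n, ht, hn⟩ := exists_int_trace_norm_of_isIntegral hz
  rw [trace_def] at ht
  rw [QuadraticAlgebra.norm_def] at hn
  push_cast at ht hn
  obtain ⟨r, hr⟩ := exists_int_of_squarefree_mul_sq ha (x := 2 * z.im) (M := t ^ 2 - 4 * n) (by
    push_cast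
    rw [← ht, ← hn]
    ring)
  have htr : t ^ 2 - a * r ^ 2 = 4 * n := by
    have : (t : ℚ) ^ 2 - a * r ^ 2 = 4 * n := by
      rw [← ht, ← hn, ← hr]
      ring
    exact_mod_cast this
  have ha0 : a % 4 ≠ 0 := fun ha0 ↦ by
    have := Int.isUnit_iff.1 (ha 2 (by lia))
    lia
  have heven : 2 ∣ t ∧ 2 ∣ r := by
    rcases Int.even_or_odd' t with ⟨x, rfl | rfl⟩ <;> rcases Int.even_or_odd' r with ⟨y, rfl | rfl⟩
    · exact ⟨⟨x, rfl⟩, ⟨y, rfl⟩⟩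
    all_goals
      ring_nf at htr
      lia
  obtain ⟨⟨x, rfl⟩, ⟨y, rfl⟩⟩ := heven
  push_cast at ht hr
  exact ⟨x, y, QuadraticAlgebra.ext (by dsimp only; linarith) (by dsimp only; linarith)⟩

end RingOfIntegers

section ClassNumberOne

open QuadraticAlgebra

variable {K : Type*} [Field K] [CharZero K] {d : ℕ} {s : K}

lemma nonempty_ringEquiv_ringOfIntegers_of_mod_four_ne_three (hd : Squarefree d) (hd4 : d % 4 ≠ 3)
    (hs : s ^ 2 = -(d : K)) (hK : Module.finrank ℚ K = 2) :
    Nonempty (QuadraticAlgebra ℤ (-d) 0 ≃+* 𝓞 K) := by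
  have := hd.ne_zero.bot_lt
  refine nonempty_ringEquiv_ringOfIntegers (w := s) (by lia) hK (by simp [← sq, hs])
    fun z ↦ exists_int_coords_of_squarefree ?_ (by lia)
  rwa [← Int.squarefree_natAbs, Int.natAbs_neg, Int.natAbs_natCast]

lemma nonempty_ringEquiv_ringOfIntegers_of_add_one_eq {C : ℕ} (hd : Squarefree d)
    (hC : d + 1 = 4 * C) (hs : s ^ 2 = -(d : K)) (hK : Module.finrank ℚ K = 2) :
    Nonempty (QuadraticOrder C ≃+* 𝓞 K) := by
  have hdisc : 1 ^ 2 + 4 * (-C : ℤ) = -d := by lia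
  have := hd.ne_zero.bot_lt
  have hw : (1 + s) / 2 * ((1 + s) / 2) = (-C : ℤ) + (1 : ℤ) * ((1 + s) / 2) := by
    have hC' : (d : K) + 1 = 4 * C := by exact_mod_cast hC
    push_cast
    linear_combination hs / 4 - hC' / 4
  refine nonempty_ringEquiv_ringOfIntegers (by lia) hK hw
    fun z ↦ exists_int_coords_of_squarefree_disc ?_
  rwa [hdisc, ← Int.squarefree_natAbs, Int.natAbs_neg, Int.natAbs_natCast]

lemma commutatorIsolator_GL_eq_top_of_ringEquiv {R S : Type*} [CommRing R] [CommRing S]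
    (e : R ≃+* S) {m : ℕ} (h : commutatorIsolator m (GL (Fin 2) R) = ⊤) :
    commutatorIsolator m (GL (Fin 2) S) = ⊤ := by
  refine (Subgroup.eq_top_iff' _).2 fun g ↦ ?_
  have hg : GeneralLinearGroup.map (e : R →+* S) (GeneralLinearGroup.map (e.symm : S →+* R) g) =
      g := by
    ext i j
    simp
  exact hg ▸ map_mem_commutatorIsolator _ (h ▸ Subgroup.mem_top _)

theorem commutatorIsolator_GL_ringOfIntegers_eq_top
    (hd : d ∈ ({1, 2, 3, 7, 11, 19, 43, 67, 163} : Finset ℕ)) (hs : s ^ 2 = -(d : K))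
    (hK : Module.finrank ℚ K = 2) : commutatorIsolator 6 (GL (Fin 2) (𝓞 K)) = ⊤ := by
  simp only [Finset.mem_insert, Finset.mem_singleton] at hd
  have hsq : Squarefree d := by
    have hprime : d = 1 ∨ d.Prime := by
      rcases hd with rfl | rfl | rfl | rfl | rfl | rfl | rfl | rfl | rfl <;> norm_num
    rcases hprime with rfl | hprime
    exacts [squarefree_one, hprime.prime.squarefree]
  have hd' : (0 < d ∧ d < 3) ∨ ∃ C ∈ ({1, 2, 3, 5, 11, 17, 41} : Finset ℕ), d + 1 = 4 * C := by
    rcases hd with rfl | rfl | rfl | rfl | rfl | rfl | rfl | rfl | rfl <;> decide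
  rcases hd' with ⟨hpos, hlt⟩ | ⟨C, hC, hdC⟩
  · obtain ⟨e⟩ := nonempty_ringEquiv_ringOfIntegers_of_mod_four_ne_three hsq (by lia) hs hK
    exact commutatorIsolator_GL_eq_top_of_ringEquiv e
      (commutatorIsolator_GL_quadraticAlgebra_eq_top_of_lt (by lia) (by lia))
  · obtain ⟨e⟩ := nonempty_ringEquiv_ringOfIntegers_of_add_one_eq hsq hdC hs hK
    exact commutatorIsolator_GL_eq_top_of_ringEquiv e
      (commutatorIsolator_GL_quadraticOrder_eq_top hC)

end ClassNumberOne

lemma eq_one_of_pow_six_eq_one {ℓ : ℕ} (hℓ : ℓ.Prime) (hℓ5 : 5 ≤ ℓ) {x : Multiplicative (ZMod ℓ)}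
    (hx : x ^ 6 = 1) : x = 1 := by
  have hcop : Nat.Coprime 6 ℓ :=
    ((Nat.coprime_primes Nat.prime_two hℓ).2 (by lia)).mul_left
      ((Nat.coprime_primes Nat.prime_three hℓ).2 (by lia))
  have hord : orderOf x ∣ ℓ := orderOf_dvd_of_pow_eq_one (by
    rw [← toAdd_eq_zero, toAdd_pow]
    simp)
  exact orderOf_eq_one_iff.1 (Nat.eq_one_of_dvd_coprimes hcop (orderOf_dvd_of_pow_eq_one hx) hord)

end Bianchi

theorem pgl2_hom_to_zmod_trivial_general
    (d : ℕ) (hd : d ∈ ({1, 2, 3, 7, 11, 19, 43, 67, 163} : Finset ℕ))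
    (K : Type*) [Field K] [CharZero K]
    (s : K) (hs : s ^ 2 = -(d : K)) (hK : Module.finrank ℚ K = 2)
    {A : Type*} [CommGroup A] (hA : ∀ x : A, x ^ 6 = 1 → x = 1)
    (f : GL (Fin 2) (𝓞 K) →* A) : f = 1 := by
  rw [← MonoidHom.ker_eq_top_iff, ← top_le_iff,
    ← Bianchi.commutatorIsolator_GL_ringOfIntegers_eq_top hd hs hK]
  exact Bianchi.commutatorIsolator_le_ker hA f

/-- Let `K = ℚ(√-d)` be one of the nine imaginary quadratic fields of class number one, with
ring of integers `O_K`.  For every prime `ℓ ≥ 5`, every group homomorphism from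
`PGL₂(O_K) = GL₂(O_K)/center` to the additive group `ℤ/ℓℤ` is trivial, i.e.
`H¹(PGL₂(O_K), 𝔽_ℓ) = 0`. -/
theorem pgl2_hom_to_zmod_trivial
    (d : ℕ) (hd : d ∈ ({1, 2, 3, 7, 11, 19, 43, 67, 163} : Finset ℕ))
    (K : Type) [Field K] [NumberField K]
    (s : K) (hs : s ^ 2 = -(d : K)) (hK : Module.finrank ℚ K = 2)
    (ℓ : ℕ) (hℓ : ℓ.Prime) (hℓ5 : 5 ≤ ℓ)
    (f : (GL (Fin 2) (𝓞 K) ⧸ Subgroup.center (GL (Fin 2) (𝓞 K))) →*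
      Multiplicative (ZMod ℓ)) :
    f = 1 := by
  refine QuotientGroup.monoidHom_ext _ ?_
  exact pgl2_hom_to_zmod_trivial_general d hd K s hs hK
    (fun x ↦ Bianchi.eq_one_of_pow_six_eq_one hℓ hℓ5) (f.comp (QuotientGroup.mk' _))
end

section
/- For d ∈ {11, 19, 43, 67, 163}, let K = ℚ(√−d) and let p_d(x) be the cubic polynomial x³−x²+x+1 for d=11, x³−2x−2 for d=19, x³−x²−x+3 for d=43, x³−x²−3x+5 for d=67, and x³−8x+10 for d=163 (each of discriminant −4d). Then the splitting field L of p_d over K is a Galois extension of K of degree 3 which is unramified at every prime ideal of O_K not dividing 2; moreover, it is the unique such extension: every degree-3 Galois extension of K unramified at all primes of O_K not dividing 2 is K-isomorphic to L. -/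
open NumberField Polynomial

/-!
Let `p` be an odd prime, and let `𝓞 K` be a principal ideal ring all of whose units are `p`-th
powers; for the theorem `p = 3` and the units of `𝓞 K` are `±1`.

Then `K` has no everywhere unramified Galois extension `L` of degree `p`. Let `σ` generate
`Gal(L/K)`. By Hilbert 90 a unit of norm one is `x / σ x` for some `x` in `𝓞 L`. The ideal `(x)` is
`σ`-stable, and `L/K` is unramified, so `(x)` is extended from `𝓞 K`, where every ideal is
principal: we may take `x` to be a unit, and even one of norm one, since `N x` is a `p`-th power in
`𝓞 K`. Hence `1 - σ` is surjective on the units of norm one. As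
`1 + σ + ⋯ + σ ^ (p - 1) ≡ (σ - 1) ^ (p - 1)` modulo `p` kills these units, each of them is a `p`-th
power, and then so is every unit of `𝓞 L`; this contradicts Dirichlet's unit theorem.

Uniqueness: let `N` be the compositum of two Galois extensions of degree `p` which are unramified
outside a prime `𝔮` not dividing `p`. Its group has exponent `p`, and the inertia group at `𝔮` is
tame, so it is cyclic. Were it a proper subgroup, it would lie in a normal subgroup of index `p`,
whose fixed field would be unramified everywhere. So `Gal(N/K)` is cyclic of exponent `p`, and the
two extensions coincide with `N`.

Existence: a nontrivial element of an inertia group permutes the roots of the cubic cyclically, so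
it makes all three congruent modulo the corresponding prime, which then contains both
`b ^ 2 - 3 * c` and the discriminant. For `p_d` a combination of these is a power of `2`.
-/

section Inertia

theorem card_subgroupOf_mul_relIndex {G : Type*} [Group G] (I H : Subgroup G) :
    Nat.card (I.subgroupOf H) * H.relIndex I = Nat.card I := by
  have hcard : Nat.card (I.subgroupOf H) = Nat.card (H ⊓ I : Subgroup G) := by
    rw [← Subgroup.inf_subgroupOf_left]
    exact Nat.card_congr (Subgroup.subgroupOfEquivOfLe inf_le_left).toEquiv
  simpa [hcard] using Subgroup.relIndex_inf_mul_relIndex ⊥ H I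

variable (A : Type*) {B C G : Type*} [CommRing A] [IsDomain A] [Module.Finite ℤ A] [CharZero A]
  [CommRing C] [IsDomain C] [Algebra A C] [Module.Finite A C] [Module.Flat A C]
  [Group G] [Finite G] [MulSemiringAction G C] [IsGaloisGroup G A C]

theorem card_inertia_eq_ramificationIdx (Q : Ideal C) [Q.IsPrime] :
    Nat.card (Q.inertia G) = Q.ramificationIdx A := by
  rw [Ideal.card_inertia_eq_ramificationIdxIn (Q.under A) Q,
    Ideal.ramificationIdxIn_eq_ramificationIdx (Q.under A) Q G]

theorem ramificationIdx_under_eq_relIndex_inertia [CommRing B] [IsDomain B] [Module.Finite ℤ B]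
    [CharZero B] [Algebra A B] [Algebra B C] [Module.Finite B C] [Module.Flat B C]
    [IsScalarTower A B C] (H : Subgroup G) [IsGaloisGroup H B C] (Q : Ideal C) [Q.IsPrime] :
    (Q.under B).ramificationIdx A = H.relIndex (Q.inertia G) := by
  have htower := Ideal.ramificationIdx_tower (R := A) (Q.under B) Q
  rw [← card_inertia_eq_ramificationIdx A (G := G), ← card_inertia_eq_ramificationIdx B (G := H),
    ← card_subgroupOf_mul_relIndex _ H, mul_comm] at htower
  exact (Nat.eq_of_mul_eq_mul_right Nat.card_pos htower).symm

theorem isUnramifiedAt_under_iff_inertia_le [CommRing B] [IsDomain B] [Module.Finite ℤ B]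
    [CharZero B] [Algebra A B] [Module.Finite A B] [Algebra B C] [Module.Finite B C]
    [Module.Flat B C] [IsScalarTower A B C] (H : Subgroup G) [IsGaloisGroup H B C]
    (Q : Ideal C) [Q.IsPrime] :
    Algebra.IsUnramifiedAt A (Q.under B) ↔ Q.inertia G ≤ H := by
  rw [← Ideal.ramificationIdx_eq_one_iff, ramificationIdx_under_eq_relIndex_inertia A H,
    Subgroup.relIndex_eq_one]

theorem isUnramifiedAt_iff_inertia_eq_bot (Q : Ideal C) [Q.IsPrime] :
    Algebra.IsUnramifiedAt A Q ↔ Q.inertia G = ⊥ := by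
  rw [← Ideal.ramificationIdx_eq_one_iff, ← card_inertia_eq_ramificationIdx A (G := G),
    Subgroup.card_eq_one]

end Inertia

section StableIdeals

open scoped Pointwise

variable {R S G : Type*} [CommRing R] [IsDedekindDomain R] [CommRing S] [IsDedekindDomain S]
  [Algebra R S] [FaithfulSMul R S] [Module.Finite R S] [Algebra.FormallyUnramified R S]
  [Group G] [Finite G] [MulSemiringAction G S] [IsGaloisGroup G R S]

theorem map_under_dvd_of_forall_smul_eq {I Q : Ideal S} (hI : ∀ σ : G, σ • I = I) [Q.IsPrime]
    (hQ : Q ≠ ⊥) (hIQ : I ≤ Q) : (Q.under R).map (algebraMap R S) ∣ I := by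
  have hP : Q.under R ≠ ⊥ := fun h ↦ hQ (Ideal.eq_bot_of_comap_eq_bot h)
  have : (Q.under R).IsMaximal := Ideal.IsPrime.isMaximal inferInstance hP
  rw [Ideal.map_algebraMap_eq_finsetProd_pow hP]
  rw [Finset.prod_congr rfl fun P h ↦ by
    have := (Set.mem_toFinset.mp h).1
    rw [Ideal.ramificationIdx_eq_one, pow_one]]
  refine Finset.prod_primes_dvd I (fun P h ↦ ?_) fun P h ↦ ?_
  · have := Set.mem_toFinset.mp h
    exact Ideal.prime_of_isPrime (Ideal.ne_bot_of_mem_primesOver hP this) this.1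
  · obtain ⟨_, _⟩ := Set.mem_toFinset.mp h
    obtain ⟨σ, rfl⟩ := Ideal.exists_smul_eq_of_isGaloisGroup (Q.under R) Q P G
    rw [Ideal.dvd_iff_le, ← hI σ]
    exact smul_mono_right σ hIQ

theorem exists_map_eq_of_forall_smul_eq {I : Ideal S} (hI : ∀ σ : G, σ • I = I) :
    ∃ J : Ideal R, J.map (algebraMap R S) = I := by
  induction I using IsNoetherian.induction with
  | hgt I ih =>
  rcases eq_or_ne I ⊥ with rfl | hI0
  · exact ⟨⊥, Ideal.map_bot⟩
  rcases eq_or_ne I ⊤ with rfl | hItop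
  · exact ⟨⊤, Ideal.map_top _⟩
  obtain ⟨Q, hQ, hIQ⟩ := Ideal.exists_le_maximal I hItop
  have hQ0 : Q ≠ ⊥ := ne_bot_of_le_ne_bot hI0 hIQ
  obtain ⟨J, rfl⟩ := map_under_dvd_of_forall_smul_eq (R := R) hI hQ0 hIQ
  set P := (Q.under R).map (algebraMap R S)
  have hP0 : P ≠ 0 := left_ne_zero_of_mul hI0
  have hJ (σ : G) : σ • J = J := by
    have hP : σ • P = P := by
      rw [Ideal.pointwise_smul_def, Ideal.map_map]
      congr 1
      ext x
      exact smul_algebraMap σ x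
    exact mul_left_cancel₀ hP0 (by rw [← hI σ, smul_mul', hP])
  have hlt : P * J < J := by
    have hle : P * J ≤ J := Ideal.mul_le_right
    refine hle.lt_of_ne fun h ↦ hQ.ne_top (top_le_iff.mp ?_)
    have hPtop : P = 1 := mul_right_cancel₀ (right_ne_zero_of_mul hI0) (h.trans (one_mul J).symm)
    exact (hPtop.trans Ideal.one_eq_top).ge.trans Ideal.map_comap_le
  obtain ⟨J', rfl⟩ := ih J hlt hJ
  exact ⟨Q.under R * J', Ideal.map_mul _ _ _⟩

end StableIdeals

section Units

theorem exists_sum_range_pow_eq {A : Type*} [Ring A] {p : ℕ} (hp : p.Prime) (x : A) :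
    ∃ y : A, ∑ i ∈ Finset.range p, x ^ i = (x - 1) ^ (p - 1) + p * y := by
  obtain ⟨r, hr⟩ := exists_add_pow_prime_eq hp (X - 1 : ℤ[X]) 1
  refine ⟨aeval x r, ?_⟩
  have hsum : ∑ i ∈ Finset.range p, (X : ℤ[X]) ^ i = (X - 1) ^ (p - 1) + C (p : ℤ) * r := by
    refine mul_right_cancel₀ (X_sub_C_ne_zero (1 : ℤ)) ?_
    rw [C_1, geom_sum_mul, add_mul, pow_sub_one_mul hp.ne_zero]
    rw [map_natCast]
    linear_combination hr
  simpa using congr(aeval x $hsum)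

theorem exists_nsmul_eq_of_sum_range_pow_eq_zero {A : Type*} [AddCommGroup A] {p : ℕ}
    (hp : p.Prime) (s : AddMonoid.End A)
    (hs : ∀ u, (∑ i ∈ Finset.range p, s ^ i) u = 0 →
      ∃ v, (∑ i ∈ Finset.range p, s ^ i) v = 0 ∧ u + s v = v)
    {u : A} (hu : (∑ i ∈ Finset.range p, s ^ i) u = 0) : ∃ w, p • w = u := by
  have hiter (n : ℕ) : ∃ v, (∑ i ∈ Finset.range p, s ^ i) v = 0 ∧ ((s - 1) ^ n) v = u := by
    induction n with
    | zero => exact ⟨u, hu, rfl⟩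
    | succ n ih =>
      obtain ⟨v, hv, rfl⟩ := ih
      obtain ⟨w, hw, hvw⟩ := hs v hv
      have hv_eq : v = (s - 1) (-w) := by
        rw [map_neg, eq_neg_iff_add_eq_zero]
        exact (add_sub_assoc v (s w) w).symm.trans (sub_eq_zero.mpr hvw)
      exact ⟨-w, by rw [map_neg, hw, neg_zero], by rw [pow_succ, hv_eq]; rfl⟩
  obtain ⟨v, hv, rfl⟩ := hiter (p - 1)
  obtain ⟨y, hy⟩ := exists_sum_range_pow_eq hp s
  refine ⟨-y v, ?_⟩
  replace hv : ((s - 1) ^ (p - 1)) v + (p * y : AddMonoid.End A) v = 0 := by rwa [hy] at hv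
  rw [smul_neg, neg_eq_iff_add_eq_zero, add_comm, ← hv, ← nsmul_eq_mul]
  rfl

theorem finrank_int_eq_zero_of_forall_exists_nsmul_eq {A : Type*} [AddCommGroup A]
    [Module.Finite ℤ A] {n : ℕ} (hn : n ≠ 1) (h : ∀ a : A, ∃ b, n • b = a) :
    Module.finrank ℤ A = 0 := by
  obtain ⟨r, hr, hr0⟩ := Submodule.exists_sub_one_mem_and_smul_eq_zero_of_fg_of_le_smul
    (Ideal.span {(n : ℤ)}) (⊤ : Submodule ℤ A) Module.Finite.fg_top fun a _ ↦ by
      obtain ⟨b, rfl⟩ := h a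
      rw [← natCast_zsmul]
      exact Submodule.smul_mem_smul (Ideal.mem_span_singleton_self _) trivial
  refine Module.finrank_eq_zero_iff.mpr fun a ↦ ⟨r, ?_, hr0 a trivial⟩
  rintro rfl
  rw [Ideal.mem_span_singleton, zero_sub, dvd_neg, ← Nat.cast_one, Int.natCast_dvd_natCast] at hr
  exact hn (Nat.dvd_one.mp hr)

theorem not_forall_exists_pow_eq_units {L : Type*} [Field L] [NumberField L]
    (hrank : Units.rank L ≠ 0) {n : ℕ} (hn : n ≠ 1) :
    ¬ ∀ u : (𝓞 L)ˣ, ∃ w, w ^ n = u := fun h ↦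
  hrank (Units.finrank_eq L ▸
    finrank_int_eq_zero_of_forall_exists_nsmul_eq (A := Additive (𝓞 L)ˣ) hn h)

theorem unitsRank_ne_zero_of_two_lt_finrank {L : Type*} [Field L] [NumberField L]
    (h : 2 < Module.finrank ℚ L) : Units.rank L ≠ 0 := by
  have hplaces := InfinitePlace.card_add_two_mul_card_eq_rank L
  have hcard := InfinitePlace.card_eq_nrRealPlaces_add_nrComplexPlaces L
  rw [Units.rank]
  omega

theorem algebraMap_norm_eq_prod_range {K L : Type*} [Field K] [Field L] [Algebra K L]
    [FiniteDimensional K L] [IsGalois K L] {σ : Gal(L/K)} (hσ : ∀ τ, τ ∈ Subgroup.zpowers σ)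
    (x : L) :
    algebraMap K L (Algebra.norm K x) =
      ∏ i ∈ Finset.range (Module.finrank K L), (σ ^ i) x := by
  classical
  rw [Algebra.norm_eq_prod_automorphisms, ← IsCyclic.image_range_orderOf hσ,
    Finset.prod_image (by simpa using pow_injOn_Iio_orderOf (x := σ)),
    orderOf_eq_card_of_forall_mem_zpowers hσ, IsGalois.card_aut_eq_finrank]

variable {K L : Type*} [Field K] [Field L] [Algebra K L]

theorem exists_norm_mul_algebraMap_eq_one
    (hu : ∀ ε : (𝓞 K)ˣ, ∃ w, w ^ Module.finrank K L = ε) (u : (𝓞 L)ˣ) :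
    ∃ w : (𝓞 K)ˣ, RingOfIntegers.norm K (u * algebraMap (𝓞 K) (𝓞 L) w : 𝓞 L) = 1 := by
  obtain ⟨w, hw⟩ := hu (Units.map (RingOfIntegers.norm K) u)
  refine ⟨w⁻¹, ?_⟩
  rw [map_mul, RingOfIntegers.norm_algebraMap, ← Units.coe_map, ← hw]
  simp [← mul_pow]

/-- The action of `σ` on the unit group of `𝓞 L`, written additively so that polynomials in `σ`
act on units. -/
def unitsAction (σ : Gal(L/K)) : AddMonoid.End (Additive (𝓞 L)ˣ) :=
  MonoidHom.toAdditive (Units.map (MulSemiringAction.toRingHom Gal(L/K) (𝓞 L) σ))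

theorem coe_unitsAction_pow_apply (σ : Gal(L/K)) (i : ℕ) (u : (𝓞 L)ˣ) :
    (((unitsAction σ ^ i) (.ofMul u)).toMul : 𝓞 L) = σ ^ i • (u : 𝓞 L) := by
  induction i with
  | zero => simp
  | succ i ih => rw [pow_succ', pow_succ', mul_smul, ← ih]; rfl

end Units

section UnramifiedPrimeDegree

open scoped Pointwise

variable {K L : Type} [Field K] [NumberField K] [Field L] [NumberField L] [Algebra K L]
  [IsGalois K L] {σ : Gal(L/K)}

theorem sum_range_unitsAction_pow_eq_zero_iff (hσ : ∀ τ, τ ∈ Subgroup.zpowers σ) (u : (𝓞 L)ˣ) :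
    (∑ i ∈ Finset.range (Module.finrank K L), unitsAction σ ^ i) (.ofMul u) = 0 ↔
      RingOfIntegers.norm K (u : 𝓞 L) = 1 := by
  have hprod : (((∑ i ∈ Finset.range (Module.finrank K L),
      unitsAction σ ^ i) (.ofMul u)).toMul : 𝓞 L) =
      algebraMap (𝓞 K) (𝓞 L) (RingOfIntegers.norm K (u : 𝓞 L)) := by
    ext
    have happly : (∑ i ∈ Finset.range (Module.finrank K L), unitsAction σ ^ i) (.ofMul u) =
        ∑ i ∈ Finset.range (Module.finrank K L), (unitsAction σ ^ i) (.ofMul u) :=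
      AddMonoidHom.finsetSum_apply _ _ _
    rw [RingOfIntegers.coe_algebraMap_norm, algebraMap_norm_eq_prod_range hσ, happly, toMul_sum,
      Units.coe_prod, RingOfIntegers.coe_eq_algebraMap, map_prod]
    exact Finset.prod_congr rfl fun i _ ↦
      congr(algebraMap (𝓞 L) L $(coe_unitsAction_pow_apply σ i u))
  rw [← map_eq_one_iff _ (FaithfulSMul.algebraMap_injective (𝓞 K) (𝓞 L)), ← hprod,
    Units.val_eq_one, toMul_eq_one]

theorem exists_mul_smul_eq_self_of_norm_eq_one [IsPrincipalIdealRing (𝓞 K)]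
    [Algebra.FormallyUnramified (𝓞 K) (𝓞 L)] (hσ : ∀ τ, τ ∈ Subgroup.zpowers σ) {u : (𝓞 L)ˣ}
    (hu : RingOfIntegers.norm K (u : 𝓞 L) = 1) :
    ∃ v : (𝓞 L)ˣ, u * σ • (v : 𝓞 L) = v := by
  obtain ⟨x, hx0, hx⟩ : ∃ x : 𝓞 L, x ≠ 0 ∧ u * σ • x = x := by
    have hnorm : Algebra.norm K (algebraMap (𝓞 L) L u) = 1 :=
      congr(algebraMap (𝓞 K) K $hu).trans (map_one _)
    have : IsCyclic Gal(L/K) := ⟨σ, hσ⟩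
    obtain ⟨x, hx0, hx⟩ := groupCohomology.exists_mul_galRestrict_of_norm_eq_one
      (A := 𝓞 K) (L := L) hσ hnorm
    refine ⟨x, hx0, .trans ?_ hx⟩
    congr 1
    ext
    exact (algebraMap_galRestrict_apply (𝓞 K) σ x).symm
  have hstable (τ : Gal(L/K)) : τ • Ideal.span {x} = Ideal.span {x} := by
    suffices σ ∈ MulAction.stabilizer Gal(L/K) (Ideal.span {x}) from
      Subgroup.zpowers_le.mpr this (hσ τ)
    rw [MulAction.mem_stabilizer_iff, Ideal.pointwise_smul_def, Ideal.map_span,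
      Set.image_singleton]
    exact Ideal.span_singleton_eq_span_singleton.mpr ⟨u, (mul_comm _ _).trans hx⟩
  obtain ⟨J, hJ⟩ := exists_map_eq_of_forall_smul_eq (R := 𝓞 K) hstable
  obtain ⟨a, rfl⟩ := IsPrincipalIdealRing.principal J
  rw [Ideal.submodule_span_eq, Ideal.map_span, Set.image_singleton,
    Ideal.span_singleton_eq_span_singleton] at hJ
  obtain ⟨v, rfl⟩ := hJ
  refine ⟨v, mul_left_cancel₀ (left_ne_zero_of_mul hx0) ?_⟩
  rwa [smul_mul', smul_algebraMap, mul_left_comm] at hx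

theorem exists_pow_eq_of_formallyUnramified [IsPrincipalIdealRing (𝓞 K)]
    [Algebra.FormallyUnramified (𝓞 K) (𝓞 L)] (hp : (Module.finrank K L).Prime)
    (hK : ∀ ε : (𝓞 K)ˣ, ∃ w, w ^ Module.finrank K L = ε) (u : (𝓞 L)ˣ) :
    ∃ w, w ^ Module.finrank K L = u := by
  have : Fact (Module.finrank K L).Prime := ⟨hp⟩
  obtain ⟨σ, hσ⟩ := (isCyclic_of_prime_card (IsGalois.card_aut_eq_finrank K L)).exists_generator
  have key {v : (𝓞 L)ˣ} (hv : RingOfIntegers.norm K (v : 𝓞 L) = 1) :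
      ∃ w, w ^ Module.finrank K L = v := by
    refine exists_nsmul_eq_of_sum_range_pow_eq_zero hp (unitsAction σ) (fun u hu ↦ ?_)
      ((sum_range_unitsAction_pow_eq_zero_iff hσ v).mpr hv)
    obtain ⟨v, hv⟩ := exists_mul_smul_eq_self_of_norm_eq_one hσ
      ((sum_range_unitsAction_pow_eq_zero_iff hσ u.toMul).mp hu)
    obtain ⟨w, hw⟩ := exists_norm_mul_algebraMap_eq_one hK v
    set v' : (𝓞 L)ˣ := v * Units.map (algebraMap (𝓞 K) (𝓞 L)) w
    have hv' : u.toMul * σ • (v' : 𝓞 L) = v' := by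
      rw [Units.val_mul, smul_mul', ← mul_assoc, hv]
      exact congr(v * $(smul_algebraMap σ (w : 𝓞 K)))
    exact ⟨.ofMul v', (sum_range_unitsAction_pow_eq_zero_iff hσ v').mpr hw, Units.ext hv'⟩
  obtain ⟨w, hw⟩ := exists_norm_mul_algebraMap_eq_one hK u
  obtain ⟨z, hz⟩ := key (v := u * Units.map (algebraMap (𝓞 K) (𝓞 L)) w) hw
  obtain ⟨t, rfl⟩ := hK w
  refine ⟨z * (Units.map (algebraMap (𝓞 K) (𝓞 L)) t)⁻¹, ?_⟩
  rw [mul_pow, hz, inv_pow, map_pow, mul_inv_cancel_right]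

theorem not_formallyUnramified_ringOfIntegers [IsPrincipalIdealRing (𝓞 K)]
    (hp : (Module.finrank K L).Prime) (hp2 : Module.finrank K L ≠ 2)
    (hK : ∀ ε : (𝓞 K)ˣ, ∃ w, w ^ Module.finrank K L = ε) :
    ¬ Algebra.FormallyUnramified (𝓞 K) (𝓞 L) := by
  intro
  have hdeg : 2 < Module.finrank ℚ L := by
    rw [← Module.finrank_mul_finrank ℚ K L]
    exact (lt_of_le_of_ne hp.two_le hp2.symm).trans_le
      (Nat.le_mul_of_pos_left _ Module.finrank_pos)
  exact not_forall_exists_pow_eq_units (unitsRank_ne_zero_of_two_lt_finrank hdeg) hp.ne_one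
    (exists_pow_eq_of_formallyUnramified hp hK)

end UnramifiedPrimeDegree

section TameInertia

open scoped Pointwise

variable {S G : Type*} [CommRing S] [Group G] [MulSemiringAction G S] {Q : Ideal S} {σ : G}

theorem smul_mem_pow_of_mem_inertia (hσ : σ ∈ Q.inertia G) {n : ℕ} {x : S} (hx : x ∈ Q ^ n) :
    σ • x ∈ Q ^ n := by
  have hQ : σ • Q ^ n = Q ^ n := by rw [smul_pow', Ideal.inertia_le_stabilizer (M := G) Q hσ]
  exact hQ ▸ Ideal.smul_mem_pointwise_smul σ x _ hx

theorem smul_sub_self_mem_pow_succ (hσ : σ ∈ Q.inertia G) (hQ : ∀ a ∈ Q, σ • a - a ∈ Q ^ 2)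
    (n : ℕ) : ∀ a ∈ Q ^ n, σ • a - a ∈ Q ^ (n + 1) := by
  induction n with
  | zero => simpa using fun a ↦ hσ a
  | succ n ih =>
    intro a ha
    rw [pow_succ] at ha
    induction ha using Submodule.mul_induction_on' with
    | mem_mul_mem a ha b hb =>
      have hab : σ • (a * b) - a * b = σ • a * (σ • b - b) + (σ • a - a) * b := by
        rw [smul_mul']
        ring
      rw [hab]
      refine Ideal.add_mem _ ?_ ?_
      · rw [add_assoc, pow_add]
        exact Ideal.mul_mem_mul (smul_mem_pow_of_mem_inertia hσ ha) (hQ b hb)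
      · rw [pow_succ]
        exact Ideal.mul_mem_mul (ih a ha) hb
    | add a _ b _ ha hb =>
      rw [smul_add, add_sub_add_comm]
      exact Ideal.add_mem _ ha hb

theorem mul_smul_sub_mul_mem_sq {π : S} (hπ : π ∈ Q) {τ : G} (hσ : σ ∈ Q.inertia G) {c d : S}
    (hc : σ • π - c * π ∈ Q ^ 2) (hd : τ • π - d * π ∈ Q ^ 2) :
    (σ * τ) • π - c * d * π ∈ Q ^ 2 := by
  have hsplit : (σ * τ) • π - c * d * π =
      σ • (τ • π - d * π) + (σ • d - d) * σ • π + d * (σ • π - c * π) := by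
    rw [mul_smul, smul_sub, smul_mul']
    ring
  have hσd : (σ • d - d) * σ • π ∈ Q ^ 2 := by
    rw [pow_two]
    refine Ideal.mul_mem_mul (hσ d) ?_
    simpa using smul_mem_pow_of_mem_inertia (n := 1) hσ (by simpa using hπ)
  rw [hsplit]
  exact Ideal.add_mem _ (Ideal.add_mem _ (smul_mem_pow_of_mem_inertia hσ hd) hσd)
    (Ideal.mul_mem_left _ d hc)

variable [IsDedekindDomain S] [Q.IsPrime]

theorem smul_sub_self_mem_pow_of_pow_eq_one (hσ : σ ∈ Q.inertia G)
    (hQ : ∀ a ∈ Q, σ • a - a ∈ Q ^ 2) {m : ℕ} (hm : σ ^ m = 1) (hmQ : (m : S) ∉ Q) (x : S)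
    (n : ℕ) : σ • x - x ∈ Q ^ n := by
  induction n with
  | zero => simp
  | succ n ih =>
    -- Modulo `Q ^ (n + 1)` every `σ ^ i` fixes `w`, but the sum of the `σ ^ i w` telescopes to `0`.
    set w := σ • x - x
    have hpow (i : ℕ) : σ ^ i • w - w ∈ Q ^ (n + 1) := by
      induction i with
      | zero => simp
      | succ i hi =>
        rw [← sub_add_sub_cancel _ (σ • w), pow_succ' σ, mul_smul, ← smul_sub]
        exact Ideal.add_mem _ (smul_mem_pow_of_mem_inertia hσ hi)
          (smul_sub_self_mem_pow_succ hσ hQ n w ih)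
    have htrace : ∑ i ∈ Finset.range m, σ ^ i • w = 0 := by
      have htelescope := Finset.sum_range_sub (fun i ↦ σ ^ i • x) m
      simpa only [w, smul_sub, ← mul_smul, ← pow_succ, hm, pow_zero, sub_self] using htelescope
    have hmw : (m : S) * w ∈ Q ^ (n + 1) := by
      have hsum := Ideal.sum_mem _ fun i (_ : i ∈ Finset.range m) ↦ hpow i
      rw [Finset.sum_sub_distrib, htrace, zero_sub, Ideal.neg_mem_iff] at hsum
      simpa using hsum
    exact (Ideal.IsPrime.mul_mem_pow Q hmw).resolve_left hmQ

theorem eq_one_of_smul_sub_self_mem_sq [FaithfulSMul G S] (hσ : σ ∈ Q.inertia G)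
    (hQ : ∀ a ∈ Q, σ • a - a ∈ Q ^ 2) {m : ℕ} (hm : σ ^ m = 1) (hmQ : (m : S) ∉ Q) : σ = 1 := by
  refine eq_of_smul_eq_smul fun x : S ↦ ?_
  have hx : σ • x - x ∈ ⨅ n : ℕ, Q ^ n := (Ideal.mem_iInf).mpr
    (smul_sub_self_mem_pow_of_pow_eq_one hσ hQ hm hmQ x)
  rw [Ideal.iInf_pow_eq_bot_of_isDomain Q Ideal.IsPrime.ne_top', Ideal.mem_bot, sub_eq_zero] at hx
  rw [hx, one_smul]

theorem exists_sub_mul_mem_sq (hQ0 : Q ≠ ⊥) {π : S} (hπ : π ∈ Q) (hπ2 : π ∉ Q ^ 2) {a : S}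
    (ha : a ∈ Q) : ∃ c, a - c * π ∈ Q ^ 2 := by
  obtain ⟨c, e, he, rfl⟩ := Ideal.exists_mul_add_mem_pow_succ (P := Q) (i := 1) hQ0 π a
    (by rwa [pow_one]) hπ2 (by rwa [pow_one])
  exact ⟨c, by simpa [mul_comm] using he⟩

theorem mk_eq_mk_of_sub_mul_mem_sq {π : S} (hπ2 : π ∉ Q ^ 2) {a c d : S}
    (hc : a - c * π ∈ Q ^ 2) (hd : a - d * π ∈ Q ^ 2) :
    Ideal.Quotient.mk Q c = Ideal.Quotient.mk Q d := by
  have h : (c - d) * π ∈ Q ^ 2 := by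
    convert Ideal.sub_mem _ hd hc using 1
    ring
  exact Ideal.Quotient.eq.mpr ((Ideal.IsPrime.mul_mem_pow Q h).resolve_right hπ2)

-- The character `χ` is `σ ↦ σ π / π` modulo `Q`; it is injective when the inertia is tame.
theorem exists_inertia_hom (hQ0 : Q ≠ ⊥) {π : S} (hπ : π ∈ Q) (hπ2 : π ∉ Q ^ 2) :
    ∃ χ : Q.inertia G →* S ⧸ Q, ∀ σ c, χ σ = Ideal.Quotient.mk Q c →
      (σ : G) • π - c * π ∈ Q ^ 2 := by
  have hex (σ : Q.inertia G) : ∃ c : S, (σ : G) • π - c * π ∈ Q ^ 2 :=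
    exists_sub_mul_mem_sq hQ0 hπ hπ2 <| by
      simpa using smul_mem_pow_of_mem_inertia (n := 1) σ.2 (by simpa using hπ)
  choose c hc using hex
  refine ⟨⟨⟨fun σ ↦ Ideal.Quotient.mk Q (c σ), ?_⟩, fun σ τ ↦ ?_⟩, fun σ d hd ↦ ?_⟩
  · exact mk_eq_mk_of_sub_mul_mem_sq hπ2 (hc 1) (by simp)
  · rw [← map_mul]
    exact mk_eq_mk_of_sub_mul_mem_sq hπ2 (hc (σ * τ))
      (mul_smul_sub_mul_mem_sq hπ σ.2 (hc σ) (hc τ))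
  · have hdiff : (c σ - d) * π ∈ Q ^ 2 := by
      rw [pow_two]
      exact Ideal.mul_mem_mul (Ideal.Quotient.eq.mp hd) hπ
    convert Ideal.add_mem _ (hc σ) hdiff using 1
    ring

theorem smul_sub_self_mem_sq_of_uniformizer (hQ0 : Q ≠ ⊥) {π : S} (hπ : π ∈ Q) (hπ2 : π ∉ Q ^ 2)
    (hσ : σ ∈ Q.inertia G) (hσπ : σ • π - π ∈ Q ^ 2) {a : S} (ha : a ∈ Q) :
    σ • a - a ∈ Q ^ 2 := by
  obtain ⟨c, hc⟩ := exists_sub_mul_mem_sq hQ0 hπ hπ2 ha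
  have hσc : (σ • c - c) * π ∈ Q ^ 2 := by
    rw [pow_two]
    exact Ideal.mul_mem_mul (hσ c) hπ
  have hsplit : σ • a - a = σ • (a - c * π) - (a - c * π) + σ • c * (σ • π - π) +
      (σ • c - c) * π := by
    rw [smul_sub, smul_mul']
    ring
  rw [hsplit]
  exact Ideal.add_mem _ (Ideal.add_mem _ (Ideal.sub_mem _ (smul_mem_pow_of_mem_inertia hσ hc) hc)
    (Ideal.mul_mem_left _ _ hσπ)) hσc

theorem isCyclic_inertia_of_card_notMem [FaithfulSMul G S] [Finite G] (hQ0 : Q ≠ ⊥)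
    (htame : (Nat.card (Q.inertia G) : S) ∉ Q) : IsCyclic (Q.inertia G) := by
  obtain ⟨π, hπ, hπ2⟩ := Ideal.exists_mem_pow_notMem_pow_succ Q hQ0 Ideal.IsPrime.ne_top' 1
  rw [pow_one] at hπ
  obtain ⟨χ, hχ⟩ := exists_inertia_hom (G := G) hQ0 hπ hπ2
  refine isCyclic_of_injective_ringHom χ ((injective_iff_map_eq_one χ).mpr fun σ hσ ↦ ?_)
  have hσπ : (σ : G) • π - π ∈ Q ^ 2 := by simpa using hχ σ 1 (by rw [hσ, map_one])
  have hpow : (σ : G) ^ Nat.card (Q.inertia G) = 1 := by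
    rw [← Subgroup.coe_pow, pow_card_eq_one', Subgroup.coe_one]
  exact Subtype.ext <| eq_one_of_smul_sub_self_mem_sq σ.2
    (fun a ↦ smul_sub_self_mem_sq_of_uniformizer hQ0 hπ hπ2 σ.2 hσπ) hpow htame

end TameInertia

section CyclicGaloisGroup

open scoped Pointwise

theorem exists_normal_index_eq_of_ne_top {G : Type*} [Group G] [Finite G] {p : ℕ} (hp : p.Prime)
    (hG : IsPGroup p G) {I : Subgroup G} (hI : I ≠ ⊤) :
    ∃ H : Subgroup G, H.Normal ∧ H.index = p ∧ I ≤ H := by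
  have : Fact p.Prime := ⟨hp⟩
  obtain ⟨n, hn⟩ := hG.exists_card_eq
  obtain ⟨m, hm⟩ := (hG.to_subgroup I).exists_card_eq
  have hmn : m < n := by
    rw [← Nat.pow_lt_pow_iff_right hp.one_lt, ← hm, ← hn]
    exact (Subgroup.card_le_card_group I).lt_of_ne fun h ↦ hI (I.eq_top_of_card_eq h)
  obtain ⟨k, rfl⟩ := Nat.exists_eq_succ_of_ne_zero hmn.ne_bot
  obtain ⟨H, hH, hIH⟩ := Sylow.exists_subgroup_card_pow_prime_le p
    (hn ▸ pow_dvd_pow p k.le_succ) I hm (Nat.lt_succ_iff.mp hmn)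
  have hindex : H.index = p := by
    have hmul := H.card_mul_index
    rw [hH, hn, pow_succ] at hmul
    exact Nat.eq_of_mul_eq_mul_left (pow_pos hp.pos k) hmul
  refine ⟨H, Subgroup.normal_of_index_eq_minFac_card ?_, hindex, hIH⟩
  rw [hindex, hn, hp.pow_minFac k.succ_ne_zero]

theorem inertia_smul_le_of_normal {R G : Type*} [CommRing R] [Group G] [MulSemiringAction G R]
    {Q : Ideal R} {H : Subgroup G} [hH : H.Normal] (hQ : Q.inertia G ≤ H) (τ : G) :
    (τ • Q).inertia G ≤ H := by
  intro σ hσ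
  have hconj : τ⁻¹ * σ * τ ∈ Q.inertia G := fun x ↦ by
    have hx := Ideal.smul_mem_pointwise_smul τ⁻¹ _ _ (hσ (τ • x))
    rwa [inv_smul_smul, smul_sub, inv_smul_smul, ← mul_smul, ← mul_smul] at hx
  simpa [mul_assoc] using hH.conj_mem _ (hQ hconj) τ

/-- An `R`-algebra `S` is unramified outside the prime `𝔮` of `R` if every other prime of `R`,
including the zero ideal, is unramified in `S`. -/
def IsUnramifiedOutside {R : Type*} [CommRing R] (𝔮 : Ideal R) (S : Type*) [CommRing S]
    [Algebra R S] : Prop :=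
  ∀ P : Ideal R, P.IsPrime → P ≠ 𝔮 → Algebra.IsUnramifiedIn S P

theorem isGaloisGroup_ringOfIntegers {K L N : Type*} [Field K] [Field L] [NumberField L] [Field N]
    [NumberField N] [Algebra K N] [Algebra L N] (H : Subgroup Gal(N/K)) [IsGaloisGroup H L N] :
    IsGaloisGroup H (𝓞 L) (𝓞 N) :=
  IsGaloisGroup.of_isFractionRing H (𝓞 L) (𝓞 N) L N

variable {K N : Type*} [Field K] [NumberField K] [Field N] [NumberField N] [Algebra K N]
  [IsGalois K N] {𝔮 : Ideal (𝓞 K)}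

theorem formallyUnramified_fixedField_iff (H : Subgroup Gal(N/K)) :
    Algebra.FormallyUnramified (𝓞 K) (𝓞 (IntermediateField.fixedField H)) ↔
      ∀ Q : Ideal (𝓞 N), Q.IsPrime → Q.inertia Gal(N/K) ≤ H := by
  let M := IntermediateField.fixedField H
  have : IsGaloisGroup H M N := IsGaloisGroup.subgroup Gal(N/K) K N H
  have := isGaloisGroup_ringOfIntegers (L := M) H
  have hiff (Q : Ideal (𝓞 N)) [Q.IsPrime] :
      Algebra.IsUnramifiedAt (𝓞 K) (Q.under (𝓞 M)) ↔ Q.inertia Gal(N/K) ≤ H :=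
    isUnramifiedAt_under_iff_inertia_le (𝓞 K) H Q
  rw [Algebra.formallyUnramified_iff_forall]
  refine ⟨fun h Q hQ ↦ ?_, fun h q ↦ ?_⟩
  · exact (hiff Q).mp (h ⟨Q.under (𝓞 M), inferInstance⟩)
  · obtain ⟨⟨Q, hQ, hQq⟩⟩ := q.asIdeal.nonempty_primesOver (S := 𝓞 N)
    have hunder : Q.under (𝓞 M) = q.asIdeal := hQq.over.symm
    simpa only [hunder] using (hiff Q).mpr (h Q hQ)

theorem inertia_le_of_isUnramifiedOutside (h : IsUnramifiedOutside 𝔮 (𝓞 N))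
    {H : Subgroup Gal(N/K)} [H.Normal] {Q₀ : Ideal (𝓞 N)} [Q₀.IsPrime]
    [Q₀.LiesOver 𝔮] (hH : Q₀.inertia Gal(N/K) ≤ H) (Q : Ideal (𝓞 N)) [Q.IsPrime] :
    Q.inertia Gal(N/K) ≤ H := by
  rcases eq_or_ne (Q.under (𝓞 K)) 𝔮 with hQ | hQ
  · have : Q.LiesOver 𝔮 := ⟨hQ.symm⟩
    obtain ⟨τ, rfl⟩ := Ideal.exists_smul_eq_of_isGaloisGroup 𝔮 Q₀ Q Gal(N/K)
    exact inertia_smul_le_of_normal hH τ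
  · rw [(isUnramifiedAt_iff_inertia_eq_bot (𝓞 K) Q).mp (h _ inferInstance hQ Q ‹_› ⟨rfl⟩)]
    exact bot_le

theorem isCyclic_gal_of_isPGroup {K N : Type} [Field K] [NumberField K] [Field N] [NumberField N]
    [Algebra K N] [IsGalois K N] [IsPrincipalIdealRing (𝓞 K)] {𝔮 : Ideal (𝓞 K)} [𝔮.IsPrime]
    {p : ℕ} (hp : p.Prime) (hp2 : p ≠ 2) (hK : ∀ ε : (𝓞 K)ˣ, ∃ w, w ^ p = ε) (h𝔮 : 𝔮 ≠ ⊥)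
    (hp𝔮 : (p : 𝓞 K) ∉ 𝔮) (hG : IsPGroup p Gal(N/K)) (hN : IsUnramifiedOutside 𝔮 (𝓞 N)) :
    IsCyclic Gal(N/K) := by
  have : Fact p.Prime := ⟨hp⟩
  obtain ⟨⟨Q, hQ, hQ𝔮⟩⟩ := 𝔮.nonempty_primesOver (S := 𝓞 N)
  have hQ0 : Q ≠ ⊥ := Ideal.ne_bot_of_liesOver_of_ne_bot h𝔮 Q
  have htame : (Nat.card (Q.inertia Gal(N/K)) : 𝓞 N) ∉ Q := by
    obtain ⟨n, hn⟩ := (hG.to_subgroup (Q.inertia Gal(N/K))).exists_card_eq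
    intro h
    rw [hn, Nat.cast_pow] at h
    refine hp𝔮 ((Ideal.mem_of_liesOver Q 𝔮 _).mpr ?_)
    simpa using hQ.mem_of_pow_mem n h
  have := IsGaloisGroup.faithful (G := Gal(N/K)) (𝓞 K) (B := 𝓞 N)
  have hcyclic := isCyclic_inertia_of_card_notMem hQ0 htame
  suffices Q.inertia Gal(N/K) = ⊤ by
    rw [this] at hcyclic
    exact isCyclic_of_surjective _ Subgroup.topEquiv.surjective
  by_contra hI
  obtain ⟨H, hH, hindex, hIH⟩ := exists_normal_index_eq_of_ne_top hp hG hI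
  have hdeg : Module.finrank K (IntermediateField.fixedField H) = p := by
    rw [← hindex, IntermediateField.finrank_eq_fixingSubgroup_index,
      IntermediateField.fixingSubgroup_fixedField]
  refine not_formallyUnramified_ringOfIntegers (hdeg ▸ hp) (hdeg ▸ hp2) (hdeg ▸ hK) <|
    (formallyUnramified_fixedField_iff H).mpr fun R _ ↦
      inertia_le_of_isUnramifiedOutside hN hIH R

end CyclicGaloisGroup

section Uniqueness

variable {K L L' N : Type*} [Field K] [NumberField K] [Field L] [NumberField L] [Field L']
  [NumberField L'] [Field N] [NumberField N] [Algebra K L] [Algebra K L'] [Algebra K N]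
  [Algebra L N] [Algebra L' N] [IsScalarTower K L N] [IsScalarTower K L' N] [IsGalois K N]
  {𝔮 : Ideal (𝓞 K)} {H H' : Subgroup Gal(N/K)} [IsGaloisGroup H L N] [IsGaloisGroup H' L' N]
  {p : ℕ}

variable (L) (H) in
theorem index_eq_finrank_of_isGaloisGroup : H.index = Module.finrank K L := by
  have hindex := H.card_mul_index
  rw [IsGaloisGroup.card_eq_finrank H L N, IsGaloisGroup.card_eq_finrank Gal(N/K) K N,
    ← Module.finrank_mul_finrank K L N, mul_comm] at hindex
  exact Nat.eq_of_mul_eq_mul_right Module.finrank_pos hindex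

theorem inertia_le_of_isUnramifiedOutside_tower (hL : IsUnramifiedOutside 𝔮 (𝓞 L)) {Q : Ideal (𝓞 N)}
    [Q.IsPrime] (hQ : Q.under (𝓞 K) ≠ 𝔮) : Q.inertia Gal(N/K) ≤ H := by
  have := isGaloisGroup_ringOfIntegers (L := L) H
  refine (isUnramifiedAt_under_iff_inertia_le (𝓞 K) (B := 𝓞 L) H Q).mp
    (hL _ inferInstance hQ _ inferInstance ⟨?_⟩)
  rw [Ideal.under_under]

theorem IsUnramifiedOutside.of_inf_eq_bot (hL : IsUnramifiedOutside 𝔮 (𝓞 L))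
    (hL' : IsUnramifiedOutside 𝔮 (𝓞 L')) (hHH' : H ⊓ H' = ⊥) : IsUnramifiedOutside 𝔮 (𝓞 N) := by
  rintro P - hP Q hQ ⟨rfl⟩
  rw [isUnramifiedAt_iff_inertia_eq_bot (𝓞 K) Q (G := Gal(N/K)), eq_bot_iff, ← hHH']
  exact le_inf (inertia_le_of_isUnramifiedOutside_tower hL hP)
    (inertia_le_of_isUnramifiedOutside_tower hL' hP)

theorem pow_finrank_eq_one_of_inf_eq_bot [IsGalois K L] [IsGalois K L']
    (hLp : Module.finrank K L = p) (hLp' : Module.finrank K L' = p) (hHH' : H ⊓ H' = ⊥)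
    (σ : Gal(N/K)) : σ ^ p = 1 := by
  have := IsGaloisGroup.normal_of_isGalois Gal(N/K) K N H L
  have := IsGaloisGroup.normal_of_isGalois Gal(N/K) K N H' L'
  rw [← Subgroup.mem_bot, ← hHH']
  exact ⟨hLp ▸ index_eq_finrank_of_isGaloisGroup L H ▸ H.pow_index_mem σ,
    hLp' ▸ index_eq_finrank_of_isGaloisGroup L' H' ▸ H'.pow_index_mem σ⟩

end Uniqueness

theorem nonempty_algEquiv_of_finrank_eq {K L N : Type*} [Field K] [Field L] [Field N] [Algebra K L]
    [Algebra K N] [FiniteDimensional K L] [FiniteDimensional K N] (ψ : L →ₐ[K] N)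
    (h : Module.finrank K L = Module.finrank K N) : Nonempty (L ≃ₐ[K] N) :=
  ⟨.ofBijective ψ ⟨ψ.injective, (LinearMap.injective_iff_surjective_of_finrank_eq_finrank
    (f := ψ.toLinearMap) h).mp ψ.injective⟩⟩

theorem exists_isGalois_fieldRange_sup_eq_top.{u} (K : Type*) (L : Type u) (L' : Type*)
    [Field K] [NumberField K] [Field L] [NumberField L] [Field L'] [NumberField L']
    [Algebra K L] [Algebra K L'] [IsGalois K L] [IsGalois K L'] :
    ∃ (N : Type u) (_ : Field N) (_ : NumberField N) (_ : Algebra K N) (_ : IsGalois K N)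
      (ψ : L →ₐ[K] N) (ψ' : L' →ₐ[K] N), ψ.fieldRange ⊔ ψ'.fieldRange = ⊤ := by
  let φ : L →ₐ[K] AlgebraicClosure L := IsScalarTower.toAlgHom K L (AlgebraicClosure L)
  let φ' : L' →ₐ[K] AlgebraicClosure L := IsAlgClosed.lift
  have : FiniteDimensional K φ.fieldRange := φ.equivFieldRange.toLinearEquiv.finiteDimensional
  have : FiniteDimensional K φ'.fieldRange := φ'.equivFieldRange.toLinearEquiv.finiteDimensional
  have : IsGalois K φ.fieldRange := .of_algEquiv φ.equivFieldRange
  have : IsGalois K φ'.fieldRange := .of_algEquiv φ'.equivFieldRange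
  let N := φ.fieldRange ⊔ φ'.fieldRange
  have : FiniteDimensional K N := IntermediateField.finiteDimensional_sup _ _
  let ι : φ.fieldRange →ₐ[K] N := IntermediateField.inclusion le_sup_left
  let ι' : φ'.fieldRange →ₐ[K] N := IntermediateField.inclusion le_sup_right
  refine ⟨N, inferInstance, .of_module_finite K N, inferInstance, inferInstance,
    ι.comp φ.rangeRestrict, ι'.comp φ'.rangeRestrict, IntermediateField.lift_injective N ?_⟩
  rw [IntermediateField.lift_sup, IntermediateField.lift_top, IntermediateField.lift,
    IntermediateField.lift, AlgHom.map_fieldRange, AlgHom.map_fieldRange]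
  rfl

section UniquenessInPrimeDegree

variable {K L L' N : Type} [Field K] [NumberField K] [Field L] [NumberField L] [Field L']
  [NumberField L'] [Field N] [NumberField N] [Algebra K L] [Algebra K L'] [Algebra K N]
  [Algebra L N] [Algebra L' N] [IsScalarTower K L N] [IsScalarTower K L' N] [IsGalois K L]
  [IsGalois K L'] [IsGalois K N] [IsPrincipalIdealRing (𝓞 K)] {𝔮 : Ideal (𝓞 K)} [𝔮.IsPrime] {p : ℕ}

theorem finrank_eq_of_isUnramifiedOutside {H H' : Subgroup Gal(N/K)} [IsGaloisGroup H L N]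
    [IsGaloisGroup H' L' N] (hp : p.Prime) (hp2 : p ≠ 2) (hK : ∀ ε : (𝓞 K)ˣ, ∃ w, w ^ p = ε)
    (h𝔮 : 𝔮 ≠ ⊥) (hp𝔮 : (p : 𝓞 K) ∉ 𝔮) (hLp : Module.finrank K L = p)
    (hL : IsUnramifiedOutside 𝔮 (𝓞 L)) (hLp' : Module.finrank K L' = p)
    (hL' : IsUnramifiedOutside 𝔮 (𝓞 L')) (hHH' : H ⊓ H' = ⊥) : Module.finrank K N = p := by
  have hpow := pow_finrank_eq_one_of_inf_eq_bot hLp hLp' hHH'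
  have hG : IsPGroup p Gal(N/K) := fun σ ↦ ⟨1, by rw [pow_one, hpow σ]⟩
  have hcyclic := isCyclic_gal_of_isPGroup hp hp2 hK h𝔮 hp𝔮 hG (.of_inf_eq_bot hL hL' hHH')
  refine Nat.dvd_antisymm ?_ (hLp ▸ Dvd.intro _ (Module.finrank_mul_finrank K L N))
  rw [← IsGalois.card_aut_eq_finrank, ← IsCyclic.exponent_eq_card]
  exact Monoid.exponent_dvd_of_forall_pow_eq_one hpow

theorem nonempty_algEquiv_of_isUnramifiedOutside (hp : p.Prime) (hp2 : p ≠ 2)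
    (hK : ∀ ε : (𝓞 K)ˣ, ∃ w, w ^ p = ε) (h𝔮 : 𝔮 ≠ ⊥) (hp𝔮 : (p : 𝓞 K) ∉ 𝔮)
    (hLp : Module.finrank K L = p) (hL : IsUnramifiedOutside 𝔮 (𝓞 L))
    (hLp' : Module.finrank K L' = p) (hL' : IsUnramifiedOutside 𝔮 (𝓞 L')) :
    Nonempty (L' ≃ₐ[K] L) := by
  obtain ⟨N, _, _, _, _, ψ, ψ', hψ⟩ := exists_isGalois_fieldRange_sup_eq_top K L L'
  let _ : Algebra L N := ψ.toAlgebra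
  let _ : Algebra L' N := ψ'.toAlgebra
  have : IsScalarTower K L N := IsScalarTower.of_algHom ψ
  have : IsScalarTower K L' N := IsScalarTower.of_algHom ψ'
  have := IsGaloisGroup.of_isScalarTower Gal(N/K) K N L
  have := IsGaloisGroup.of_isScalarTower Gal(N/K) K N L'
  have hHH' : fixingSubgroup Gal(N/K) (Set.range (algebraMap L N)) ⊓
      fixingSubgroup Gal(N/K) (Set.range (algebraMap L' N)) = ⊥ := by
    have hsup := IntermediateField.fixingSubgroup_sup (K := ψ.fieldRange) (L := ψ'.fieldRange)
    rw [hψ, IntermediateField.fixingSubgroup_top] at hsup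
    exact hsup.symm
  have hN := finrank_eq_of_isUnramifiedOutside hp hp2 hK h𝔮 hp𝔮 hLp hL hLp' hL' hHH'
  obtain ⟨e⟩ := nonempty_algEquiv_of_finrank_eq ψ (hLp.trans hN.symm)
  obtain ⟨e'⟩ := nonempty_algEquiv_of_finrank_eq ψ' (hLp'.trans hN.symm)
  exact ⟨e'.trans e.symm⟩

end UniquenessInPrimeDegree

section QuadraticRing

open scoped QuadraticAlgebra

theorem quadraticAlgebra_prime_natCast {p : ℕ} [Fact p.Prime] {a b : ℤ}
    (h : ∀ r : ZMod p, r ^ 2 ≠ a + b * r) : Prime (p : QuadraticAlgebra ℤ a b) := by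
  have : Fact (∀ r : ZMod p, r ^ 2 ≠ a + b * r) := ⟨h⟩
  let π : QuadraticAlgebra ℤ a b →ₐ[ℤ] QuadraticAlgebra (ZMod p) a b :=
    QuadraticAlgebra.lift ⟨QuadraticAlgebra.omega, by ext <;> simp⟩
  have hπ (z : QuadraticAlgebra ℤ a b) : π z = 0 ↔ (p : QuadraticAlgebra ℤ a b) ∣ z := by
    rw [← map_natCast (algebraMap ℤ (QuadraticAlgebra ℤ a b)), QuadraticAlgebra.algebraMap_dvd_iff,
      ← ZMod.intCast_zmod_eq_zero_iff_dvd, ← ZMod.intCast_zmod_eq_zero_iff_dvd]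
    simp [π, QuadraticAlgebra.ext_iff]
  refine ⟨mod_cast NeZero.ne p, fun hu ↦ ?_, fun x y hxy ↦ ?_⟩
  · exact one_ne_zero (map_one π ▸ (hπ 1).mpr hu.dvd)
  · rw [← hπ, map_mul, ← QuadraticAlgebra.norm_eq_zero_iff_eq_zero, map_mul, mul_eq_zero] at hxy
    simpa only [← hπ, ← QuadraticAlgebra.norm_eq_zero_iff_eq_zero] using hxy

theorem quadraticAlgebra_isUnit_iff {a b : ℤ} (h : b ^ 2 + 4 * a < -4)
    {z : QuadraticAlgebra ℤ a b} : IsUnit z ↔ z = 1 ∨ z = -1 := by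
  refine ⟨fun hz ↦ ?_, by rintro (rfl | rfl) <;> simp⟩
  rw [QuadraticAlgebra.isUnit_iff_norm_isUnit, Int.isUnit_iff, QuadraticAlgebra.norm_def] at hz
  have him : z.im = 0 := by
    by_contra him
    have : 0 < z.im ^ 2 := by positivity
    rcases hz with hz | hz <;> nlinarith [sq_nonneg (2 * z.re + b * z.im)]
  have hre : z.re = 1 ∨ z.re = -1 := by
    have hnonneg := mul_self_nonneg z.re
    rw [him] at hz
    exact mul_self_eq_one_iff.mp (by lia)
  simpa [QuadraticAlgebra.ext_iff, him] using hre

theorem quadraticAlgebra_basis_zero {R : Type*} [CommRing R] (a b : R) :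
    QuadraticAlgebra.basis a b 0 = 1 := by
  ext <;> simp [QuadraticAlgebra.basis]

theorem quadraticAlgebra_basis_one {R : Type*} [CommRing R] (a b : R) :
    QuadraticAlgebra.basis a b 1 = QuadraticAlgebra.omega := by
  ext <;> simp [QuadraticAlgebra.basis]

theorem algebra_trace_quadraticAlgebra {R : Type*} [CommRing R] {a b : R}
    (z : QuadraticAlgebra R a b) : Algebra.trace R _ z = QuadraticAlgebra.trace z := by
  have h₀ : Algebra.leftMulMatrix (QuadraticAlgebra.basis a b) z 0 0 = z.re := by
    simp [Algebra.leftMulMatrix_eq_repr_mul, quadraticAlgebra_basis_zero]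
  have h₁ : Algebra.leftMulMatrix (QuadraticAlgebra.basis a b) z 1 1 = z.re + b * z.im := by
    simp [Algebra.leftMulMatrix_eq_repr_mul, quadraticAlgebra_basis_one]
  rw [Algebra.trace_eq_matrix_trace (QuadraticAlgebra.basis a b), Matrix.trace_fin_two, h₀, h₁,
    QuadraticAlgebra.trace_def]
  ring

theorem algebra_norm_quadraticAlgebra {R : Type*} [CommRing R] {a b : R}
    (z : QuadraticAlgebra R a b) : Algebra.norm R z = QuadraticAlgebra.norm z :=
  QuadraticAlgebra.det_toLinearMap_eq_norm z

theorem discr_quadraticAlgebra_basis {R : Type*} [CommRing R] (a b : R) :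
    Algebra.discr R (QuadraticAlgebra.basis a b) = b ^ 2 + 4 * a := by
  have h : Algebra.traceMatrix R (QuadraticAlgebra.basis a b) = !![2, b; b, 2 * a + b * b] := by
    ext i j
    fin_cases i <;> fin_cases j <;>
      simp [Algebra.traceMatrix_apply, algebra_trace_quadraticAlgebra, QuadraticAlgebra.trace_def,
        quadraticAlgebra_basis_zero, quadraticAlgebra_basis_one]
  rw [Algebra.discr_def, h, Matrix.det_fin_two_of]
  ring

end QuadraticRing

section ImaginaryQuadratic

theorem exists_intCast_eq_of_squarefree_mul_sq {D : ℤ} (hD : Squarefree D) {q : ℚ} {n : ℤ}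
    (h : D * q ^ 2 = n) : ∃ v : ℤ, v = q := by
  have hint : IsIntegral ℤ (D * q) := by
    refine IsIntegral.of_pow two_pos ?_
    rw [show (D * q) ^ 2 = ((D * n : ℤ) : ℚ) by push_cast; rw [← h]; ring]
    exact isIntegral_algebraMap
  obtain ⟨w, hw⟩ := IsIntegrallyClosed.isIntegral_iff.mp hint
  rw [eq_intCast] at hw
  have hsq : w ^ 2 = D * n := by
    have : (w : ℚ) ^ 2 = D * n := by rw [hw, ← h]; ring
    exact_mod_cast this
  obtain ⟨v, rfl⟩ := hD.isRadical 2 w ⟨n, hsq⟩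
  refine ⟨v, mul_left_cancel₀ (Int.cast_ne_zero.mpr hD.ne_zero) ?_⟩
  rw [← hw, Int.cast_mul]

variable {K : Type*} [Field K] [NumberField K]

theorem exists_int_trace_norm_eq {a b : ℚ} (e : QuadraticAlgebra ℚ a b ≃ₐ[ℚ] K)
    {z : QuadraticAlgebra ℚ a b} (hz : IsIntegral ℤ (e z)) :
    (∃ t : ℤ, t = z.trace) ∧ ∃ n : ℤ, n = z.norm := by
  rw [← algebra_trace_quadraticAlgebra, ← algebra_norm_quadraticAlgebra,
    ← Algebra.trace_eq_of_algEquiv e, ← Algebra.norm_eq_of_algEquiv e]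
  exact ⟨IsIntegrallyClosed.isIntegral_iff.mp (Algebra.isIntegral_trace hz),
    IsIntegrallyClosed.isIntegral_iff.mp (Algebra.isIntegral_norm ℚ hz)⟩

variable {a b : ℤ} {θ : K}

theorem quadraticAlgebra_lift_injective (hneg : b ^ 2 + 4 * a < 0)
    (hθ : θ * θ = (a : ℚ) • 1 + (b : ℚ) • θ) :
    Function.Injective (QuadraticAlgebra.lift ⟨θ, hθ⟩) := by
  have : Fact (∀ r : ℚ, r ^ 2 ≠ a + b * r) := by
    refine ⟨fun r hr ↦ ?_⟩
    have : (b ^ 2 + 4 * a : ℚ) < 0 := mod_cast hneg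
    nlinarith [sq_nonneg (2 * r - b)]
  refine (injective_iff_map_eq_zero _).mpr fun z hz ↦ ?_
  rw [← QuadraticAlgebra.norm_eq_zero_iff_eq_zero,
    ← FaithfulSMul.algebraMap_eq_zero_iff ℚ K, ← AlgHom.commutes (QuadraticAlgebra.lift ⟨θ, hθ⟩),
    QuadraticAlgebra.algebraMap_norm_eq_mul_star, map_mul, hz, zero_mul]

theorem quadraticAlgebra_lift_bijective (hK : Module.finrank ℚ K = 2) (hneg : b ^ 2 + 4 * a < 0)
    (hθ : θ * θ = (a : ℚ) • 1 + (b : ℚ) • θ) :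
    Function.Bijective (QuadraticAlgebra.lift ⟨θ, hθ⟩) := by
  have hinj := quadraticAlgebra_lift_injective hneg hθ
  exact ⟨hinj, (LinearMap.injective_iff_surjective_of_finrank_eq_finrank
    (f := (QuadraticAlgebra.lift ⟨θ, hθ⟩).toLinearMap)
    ((QuadraticAlgebra.finrank_eq_two _ _).trans hK.symm)).mp hinj⟩

theorem exists_intCast_eq_re_im (hD : Squarefree (b ^ 2 + 4 * a))
    (e : QuadraticAlgebra ℚ (a : ℚ) b ≃ₐ[ℚ] K) (hω : IsIntegral ℤ (e QuadraticAlgebra.omega))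
    {z : QuadraticAlgebra ℚ (a : ℚ) b} (hz : IsIntegral ℤ (e z)) :
    (∃ u : ℤ, u = z.re) ∧ ∃ v : ℤ, v = z.im := by
  obtain ⟨⟨t, ht⟩, n, hn⟩ := exists_int_trace_norm_eq e hz
  rw [QuadraticAlgebra.trace_def] at ht
  rw [QuadraticAlgebra.norm_def] at hn
  obtain ⟨v, hv⟩ := exists_intCast_eq_of_squarefree_mul_sq hD (q := z.im) (n := t ^ 2 - 4 * n)
    (by push_cast; rw [ht, hn]; ring)
  have hre : IsIntegral ℤ (algebraMap ℚ K z.re) := by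
    have : algebraMap ℚ K z.re = e z - v * e QuadraticAlgebra.omega := by
      rw [← e.commutes, ← map_intCast e, ← map_mul, ← map_sub]
      congr 1
      ext <;> simp [hv]
    rw [this]
    exact hz.sub ((isIntegral_algebraMap (x := v)).mul hω)
  exact ⟨IsIntegrallyClosed.isIntegral_iff.mp
    ((isIntegral_algebraMap_iff (algebraMap ℚ K).injective).mp hre), v, hv⟩

theorem nonempty_quadraticAlgebra_algEquiv_ringOfIntegers (hK : Module.finrank ℚ K = 2)
    (hneg : b ^ 2 + 4 * a < 0) (hD : Squarefree (b ^ 2 + 4 * a)) (hθ : θ ^ 2 = a + b * θ) :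
    Nonempty (QuadraticAlgebra ℤ a b ≃ₐ[ℤ] 𝓞 K) := by
  obtain ⟨θ, rfl⟩ : ∃ θ' : 𝓞 K, (θ' : K) = θ := by
    refine ⟨⟨θ, X ^ 2 - C b * X - C a, by monicity!, ?_⟩, rfl⟩
    rw [eval₂_sub, eval₂_sub, eval₂_mul, eval₂_X_pow, eval₂_C, eval₂_C, eval₂_X, hθ]
    simp
  have hθ₀ : θ * θ = a • 1 + b • θ := by
    ext
    simpa [sq] using hθ
  have hθK : (θ : K) * θ = (a : ℚ) • 1 + (b : ℚ) • (θ : K) := by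
    simp [← sq, hθ, Algebra.smul_def]
  let e := AlgEquiv.ofBijective _ (quadraticAlgebra_lift_bijective hK hneg hθK)
  let f := QuadraticAlgebra.lift ⟨θ, hθ₀⟩
  have hf (z : QuadraticAlgebra ℤ a b) : (f z : K) = e ⟨z.re, z.im⟩ := by
    simp [f, e, Algebra.smul_def]
  refine ⟨AlgEquiv.ofBijective f ⟨fun z w h ↦ ?_, fun x ↦ ?_⟩⟩
  · have := e.injective ((hf z).symm.trans ((congrArg _ h).trans (hf w)))
    simpa [QuadraticAlgebra.ext_iff] using this
  · obtain ⟨z, hz⟩ := e.surjective x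
    obtain ⟨⟨u, hu⟩, v, hv⟩ := exists_intCast_eq_re_im hD e
      (by simpa [e] using θ.isIntegral_coe) (by rw [hz]; exact x.isIntegral_coe)
    refine ⟨⟨u, v⟩, RingOfIntegers.ext ?_⟩
    rw [hf, ← hz, hu, hv]

end ImaginaryQuadratic

section ClassNumberOne

theorem isMaximal_span_singleton_of_prime {R : Type*} [CommRing R] [Ring.DimensionLEOne R]
    {q : R} (hq : Prime q) : (Ideal.span {q}).IsMaximal :=
  ((Ideal.span_singleton_prime hq.ne_zero).mpr hq).isMaximal (by simpa using hq.ne_zero)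

variable {K : Type*} [Field K] [NumberField K]

theorem discr_eq_of_quadraticAlgebra_algEquiv {a b : ℤ} (e : QuadraticAlgebra ℤ a b ≃ₐ[ℤ] 𝓞 K) :
    discr K = b ^ 2 + 4 * a := by
  rw [← discr_eq_discr K ((QuadraticAlgebra.basis a b).map e.toLinearEquiv),
    ← discr_quadraticAlgebra_basis, Algebra.discr_eq_discr_of_algEquiv _ e]
  congr

theorem four_div_pi_pow_nrComplexPlaces_le (hK : Module.finrank ℚ K = 2) :
    (4 / Real.pi) ^ InfinitePlace.nrComplexPlaces K ≤ 4 / 3 := by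
  have hplaces : InfinitePlace.nrComplexPlaces K ≤ 1 := by
    have := InfinitePlace.card_add_two_mul_card_eq_rank K
    lia
  have hpi : 1 ≤ 4 / Real.pi := (one_le_div Real.pi_pos).mpr Real.pi_le_four
  calc (4 / Real.pi) ^ InfinitePlace.nrComplexPlaces K ≤ (4 / Real.pi) ^ 1 :=
        pow_le_pow_right₀ hpi hplaces
    _ ≤ 4 / 3 := by
        rw [pow_one]
        gcongr
        exact Real.pi_gt_three.le

-- Minkowski's bound `2 / π * √|discr K|`, with `π` replaced by `3`.
theorem isPrincipalIdealRing_of_forall_prime_natCast (hK : Module.finrank ℚ K = 2)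
    (h : ∀ p : ℕ, p.Prime → 9 * p ^ 2 ≤ 4 * |discr K| → Prime (p : 𝓞 K)) :
    IsPrincipalIdealRing (𝓞 K) := by
  refine RingOfIntegers.isPrincipalIdealRing_of_isPrincipal_of_pow_le_of_mem_primesOver_of_mem_Icc
    fun p hp hpp P hP _ ↦ ?_
  obtain ⟨_, hPp⟩ := hP
  have hbound : 9 * (p : ℤ) ^ 2 ≤ 4 * |discr K| := by
    have hle := (Nat.le_floor_iff (by positivity)).mp (Finset.mem_Icc.mp hp).2
    rw [hK] at hle
    have hp_le : (p : ℝ) ≤ 4 / 3 * ((Nat.factorial 2 : ℕ) / 2 ^ 2 * √|discr K|) := by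
      refine hle.trans ?_
      push_cast
      gcongr
      exact four_div_pi_pow_nrComplexPlaces_le hK
    have hsq : √|(discr K : ℝ)| ^ 2 = |(discr K : ℝ)| := Real.sq_sqrt (abs_nonneg _)
    have : 9 * (p : ℝ) ^ 2 ≤ 4 * |(discr K : ℝ)| := by
      norm_num [Nat.factorial] at hp_le
      nlinarith [p.cast_nonneg (α := ℝ)]
    exact_mod_cast this
  have hprime := h p hpp hbound
  have hmem : (p : 𝓞 K) ∈ P := by
    simpa using (Ideal.mem_of_liesOver P (Ideal.span {(p : ℤ)}) (p : ℤ)).mp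
      (Ideal.mem_span_singleton_self _)
  exact ⟨p, ((isMaximal_span_singleton_of_prime hprime).eq_of_le Ideal.IsPrime.ne_top'
    (by simpa)).symm⟩

variable {d : ℕ} {s : K}

theorem nonempty_quadraticAlgebra_algEquiv_of_sq_eq_neg (hK : Module.finrank ℚ K = 2)
    (hs : s ^ 2 = -(d : K)) (hd : Squarefree d) {m : ℕ} (hm : d + 1 = 4 * m) :
    Nonempty (QuadraticAlgebra ℤ (-m) 1 ≃ₐ[ℤ] 𝓞 K) := by
  have hdisc : (1 : ℤ) ^ 2 + 4 * -m = -d := by lia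
  refine nonempty_quadraticAlgebra_algEquiv_ringOfIntegers (θ := (1 + s) / 2) hK ?_ ?_ ?_
  · have := hd.ne_zero
    lia
  · rw [hdisc]
    simpa [← Int.squarefree_natAbs] using hd
  · have : (d : K) + 1 = 4 * m := mod_cast hm
    push_cast
    field_simp
    linear_combination hs - this

theorem unit_eq_one_or_neg_one (hK : Module.finrank ℚ K = 2) (hs : s ^ 2 = -(d : K))
    (hd : Squarefree d) {m : ℕ} (hm : d + 1 = 4 * m) (hm2 : 2 ≤ m) (ε : (𝓞 K)ˣ) :
    ε = 1 ∨ ε = -1 := by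
  obtain ⟨e⟩ := nonempty_quadraticAlgebra_algEquiv_of_sq_eq_neg hK hs hd hm
  have := (quadraticAlgebra_isUnit_iff (by lia)).mp (ε.isUnit.map e.symm)
  exact this.imp (fun h ↦ Units.ext (e.symm.injective (h.trans (map_one e.symm).symm)))
    fun h ↦ Units.ext (e.symm.injective (h.trans (by simp)))

theorem prime_natCast_ringOfIntegers (hK : Module.finrank ℚ K = 2) (hs : s ^ 2 = -(d : K))
    (hd : Squarefree d) {m : ℕ} (hm : d + 1 = 4 * m) {p : ℕ} (hp : p.Prime)
    (h : ∀ r : ZMod p, r ^ 2 ≠ r - m) : Prime (p : 𝓞 K) := by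
  have : Fact p.Prime := ⟨hp⟩
  obtain ⟨e⟩ := nonempty_quadraticAlgebra_algEquiv_of_sq_eq_neg hK hs hd hm
  rw [← map_natCast e, MulEquiv.prime_iff]
  exact quadraticAlgebra_prime_natCast fun r ↦ by simpa [neg_add_eq_sub] using h r

theorem discr_eq_neg (hK : Module.finrank ℚ K = 2) (hs : s ^ 2 = -(d : K))
    (hd : Squarefree d) {m : ℕ} (hm : d + 1 = 4 * m) : discr K = -d := by
  obtain ⟨e⟩ := nonempty_quadraticAlgebra_algEquiv_of_sq_eq_neg hK hs hd hm
  rw [discr_eq_of_quadraticAlgebra_algEquiv e]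
  lia

theorem exists_forall_sq_ne_of_mem (hd : d ∈ ({11, 19, 43, 67, 163} : Finset ℕ)) :
    ∃ m, d + 1 = 4 * m ∧
      ∀ p : ℕ, p.Prime → 9 * p ^ 2 ≤ 4 * d → ∀ r : ZMod p, r ^ 2 ≠ r - m := by
  refine ⟨(d + 1) / 4, by fin_cases hd <;> rfl, fun p hp hpd ↦ ?_⟩
  have hp8 : p ≤ 8 := by
    have : d ≤ 163 := by fin_cases hd <;> simp
    nlinarith
  fin_cases hd <;> interval_cases p <;> first | decide | (norm_num at hp; done) | norm_num at hpd

theorem isPrincipalIdealRing_and_units_and_prime_two_of_mem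
    (hd : d ∈ ({11, 19, 43, 67, 163} : Finset ℕ)) (hK : Module.finrank ℚ K = 2)
    (hs : s ^ 2 = -(d : K)) :
    IsPrincipalIdealRing (𝓞 K) ∧ (∀ ε : (𝓞 K)ˣ, ε = 1 ∨ ε = -1) ∧ Prime (2 : 𝓞 K) := by
  obtain ⟨m, hm, hinert⟩ := exists_forall_sq_ne_of_mem hd
  have hsq : Squarefree d := by
    refine Irreducible.squarefree (?_ : d.Prime)
    fin_cases hd <;> norm_num
  have h11 : 11 ≤ d := by fin_cases hd <;> norm_num
  have hprime (p : ℕ) (hp : p.Prime) (hpd : 9 * p ^ 2 ≤ 4 * d) : Prime (p : 𝓞 K) :=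
    prime_natCast_ringOfIntegers hK hs hsq hm hp (hinert p hp hpd)
  refine ⟨isPrincipalIdealRing_of_forall_prime_natCast hK fun p hp hpd ↦ hprime p hp ?_,
    unit_eq_one_or_neg_one hK hs hsq hm (by lia), mod_cast hprime 2 Nat.prime_two (by lia)⟩
  rw [discr_eq_neg hK hs hsq hm, abs_neg, Nat.abs_cast] at hpd
  exact_mod_cast hpd

end ClassNumberOne

section IrreducibleCubic

theorem irreducible_map_of_coprime_finrank {F E : Type*} [Field F] [Field E] [Algebra F E]
    [FiniteDimensional F E] {f : F[X]} (hf : Irreducible f)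
    (h : f.natDegree.Coprime (Module.finrank F E)) : Irreducible (f.map (algebraMap F E)) := by
  have hf0 : f.map (algebraMap F E) ≠ 0 := map_ne_zero hf.ne_zero
  have hunit : ¬ IsUnit (f.map (algebraMap F E)) := fun hu ↦
    hf.natDegree_pos.ne' (natDegree_map (algebraMap F E) ▸ natDegree_eq_zero_of_isUnit hu)
  obtain ⟨g, hg, hgf⟩ := WfDvdMonoid.exists_irreducible_factor hunit hf0
  have : Fact (Irreducible g) := ⟨hg⟩
  have : FiniteDimensional E (AdjoinRoot g) := (AdjoinRoot.powerBasis hg.ne_zero).finite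
  have : FiniteDimensional F (AdjoinRoot g) := .trans F E _
  have hroot : aeval (AdjoinRoot.root g) f = 0 := by
    rw [← aeval_map_algebraMap E]
    exact aeval_eq_zero_of_dvd_aeval_eq_zero hgf (AdjoinRoot.eval₂_root g)
  have hdvd : f.natDegree ∣ g.natDegree := by
    refine h.dvd_of_dvd_mul_left ?_
    rw [← AdjoinRoot.powerBasis_dim hg.ne_zero, ← (AdjoinRoot.powerBasis hg.ne_zero).finrank,
      Module.finrank_mul_finrank, minpoly.Irreducible.eq_minpoly hf hroot,
      natDegree_C_mul (leadingCoeff_ne_zero.mpr hf.ne_zero)]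
    exact minpoly.degree_dvd (.of_finite F _)
  refine (associated_of_dvd_of_natDegree_le hgf hf0 ?_).irreducible hg
  rw [natDegree_map]
  exact Nat.le_of_dvd hg.natDegree_pos hdvd

theorem irreducible_toPoly_of_forall_zmod {P : Cubic ℤ} (hP : P.a = 1) {ℓ : ℕ} (hℓ : ℓ.Prime)
    (h : ∀ r : ZMod ℓ, r ^ 3 + P.b * r ^ 2 + P.c * r + P.d ≠ 0) : Irreducible P.toPoly := by
  have : Fact ℓ.Prime := ⟨hℓ⟩
  have hmonic := Cubic.monic_of_a_eq_one hP
  refine hmonic.irreducible_of_irreducible_map (Int.castRingHom (ZMod ℓ)) _ ?_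
  refine irreducible_of_degree_le_three_of_not_isRoot ?_ fun r hr ↦ h r ?_
  · rw [hmonic.natDegree_map, Cubic.natDegree_of_a_ne_zero (by simp [hP])]
    decide
  · simpa [IsRoot, Cubic.toPoly, hP] using hr

theorem irreducible_map_intCast_of_forall_zmod {K : Type*} [Field K] [CharZero K]
    (hK : Module.finrank ℚ K = 2) {P : Cubic ℤ} (hP : P.a = 1) {ℓ : ℕ} (hℓ : ℓ.Prime)
    (h : ∀ r : ZMod ℓ, r ^ 3 + P.b * r ^ 2 + P.c * r + P.d ≠ 0) :
    Irreducible (P.toPoly.map (Int.castRingHom K)) := by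
  have : FiniteDimensional ℚ K := .of_finrank_pos (by lia)
  have hmonic := Cubic.monic_of_a_eq_one hP
  have hrat := (hmonic.irreducible_iff_irreducible_map_fraction_map (K := ℚ)).mp
    (irreducible_toPoly_of_forall_zmod hP hℓ h)
  rw [← RingHom.eq_intCast' ((algebraMap ℚ K).comp (algebraMap ℤ ℚ)), ← map_map]
  refine irreducible_map_of_coprime_finrank hrat ?_
  rw [hmonic.natDegree_map, Cubic.natDegree_of_a_ne_zero (by simp [hP]), hK]
  decide

end IrreducibleCubic

section CubicSplittingField

theorem cubic_discr_map {R S : Type*} [CommRing R] [CommRing S] (φ : R →+* S) (P : Cubic R) :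
    (P.map φ).discr = φ P.discr := by
  simp [Cubic.map, Cubic.discr, map_ofNat φ]

theorem exists_cubic_roots_eq {F : Type*} [Field F] {P : Cubic F} (ha : P.a ≠ 0)
    (hP : P.toPoly.Splits) {x : F} (hx : x ∈ P.roots) : ∃ y z, P.roots = {x, y, z} := by
  obtain ⟨s, hs⟩ := Multiset.exists_cons_of_mem hx
  have hcard : P.roots.card = 3 :=
    hP.natDegree_eq_card_roots.symm.trans (Cubic.natDegree_of_a_ne_zero ha)
  obtain ⟨y, z, rfl⟩ := Multiset.card_eq_two.mp (by simpa [hs] using hcard : s.card = 2)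
  exact ⟨y, z, hs⟩

theorem cubic_roots_eq_of_ne {F : Type*} [Field F] {P : Cubic F} (ha : P.a ≠ 0) {x y z : F}
    (hx : x ∈ P.roots) (hy : y ∈ P.roots) (hz : z ∈ P.roots) (hxy : x ≠ y) (hxz : x ≠ z)
    (hyz : y ≠ z) : P.roots = {x, y, z} := by
  refine (Multiset.eq_of_le_of_card_le ((Multiset.le_iff_subset ?_).mpr ?_) ?_).symm
  · simp [hxy, hxz, hyz]
  · simp [Multiset.insert_eq_cons, Multiset.cons_subset, hx, hy, hz]
  · exact (card_roots' _).trans (Cubic.natDegree_of_a_ne_zero ha).le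

variable {K L : Type*} [Field K] [Field L] [Algebra K L] {P : Cubic K}

theorem algEquiv_apply_mem_cubic_roots (σ : Gal(L/K)) {x : L}
    (hx : x ∈ (P.map (algebraMap K L)).roots) : σ x ∈ (P.map (algebraMap K L)).roots := by
  rw [Cubic.map_roots, ← aroots_def, mem_aroots] at hx ⊢
  exact ⟨hx.1, by rw [aeval_algHom_apply, hx.2, map_zero]⟩

variable {δ : K}

theorem algEquiv_apply_prod_sub_cubic_roots_eq (ha : P.a ≠ 0) (hδ : δ ^ 2 = P.discr) {x y z : L}
    (hroots : (P.map (algebraMap K L)).roots = {x, y, z}) (σ : Gal(L/K)) :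
    σ ((x - y) * (x - z) * (y - z)) = (x - y) * (x - z) * (y - z) := by
  have ha' : algebraMap K L P.a ≠ 0 := by simpa using ha
  obtain ⟨c, hc⟩ : ∃ c : K, algebraMap K L c = (x - y) * (x - z) * (y - z) := by
    have hsq := Cubic.discr_eq_prod_three_roots ha hroots
    rw [← hδ, map_pow] at hsq
    rcases sq_eq_sq_iff_eq_or_eq_neg.mp hsq with h | h
    · refine ⟨δ / P.a ^ 2, ?_⟩
      rw [map_div₀, map_pow, h]
      field_simp
    · refine ⟨-δ / P.a ^ 2, ?_⟩
      rw [map_div₀, map_pow, map_neg, h]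
      field_simp
  rw [← hc, AlgEquiv.commutes]

variable [IsSplittingField K L P.toPoly]

theorem algEquiv_eq_one_of_forall_mem_cubic_roots {σ : Gal(L/K)}
    (hσ : ∀ r ∈ (P.map (algebraMap K L)).roots, σ r = r) : σ = 1 := by
  refine AlgEquiv.coe_toAlgHom_injective (AlgHom.ext_of_adjoin_eq_top
    (IsSplittingField.adjoin_rootSet L P.toPoly) fun r hr ↦ hσ r ?_)
  rw [Cubic.map_roots]
  simpa [rootSet] using hr

theorem algEquiv_eq_one_of_apply_cubic_root_eq [NeZero (2 : K)] (ha : P.a ≠ 0)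
    (hsep : P.toPoly.Separable) (hδ : δ ^ 2 = P.discr) {x : L}
    (hx : x ∈ (P.map (algebraMap K L)).roots) {σ : Gal(L/K)} (hσ : σ x = x) : σ = 1 := by
  have ha' : (P.map (algebraMap K L)).a ≠ 0 := by simpa [Cubic.map] using ha
  obtain ⟨y, z, hroots⟩ := exists_cubic_roots_eq ha'
    (by simpa [Cubic.map_toPoly] using IsSplittingField.splits L P.toPoly) hx
  obtain ⟨⟨hxy, hxz⟩, hyz⟩ : (x ≠ y ∧ x ≠ z) ∧ y ≠ z := by
    have hnodup := nodup_roots (hsep.map (f := algebraMap K L))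
    rw [← Cubic.map_roots, hroots] at hnodup
    simpa using hnodup
  have hperm {r : L} (hr : r ∈ ({x, y, z} : Multiset L)) : σ r = x ∨ σ r = y ∨ σ r = z := by
    rw [← hroots] at hr
    have hσr := algEquiv_apply_mem_cubic_roots σ hr
    rw [hroots] at hσr
    simpa using hσr
  have hσy : σ y = y ∨ σ y = z :=
    (hperm (by simp)).resolve_left fun h ↦ hxy (σ.injective (hσ.trans h.symm))
  have hσz : σ z = y ∨ σ z = z :=
    (hperm (by simp)).resolve_left fun h ↦ hxz (σ.injective (hσ.trans h.symm))
  -- A transposition of the roots would negate the square root of the discriminant.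
  have hswap : ¬ (σ y = z ∧ σ z = y) := fun ⟨hy, hz⟩ ↦ by
    have hprod := algEquiv_apply_prod_sub_cubic_roots_eq ha hδ hroots σ
    rw [map_mul, map_mul, map_sub, map_sub, map_sub, hσ, hy, hz] at hprod
    have : (2 : L) ≠ 0 := by
      rw [← map_ofNat (algebraMap K L), _root_.map_ne_zero]
      exact NeZero.ne 2
    have : 2 * ((x - y) * (x - z) * (y - z)) = 0 := by linear_combination -hprod
    simp_all [sub_eq_zero]
  have hinj : σ y ≠ σ z := σ.injective.ne hyz
  obtain ⟨hy, hz⟩ : σ y = y ∧ σ z = z := by grind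
  refine algEquiv_eq_one_of_forall_mem_cubic_roots (P := P) fun r hr ↦ ?_
  rw [hroots] at hr
  obtain rfl | rfl | rfl : r = x ∨ r = y ∨ r = z := by simpa using hr
  exacts [hσ, hy, hz]

variable (L) in
theorem exists_mem_cubic_roots (hirr : Irreducible P.toPoly) :
    ∃ x : L, x ∈ (P.map (algebraMap K L)).roots := by
  obtain ⟨x, hx⟩ := (IsSplittingField.splits L P.toPoly).exists_eval_eq_zero
    (by simpa using hirr.degree_pos.ne')
  rw [eval_map_algebraMap] at hx
  rw [Cubic.map_roots, ← aroots_def]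
  exact ⟨x, mem_aroots.mpr ⟨hirr.ne_zero, hx⟩⟩

theorem finrank_eq_three_of_irreducible_cubic [CharZero K] (hirr : Irreducible P.toPoly)
    (ha : P.a ≠ 0) (hδ : δ ^ 2 = P.discr) : Module.finrank K L = 3 := by
  have := IsSplittingField.finiteDimensional L P.toPoly
  have := IsGalois.of_separable_splitting_field hirr.separable (E := L)
  obtain ⟨x, hroot⟩ := exists_mem_cubic_roots L hirr
  have hx : aeval x P.toPoly = 0 := by
    rw [Cubic.map_roots, ← aroots_def] at hroot
    exact (mem_aroots.mp hroot).2
  have htop : IntermediateField.adjoin K {x} = ⊤ := by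
    rw [← IsGalois.fixedField_fixingSubgroup (IntermediateField.adjoin K {x}),
      ← IntermediateField.fixedField_bot]
    congr
    rw [Subgroup.eq_bot_iff_forall]
    exact fun σ hσ ↦ algEquiv_eq_one_of_apply_cubic_root_eq ha hirr.separable hδ hroot
      (hσ ⟨x, IntermediateField.mem_adjoin_simple_self K x⟩)
  rw [← IntermediateField.finrank_top', ← htop,
    IntermediateField.adjoin.finrank (.of_finite K x), ← Cubic.natDegree_of_a_ne_zero ha,
    minpoly.Irreducible.eq_minpoly hirr hx, natDegree_C_mul (leadingCoeff_ne_zero.mpr hirr.ne_zero)]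

theorem exists_mem_roots_cubic_map_eq [CharZero K] (hirr : Irreducible P.toPoly) (ha : P.a = 1)
    (hδ : δ ^ 2 = P.discr) {σ : Gal(L/K)} (hσ : σ ≠ 1) :
    ∃ x ∈ (P.map (algebraMap K L)).roots, P.map (algebraMap K L) =
      ⟨1, -(x + σ x + σ (σ x)), x * σ x + x * σ (σ x) + σ x * σ (σ x),
        -(x * σ x * σ (σ x))⟩ := by
  have ha0 : P.a ≠ 0 := by simp [ha]
  have hne {τ : Gal(L/K)} (hτ : τ ≠ 1) {x : L} (hx : x ∈ (P.map (algebraMap K L)).roots) :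
      x ≠ τ x := fun h ↦
    hτ (algEquiv_eq_one_of_apply_cubic_root_eq ha0 hirr.separable hδ hx h.symm)
  have := IsSplittingField.finiteDimensional L P.toPoly
  have := IsGalois.of_separable_splitting_field hirr.separable (E := L)
  have hσ2 : σ ^ 2 ≠ 1 := fun h ↦ hσ <| by
    have hσ3 : σ ^ 3 = 1 := by
      rw [← finrank_eq_three_of_irreducible_cubic (L := L) hirr ha0 hδ,
        ← IsGalois.card_aut_eq_finrank, pow_card_eq_one']
    rwa [pow_succ, h, one_mul] at hσ3
  obtain ⟨x, hx⟩ := exists_mem_cubic_roots L hirr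
  have hσx := algEquiv_apply_mem_cubic_roots σ hx
  have hroots := cubic_roots_eq_of_ne (by simp [Cubic.map, ha]) hx hσx
    (algEquiv_apply_mem_cubic_roots σ hσx) (hne hσ hx) (hne hσ2 hx) (hne hσ hσx)
  exact ⟨x, hx, by simpa [ha] using Cubic.eq_sum_three_roots ha0 hroots⟩

end CubicSplittingField

section UnramifiedCubic

theorem sq_sub_three_mul_mem_and_discr_mem {S : Type*} [CommRing S] {Q : Ideal S} {P : Cubic S}
    {x y z : S} (hP : P = ⟨1, -(x + y + z), x * y + x * z + y * z, -(x * y * z)⟩)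
    (hxy : y - x ∈ Q) (hyz : z - y ∈ Q) : P.b ^ 2 - 3 * P.c ∈ Q ∧ P.discr ∈ Q := by
  subst hP
  constructor
  · convert Q.add_mem (Q.mul_mem_left (z - x) hxy) (Q.mul_mem_left (z - y) hyz) using 1
    ring
  · convert Q.mul_mem_left ((y - x) * ((z - x) * (z - y)) ^ 2) hxy using 1
    rw [Cubic.discr]
    ring

variable {K L : Type*} [Field K] [NumberField K] [Field L] [NumberField L] [Algebra K L]
  {P : Cubic (𝓞 K)} [IsSplittingField K L (P.map (algebraMap (𝓞 K) K)).toPoly] {δ : K}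

theorem exists_cubic_map_eq_of_ne_one (ha : P.a = 1)
    (hirr : Irreducible (P.map (algebraMap (𝓞 K) K)).toPoly)
    (hδ : δ ^ 2 = (P.map (algebraMap (𝓞 K) K)).discr) {σ : Gal(L/K)} (hσ : σ ≠ 1) :
    ∃ x : 𝓞 L, P.map (algebraMap (𝓞 K) (𝓞 L)) =
      ⟨1, -(x + σ • x + σ • σ • x), x * σ • x + x * σ • σ • x + σ • x * σ • σ • x,
        -(x * σ • x * σ • σ • x)⟩ := by
  obtain ⟨x, hx, hPx⟩ := exists_mem_roots_cubic_map_eq hirr (by simp [Cubic.map, ha]) hδ hσ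
  have hint : IsIntegral (𝓞 K) x := ⟨P.toPoly, Cubic.monic_of_a_eq_one ha, by
    rw [Cubic.map_roots, ← aroots_def, Cubic.map_toPoly] at hx
    rw [← aeval_def, ← aeval_map_algebraMap K]
    exact (mem_aroots.mp hx).2⟩
  refine ⟨⟨x, isIntegral_trans x hint⟩, ?_⟩
  obtain ⟨-, hb, hc, hd⟩ := Cubic.ext_iff.mp hPx
  ext
  · simp [Cubic.map, ha]
  · exact hb
  · exact hc
  · exact hd

theorem isUnramifiedOutside_of_irreducible_cubic (ha : P.a = 1)
    (hirr : Irreducible (P.map (algebraMap (𝓞 K) K)).toPoly)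
    (hδ : δ ^ 2 = (P.map (algebraMap (𝓞 K) K)).discr) {𝔮 : Ideal (𝓞 K)} [h𝔮 : 𝔮.IsMaximal] {k : ℕ}
    (hP : 𝔮 ^ k ≤ Ideal.span {P.b ^ 2 - 3 * P.c, P.discr}) : IsUnramifiedOutside 𝔮 (𝓞 L) := by
  have := IsGalois.of_separable_splitting_field hirr.separable (E := L)
  intro p hp hp𝔮 Q hQ hQp
  rw [isUnramifiedAt_iff_inertia_eq_bot (𝓞 K) (G := Gal(L/K)), Subgroup.eq_bot_iff_forall]
  intro σ hσ
  by_contra hσ1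
  obtain ⟨x, hx⟩ := exists_cubic_map_eq_of_ne_one ha hirr hδ hσ1
  obtain ⟨hmem, hdiscr⟩ := sq_sub_three_mul_mem_and_discr_mem hx (hσ x) (hσ (σ • x))
  have hspan : Ideal.span {P.b ^ 2 - 3 * P.c, P.discr} ≤ p := by
    rw [Ideal.span_le, Set.pair_subset_iff, hQp.over]
    constructor
    · simpa [Cubic.map, map_ofNat (algebraMap (𝓞 K) (𝓞 L))] using hmem
    · simpa [cubic_discr_map] using hdiscr
  exact hp𝔮 (h𝔮.eq_of_le hp.ne_top (hp.le_of_pow_le (hP.trans hspan))).symm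

end UnramifiedCubic

section Ramification

variable {K : Type*} [Field K] [NumberField K] {N : Type*} [Field N] [NumberField N] [Algebra K N]

theorem isUnramifiedIn_iff_forall_ramificationIdx'_eq_one {P : Ideal (𝓞 K)} (hP : P ≠ ⊥) :
    Algebra.IsUnramifiedIn (𝓞 N) P ↔ ∀ Q : Ideal (𝓞 N), Q.IsPrime →
      Q.comap (algebraMap (𝓞 K) (𝓞 N)) = P → Ideal.ramificationIdx' P Q = 1 := by
  rw [Algebra.isUnramifiedIn_iff_forall_ramificationIdx_eq_one]
  refine forall₂_congr fun Q _ ↦ ⟨fun h hQ ↦ ?_, fun h hQ ↦ ?_⟩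
  · have : Q.LiesOver P := ⟨hQ.symm⟩
    rw [Ideal.ramificationIdx'_eq_ramificationIdx P Q hP, h this]
  · rw [← Ideal.ramificationIdx'_eq_ramificationIdx P Q hP, h hQ.over.symm]

theorem isUnramifiedOutside_span_singleton_iff {q : 𝓞 K} (hq : Prime q) :
    IsUnramifiedOutside (Ideal.span {q}) (𝓞 N) ↔
      ∀ P : Ideal (𝓞 K), P.IsPrime → P ≠ ⊥ → q ∉ P → ∀ Q : Ideal (𝓞 N), Q.IsPrime →
        Q.comap (algebraMap (𝓞 K) (𝓞 N)) = P → Ideal.ramificationIdx' P Q = 1 := by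
  refine forall₂_congr fun P hP ↦ ?_
  rcases eq_or_ne P ⊥ with rfl | hP0
  · simp [Algebra.isUnramifiedIn_bot]
  have hqP : P ≠ Ideal.span {q} ↔ q ∉ P := by
    rw [not_iff_not]
    refine ⟨fun h ↦ h ▸ Ideal.mem_span_singleton_self q, fun h ↦ ?_⟩
    exact ((isMaximal_span_singleton_of_prime hq).eq_of_le hP.ne_top
      ((Ideal.span_singleton_le_iff_mem P).mpr h)).symm
  rw [hqP, isUnramifiedIn_iff_forall_ramificationIdx'_eq_one hP0]
  exact ⟨fun h _ ↦ h, fun h ↦ h hP0⟩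

end Ramification

section IntegralCubic

theorem span_pow_le_span_sq_sub_three_mul_discr {R : Type*} [CommRing R] {P : Cubic ℤ}
    {n i j : ℤ} {k : ℕ} (h : i * (P.b ^ 2 - 3 * P.c) + j * P.discr = n ^ k) :
    Ideal.span {(n : R)} ^ k ≤ Ideal.span {(P.map (Int.castRingHom R)).b ^ 2 -
      3 * (P.map (Int.castRingHom R)).c, (P.map (Int.castRingHom R)).discr} := by
  rw [Ideal.span_singleton_pow, Ideal.span_singleton_le_iff_mem, Ideal.mem_span_pair]
  refine ⟨i, j, ?_⟩
  rw [cubic_discr_map, ← Int.cast_pow, ← h]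
  simp [Cubic.map]

variable {K L : Type*} [Field K] [NumberField K] [Field L] [NumberField L] [Algebra K L]

theorem isGalois_and_finrank_eq_three_and_isUnramifiedOutside {P : Cubic ℤ}
    [IsSplittingField K L (P.toPoly.map (Int.castRingHom K))] (ha : P.a = 1)
    (hirr : Irreducible (P.toPoly.map (Int.castRingHom K))) {δ : K} (hδ : δ ^ 2 = P.discr)
    {n i j : ℤ} {k : ℕ} (hn : Prime (n : 𝓞 K))
    (h : i * (P.b ^ 2 - 3 * P.c) + j * P.discr = n ^ k) :
    IsGalois K L ∧ Module.finrank K L = 3 ∧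
      IsUnramifiedOutside (Ideal.span {(n : 𝓞 K)}) (𝓞 L) := by
  let P' : Cubic (𝓞 K) := P.map (Int.castRingHom (𝓞 K))
  have hP' : (P'.map (algebraMap (𝓞 K) K)).toPoly = P.toPoly.map (Int.castRingHom K) := by
    rw [Cubic.map_toPoly, Cubic.map_toPoly, map_map]
    congr
  have hδ' : δ ^ 2 = (P'.map (algebraMap (𝓞 K) K)).discr := by
    rw [cubic_discr_map, cubic_discr_map, hδ, eq_intCast, map_intCast]
  have ha' : P'.a = 1 := by simp [P', Cubic.map, ha]
  have : IsSplittingField K L (P'.map (algebraMap (𝓞 K) K)).toPoly := by rwa [hP']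
  have := isMaximal_span_singleton_of_prime hn
  exact ⟨.of_separable_splitting_field hirr.separable,
    finrank_eq_three_of_irreducible_cubic (hP' ▸ hirr) (by simp [Cubic.map, ha']) hδ',
    isUnramifiedOutside_of_irreducible_cubic ha' (hP' ▸ hirr) hδ'
      (span_pow_le_span_sq_sub_three_mul_discr h)⟩

theorem exists_cubic_of_mem {R : Type*} [CommRing R] {p : R[X]}
    (hd : d ∈ ({11, 19, 43, 67, 163} : Finset ℕ))
    (hp : p = if d = 11 then X ^ 3 - X ^ 2 + X + 1
      else if d = 19 then X ^ 3 - 2 * X - 2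
      else if d = 43 then X ^ 3 - X ^ 2 - X + 3
      else if d = 67 then X ^ 3 - X ^ 2 - 3 * X + 5
      else X ^ 3 - 8 * X + 10) :
    ∃ P : Cubic ℤ, p = P.toPoly.map (Int.castRingHom R) ∧ P.a = 1 ∧ P.discr = -4 * d ∧
      (∃ ℓ : ℕ, ℓ.Prime ∧ ∀ r : ZMod ℓ, r ^ 3 + P.b * r ^ 2 + P.c * r + P.d ≠ 0) ∧
      ∃ (i j : ℤ) (k : ℕ), i * (P.b ^ 2 - 3 * P.c) + j * P.discr = 2 ^ k := by
  fin_cases hd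
  · refine ⟨⟨1, -1, 1, 1⟩, ?_, rfl, by norm_num [Cubic.discr], ⟨3, by norm_num, by decide⟩,
      -1, 0, 1, by norm_num [Cubic.discr]⟩
    simp [hp, Cubic.toPoly, sub_eq_add_neg]
  · refine ⟨⟨1, 0, -2, -2⟩, ?_, rfl, by norm_num [Cubic.discr], ⟨5, by norm_num, by decide⟩,
      13, 1, 1, by norm_num [Cubic.discr]⟩
    simp [hp, Cubic.toPoly, sub_eq_add_neg]
  · refine ⟨⟨1, -1, -1, 3⟩, ?_, rfl, by norm_num [Cubic.discr], ⟨11, by norm_num, by decide⟩,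
      1, 0, 2, by norm_num [Cubic.discr]⟩
    simp [hp, Cubic.toPoly, sub_eq_add_neg]
  · refine ⟨⟨1, -1, -3, 5⟩, ?_, rfl, by norm_num [Cubic.discr], ⟨17, by norm_num, by decide⟩,
      27, 1, 1, by norm_num [Cubic.discr]⟩
    simp [hp, Cubic.toPoly, sub_eq_add_neg]
  · refine ⟨⟨1, 0, -8, 10⟩, ?_, rfl, by norm_num [Cubic.discr], ⟨41, by norm_num, by decide⟩,
      -27, -1, 2, by norm_num [Cubic.discr]⟩
    simp [hp, Cubic.toPoly, sub_eq_add_neg]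

end IntegralCubic

/-- For `d ∈ {11, 19, 43, 67, 163}` and `K = ℚ(√-d)`, the splitting field over `K` of the
cubic `p_d` listed in the paper is a degree-`3` Galois extension of `K` unramified at every
prime of `O_K` not dividing `2`, and it is the unique such extension up to `K`-isomorphism. -/
theorem splitting_field_cubic_unique_unramified_outside_two
    (d : ℕ) (hd : d ∈ ({11, 19, 43, 67, 163} : Finset ℕ))
    (K : Type) [Field K] [NumberField K]
    (s : K) (hs : s ^ 2 = -(d : K)) (hK : Module.finrank ℚ K = 2)
    (p : K[X])
    (hp : p = if d = 11 then X ^ 3 - X ^ 2 + X + 1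
      else if d = 19 then X ^ 3 - 2 * X - 2
      else if d = 43 then X ^ 3 - X ^ 2 - X + 3
      else if d = 67 then X ^ 3 - X ^ 2 - 3 * X + 5
      else X ^ 3 - 8 * X + 10)
    (L : Type) [Field L] [Algebra K L] [NumberField L]
    (hL : IsSplittingField K L p) :
    (IsGalois K L ∧ Module.finrank K L = 3 ∧
      (∀ P : Ideal (𝓞 K), P.IsPrime → P ≠ ⊥ → (2 : 𝓞 K) ∉ P →
        ∀ Q : Ideal (𝓞 L), Q.IsPrime → Q.comap (algebraMap (𝓞 K) (𝓞 L)) = P →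
          Ideal.ramificationIdx' P Q = 1)) ∧
    (∀ (L' : Type) [Field L'] [Algebra K L'] [NumberField L'], IsGalois K L' →
      Module.finrank K L' = 3 →
      (∀ P : Ideal (𝓞 K), P.IsPrime → P ≠ ⊥ → (2 : 𝓞 K) ∉ P →
        ∀ Q : Ideal (𝓞 L'), Q.IsPrime → Q.comap (algebraMap (𝓞 K) (𝓞 L')) = P →
          Ideal.ramificationIdx' P Q = 1) →
      Nonempty (L' ≃ₐ[K] L)) := by
  obtain ⟨hPID, hunits, h2⟩ := isPrincipalIdealRing_and_units_and_prime_two_of_mem hd hK hs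
  obtain ⟨P, rfl, ha, hdiscr, ⟨ℓ, hℓ, hroot⟩, i, j, k, hbezout⟩ := exists_cubic_of_mem hd hp
  have hirr := irreducible_map_intCast_of_forall_zmod hK ha hℓ hroot
  have hδ : (2 * s) ^ 2 = P.discr := by
    push_cast [hdiscr]
    linear_combination 4 * hs
  obtain ⟨hgal, hrank, hunr⟩ := isGalois_and_finrank_eq_three_and_isUnramifiedOutside (L := L)
    ha hirr hδ (n := 2) (mod_cast h2) hbezout
  rw [Int.cast_ofNat] at hunr
  refine ⟨⟨hgal, hrank, (isUnramifiedOutside_span_singleton_iff h2).mp hunr⟩, ?_⟩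
  intro L' _ _ _ hgal' hrank' hunr'
  have hcube (ε : (𝓞 K)ˣ) : ∃ w, w ^ 3 = ε :=
    ⟨ε, by rcases hunits ε with rfl | rfl <;> norm_num⟩
  have := (isMaximal_span_singleton_of_prime h2).isPrime
  have h3 : ((3 : ℕ) : 𝓞 K) ∉ Ideal.span {2} := by
    rw [Ideal.mem_span_singleton]
    exact fun h ↦ h2.not_dvd_one (by convert dvd_sub h dvd_rfl; norm_num)
  exact nonempty_algEquiv_of_isUnramifiedOutside Nat.prime_three (by decide) hcube (by simp) h3
    hrank hunr hrank' ((isUnramifiedOutside_span_singleton_iff h2).mpr hunr')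
end
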